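/- Let d ≥ 3 and 0 < α < d/2. For every ρ with max(1/α, 1) < ρ < d/(2α), ℙ-almost surely, log P₀(A(t) ≥ t^ρ) / log t → −αρ + 1 as t → ∞; that is, P₀(A(t) ≥ t^ρ) = t^{−αρ+1+o(1)} as t → ∞. -/

import Mathlib

open MeasureTheory ProbabilityTheory Filter Set

noncomputable section

/-- `n`-step transition probabilities of the discrete-time simple random walk on `ℤ^m`. -/
def srwKernel (m : ℕ) : ℕ → (Fin m → ℤ) → (Fin m → ℤ) → ℝ
  | 0, x, y => if x = y then 1 else 0
  | n + 1, x, y =>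
      (∑ i : Fin m, (srwKernel m n (Function.update x i (x i + 1)) y
        + srwKernel m n (Function.update x i (x i - 1)) y)) / (2 * m)

/-- Transition kernel of the continuous-time simple random walk on `ℤ^m` which jumps to
each of its `2m` nearest neighbours at rate `1` (total jump rate `2m`). -/
def heatKernel (m : ℕ) (t : ℝ) (x y : Fin m → ℤ) : ℝ :=
  ∑' n : ℕ, Real.exp (-(2 * m) * t) * ((2 * m) * t) ^ n / n.factorial * srwKernel m n x y

/-- `(P, S)` is (a realization of) the continuous-time simple random walk on `ℤ^m`:
under `P x` the process `S` starts at `x`, has right-continuous (piecewise constant)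
paths, and its finite-dimensional distributions are given by the heat kernel. -/
structure IsCTSRW (m : ℕ) {Ω : Type*} [MeasurableSpace Ω]
    (P : (Fin m → ℤ) → Measure Ω) (S : ℝ → Ω → (Fin m → ℤ)) : Prop where
  prob : ∀ x, IsProbabilityMeasure (P x)
  meas : Measurable fun p : ℝ × Ω => S p.1 p.2
  start : ∀ x, ∀ᵐ ω ∂ P x, S 0 ω = x
  rightCont : ∀ x, ∀ᵐ ω ∂ P x, ∀ t : ℝ, 0 ≤ t →
    ∃ ε > (0 : ℝ), ∀ u, t ≤ u → u < t + ε → S u ω = S t ω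
  fdd : ∀ x (n : ℕ) (t : Fin (n + 1) → ℝ), 0 ≤ t 0 →
    (∀ i : Fin n, t i.castSucc ≤ t i.succ) →
    ∀ y : Fin (n + 1) → (Fin m → ℤ),
      (P x {ω | ∀ i, S (t i) ω = y i}).toReal
        = heatKernel m (t 0) x (y 0)
          * ∏ i : Fin n, heatKernel m (t i.succ - t i.castSucc) (y i.castSucc) (y i.succ)

/-- `z` is an i.i.d. nonnegative random scenery on `ℤ^d` whose common upper tail decays
like `r^{-α+o(1)}`. -/
structure IsScenery (d : ℕ) (α : ℝ) {Ω : Type*} [MeasurableSpace Ω]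
    (μ : Measure Ω) (z : (Fin d → ℤ) → Ω → ℝ) : Prop where
  prob : IsProbabilityMeasure μ
  meas : ∀ x, Measurable (z x)
  nonneg : ∀ x ω, 0 ≤ z x ω
  indep : iIndepFun z μ
  ident : ∀ x, IdentDistrib (z x) (z 0) μ μ
  tail : Tendsto (fun r : ℝ => Real.log (μ {ω | r < z 0 ω}).toReal / Real.log r)
    atTop (nhds (-α))

/-- The random walk in random scenery `A(t) = ∫₀ᵗ z(S_u) du`. -/
def rwrs {Ωz Ωw : Type*} (d : ℕ) (z : (Fin d → ℤ) → Ωz → ℝ)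
    (S : ℝ → Ωw → (Fin d → ℤ)) (t : ℝ) (ζ : Ωz) (ω : Ωw) : ℝ :=
  ∫ u in Set.Ioc (0 : ℝ) t, z (S u ω) ζ

end

open MeasureTheory ProbabilityTheory Filter Set

open scoped ENNReal Real

/-!
The cheapest way to achieve `A(t) ≥ t ^ ρ` is to spend one unit of time at a single site of height
about `t ^ ρ`. Up to time `t` the walk sees the ball of radius `√t`, which has `t ^ (d / 2)` sites,
of which `t ^ (d / 2 - α ρ)` reach that height; there are such sites because `ρ < d / (2 α)`. Since
`d ≥ 3`, the Green function decays like `|x| ^ (2 - d)`, so that each of these sites is hit with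
probability about `t ^ (1 - d / 2)`, and the walk hits one of them with probability
`t ^ (1 - α ρ + o(1))`.

The lower bound makes this precise by a second moment argument, in which the number of visited high
sites is controlled by the Green function of the set of high sites. For the upper bound, cut the
heights below `t ^ ρ` into finitely many levels `t ^ (j η)`. By transience and because `ρ > 1`, the
expected contribution of the low levels to `A(t)` is, from any starting point, smaller than `t ^ ρ`
by a power of `t`; by Khas'minskii's lemma the probability that they produce `t ^ ρ` is then smaller
than any power of `t`, and what remains is the probability of hitting a site higher than the top
level. The sites outside `[-t, t]^d` are negligible, since the scenery grows at most polynomially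
and the walk has exponential moments.

Almost surely, the counts of high sites in boxes on which both bounds rest hold by Chernoff bounds
and the Borel–Cantelli lemma.
-/

/-! ### The transition kernels and their Fourier representation -/

section Kernels

variable {m : ℕ}

theorem srwKernel_nonneg (n : ℕ) (x y : Fin m → ℤ) : 0 ≤ srwKernel m n x y := by
  induction n generalizing x with
  | zero => simp only [srwKernel]; split_ifs <;> norm_num
  | succ n ih =>
    exact div_nonneg (Finset.sum_nonneg fun i _ => add_nonneg (ih _) (ih _)) (by positivity)

theorem srwKernel_le_one (n : ℕ) (x y : Fin m → ℤ) : srwKernel m n x y ≤ 1 := by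
  induction n generalizing x with
  | zero => simp only [srwKernel]; split_ifs <;> norm_num
  | succ n ih =>
    refine div_le_one_of_le₀ ?_ (by positivity)
    calc ∑ i : Fin m, (srwKernel m n (Function.update x i (x i + 1)) y
          + srwKernel m n (Function.update x i (x i - 1)) y)
        ≤ ∑ _i : Fin m, (1 + 1 : ℝ) := Finset.sum_le_sum fun i _ => add_le_add (ih _) (ih _)
      _ = 2 * m := by simp only [Finset.sum_const, Finset.card_univ, Fintype.card_fin,
          nsmul_eq_mul]; ring

/-- The probability that the walk, which jumps at total rate `2m`, makes exactly `n` jumps by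
time `t`. -/
noncomputable def jumpProb (m : ℕ) (t : ℝ) (n : ℕ) : ℝ :=
  Real.exp (-(2 * m) * t) * ((2 * m) * t) ^ n / n.factorial

theorem jumpProb_nonneg {t : ℝ} (ht : 0 ≤ t) (n : ℕ) : 0 ≤ jumpProb m t n := by
  unfold jumpProb; positivity

theorem hasSum_jumpProb_mul_pow (m : ℕ) (t s : ℝ) :
    HasSum (fun n => jumpProb m t n * s ^ n) (Real.exp (2 * m * t * (s - 1))) := by
  have h := (NormedSpace.expSeries_div_hasSum_exp (2 * m * t * s)).mul_left
    (Real.exp (-(2 * m) * t))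
  rw [← Real.exp_eq_exp_ℝ, ← Real.exp_add] at h
  have hterm : (fun n : ℕ => jumpProb m t n * s ^ n)
      = fun n : ℕ => Real.exp (-(2 * m) * t) * ((2 * m * t * s) ^ n / n.factorial) := by
    funext n; simp only [jumpProb, mul_pow]; ring
  rwa [hterm, show 2 * m * t * (s - 1) = -(2 * m) * t + 2 * m * t * s by ring]

theorem summable_jumpProb (m : ℕ) (t : ℝ) : Summable (jumpProb m t) := by
  simpa only [one_pow, mul_one] using (hasSum_jumpProb_mul_pow m t 1).summable

theorem summable_jumpProb_mul_srwKernel {t : ℝ} (ht : 0 ≤ t) (x y : Fin m → ℤ) :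
    Summable fun n => jumpProb m t n * srwKernel m n x y :=
  (summable_jumpProb m t).of_nonneg_of_le
    (fun n => mul_nonneg (jumpProb_nonneg ht n) (srwKernel_nonneg n x y))
    (fun n => mul_le_of_le_one_right (jumpProb_nonneg ht n) (srwKernel_le_one n x y))

theorem heatKernel_eq_tsum (t : ℝ) (x y : Fin m → ℤ) :
    heatKernel m t x y = ∑' n, jumpProb m t n * srwKernel m n x y := rfl

theorem heatKernel_nonneg {t : ℝ} (ht : 0 ≤ t) (x y : Fin m → ℤ) : 0 ≤ heatKernel m t x y :=
  tsum_nonneg fun n => mul_nonneg (jumpProb_nonneg ht n) (srwKernel_nonneg n x y)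

theorem exp_neg_le_heatKernel_self {t : ℝ} (ht : 0 ≤ t) (x : Fin m → ℤ) :
    Real.exp (-(2 * m * t)) ≤ heatKernel m t x x := by
  have h := (summable_jumpProb_mul_srwKernel ht x x).le_tsum 0
    fun n _ => mul_nonneg (jumpProb_nonneg ht n) (srwKernel_nonneg n x x)
  simpa [srwKernel, jumpProb, heatKernel_eq_tsum] using h

/-- The pairing `θ · k` of an angle with a lattice point. -/
def phase (θ : Fin m → ℝ) (k : Fin m → ℤ) : ℝ := ∑ j, θ j * k j

/-- The characteristic function of one step of the discrete-time walk. -/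
noncomputable def stepChar (θ : Fin m → ℝ) : ℝ := (∑ i, Real.cos (θ i)) / m

/-- The Fourier multiplier of the heat kernel at time `t`. -/
noncomputable def heatSymbol (t : ℝ) (θ : Fin m → ℝ) : ℝ :=
  ∏ j, Real.exp (-(2 * t) * (1 - Real.cos (θ j)))

/-- Lebesgue measure on the torus `(-π, π]^m`, of total mass `(2π)^m`. -/
noncomputable def torusMeasure (m : ℕ) : Measure (Fin m → ℝ) :=
  Measure.pi fun _ => volume.restrict (Ioc (-π) π)

instance (m : ℕ) : IsFiniteMeasure (torusMeasure m) := by unfold torusMeasure; infer_instance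

theorem torusMeasure_real_univ (m : ℕ) : (torusMeasure m).real univ = (2 * π) ^ m := by
  have hπ : (0 : ℝ) ≤ π - -π := by linarith [Real.pi_pos]
  rw [torusMeasure, Measure.real, Measure.pi_univ, ENNReal.toReal_prod]
  simp only [Measure.restrict_apply_univ, Real.volume_Ioc, ENNReal.toReal_ofReal hπ,
    Finset.prod_const, Finset.card_univ, Fintype.card_fin]
  ring_nf

theorem ae_torusMeasure_abs_le_pi (m : ℕ) : ∀ᵐ θ ∂torusMeasure m, ∀ j, |θ j| ≤ π := by
  have h : ∀ᵐ θ ∂volume.restrict (Ioc (-π) π), |θ| ≤ π := by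
    filter_upwards [ae_restrict_mem measurableSet_Ioc] with θ hθ
    exact abs_le.mpr ⟨hθ.1.le, hθ.2⟩
  exact ae_all_iff.mpr fun j => (Measure.tendsto_eval_ae_ae
    (μ := fun _ : Fin m => volume.restrict (Ioc (-π) π)) (i := j)).eventually h

@[fun_prop]
theorem continuous_phase (k : Fin m → ℤ) : Continuous fun θ : Fin m → ℝ => phase θ k := by
  unfold phase; fun_prop

@[fun_prop]
theorem continuous_stepChar : Continuous (stepChar (m := m)) := by
  unfold stepChar; fun_prop

@[fun_prop]
theorem continuous_heatSymbol (t : ℝ) : Continuous (heatSymbol (m := m) t) := by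
  unfold heatSymbol; fun_prop

theorem phase_update_add_sub (θ : Fin m → ℝ) (x y : Fin m → ℤ) (i : Fin m) (s : ℤ) :
    phase θ (Function.update x i (x i + s) - y) = phase θ (x - y) + s * θ i := by
  have hterm (j : Fin m) : θ j * ((Function.update x i (x i + s) - y) j : ℤ)
      = θ j * ((x - y) j : ℤ) + if j = i then s * θ i else 0 := by
    obtain rfl | hj := eq_or_ne j i
    · simp only [Pi.sub_apply, Function.update_self, if_true]; push_cast; ring
    · simp only [Pi.sub_apply, Function.update_of_ne hj, if_neg hj, add_zero]
  simp only [phase, hterm, Finset.sum_add_distrib, Finset.sum_ite_eq', Finset.mem_univ, if_true]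

theorem abs_stepChar_le_one (θ : Fin m → ℝ) : |stepChar θ| ≤ 1 := by
  rw [stepChar, abs_div, Nat.abs_cast]
  refine div_le_one_of_le₀ ?_ (Nat.cast_nonneg m)
  calc |∑ i, Real.cos (θ i)| ≤ ∑ i, |Real.cos (θ i)| := Finset.abs_sum_le_sum_abs _ _
    _ ≤ ∑ _i : Fin m, 1 := Finset.sum_le_sum fun i _ => Real.abs_cos_le_one (θ i)
    _ = m := by simp

theorem stepChar_mul_cos_phase (θ : Fin m → ℝ) (x y : Fin m → ℤ) :
    stepChar θ * Real.cos (phase θ (x - y))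
      = (∑ i, (Real.cos (phase θ (Function.update x i (x i + 1) - y))
          + Real.cos (phase θ (Function.update x i (x i - 1) - y)))) / (2 * m) := by
  have hpair (i : Fin m) : Real.cos (phase θ (Function.update x i (x i + 1) - y))
      + Real.cos (phase θ (Function.update x i (x i - 1) - y))
      = 2 * Real.cos (phase θ (x - y)) * Real.cos (θ i) := by
    rw [sub_eq_add_neg (x i) 1, phase_update_add_sub, phase_update_add_sub]
    push_cast
    rw [one_mul, neg_one_mul, ← sub_eq_add_neg, Real.cos_add, Real.cos_sub]
    ring
  simp only [hpair, ← Finset.mul_sum]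
  rw [stepChar, mul_assoc, mul_div_mul_left _ _ two_ne_zero]
  ring

theorem abs_stepChar_pow_mul_cos_le_one (n : ℕ) (θ : Fin m → ℝ) (k : Fin m → ℤ) :
    |stepChar θ ^ n * Real.cos (phase θ k)| ≤ 1 := by
  rw [abs_mul, abs_pow]
  exact mul_le_one₀ (pow_le_one₀ (abs_nonneg _) (abs_stepChar_le_one θ)) (abs_nonneg _)
    (Real.abs_cos_le_one _)

theorem integrable_stepChar_pow_mul_cos (n : ℕ) (k : Fin m → ℤ) :
    Integrable (fun θ => stepChar θ ^ n * Real.cos (phase θ k)) (torusMeasure m) :=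
  .of_bound (C := 1) (by fun_prop : Continuous _).aestronglyMeasurable
    (ae_of_all _ fun θ => abs_stepChar_pow_mul_cos_le_one n θ k)

theorem integral_exp_I_mul_int (k : ℤ) :
    ∫ θ in Ioc (-π) π, Complex.exp (Complex.I * (θ * k))
      = if k = 0 then (2 * π : ℂ) else 0 := by
  rw [← intervalIntegral.integral_of_le (by linarith [Real.pi_pos])]
  split_ifs with hk
  · simp only [hk, Int.cast_zero, mul_zero, Complex.exp_zero, intervalIntegral.integral_const,
      sub_neg_eq_add, Complex.real_smul, Complex.ofReal_add]
    ring
  · have hperiod : Complex.exp (Complex.I * k * (π : ℝ))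
        = Complex.exp (Complex.I * k * ((-π : ℝ))) := by
      rw [Complex.exp_eq_exp_iff_exists_int]
      exact ⟨k, by push_cast; ring⟩
    have hassoc (θ : ℝ) : Complex.I * (θ * k) = Complex.I * k * θ := by ring
    simp only [hassoc]
    rw [integral_exp_mul_complex (by simp [hk]), hperiod, sub_self, zero_div]

theorem integral_cos_phase (k : Fin m → ℤ) :
    ∫ θ, Real.cos (phase θ k) ∂torusMeasure m = if k = 0 then (2 * π) ^ m else 0 := by
  have hprod (θ : Fin m → ℝ) : ∏ j, Complex.exp (Complex.I * (θ j * k j))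
      = Complex.exp (phase θ k * Complex.I) := by
    rw [← Complex.exp_sum, phase, Complex.ofReal_sum, Finset.sum_mul]
    congr 1
    exact Finset.sum_congr rfl fun j _ => by push_cast; ring
  have hintegral : ∫ θ, Complex.exp (phase θ k * Complex.I) ∂torusMeasure m
      = ∏ j, if k j = 0 then (2 * π : ℂ) else 0 := by
    simp only [← hprod, torusMeasure]
    rw [integral_fintype_prod_eq_prod fun j (x : ℝ) => Complex.exp (Complex.I * (x * k j))]
    simp only [integral_exp_I_mul_int]
  have hint : Integrable (fun θ => Complex.exp (phase θ k * Complex.I)) (torusMeasure m) :=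
    .of_bound (C := 1) (by fun_prop : Continuous _).aestronglyMeasurable
      (ae_of_all _ fun θ => (Complex.norm_exp_ofReal_mul_I _).le)
  have hre := congrArg Complex.re hintegral
  rw [← RCLike.re_eq_complex_re, ← integral_re hint] at hre
  simp only [RCLike.re_eq_complex_re, Complex.exp_ofReal_mul_I_re] at hre
  rw [hre]
  split_ifs with hk
  · simp only [hk, Pi.zero_apply, if_true, Finset.prod_const, Finset.card_univ, Fintype.card_fin]
    norm_cast
  · obtain ⟨j, hj⟩ := Function.ne_iff.mp hk
    rw [Finset.prod_eq_zero (Finset.mem_univ j) (if_neg (by simpa using hj)), Complex.zero_re]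

theorem srwKernel_mul_two_pi_pow (n : ℕ) (x y : Fin m → ℤ) :
    srwKernel m n x y * (2 * π) ^ m
      = ∫ θ, stepChar θ ^ n * Real.cos (phase θ (x - y)) ∂torusMeasure m := by
  induction n generalizing x with
  | zero =>
    simp only [srwKernel, pow_zero, one_mul, integral_cos_phase, sub_eq_zero, ite_mul, zero_mul]
  | succ n ih =>
    have hpt (θ : Fin m → ℝ) : stepChar θ ^ (n + 1) * Real.cos (phase θ (x - y))
        = (∑ i, (stepChar θ ^ n * Real.cos (phase θ (Function.update x i (x i + 1) - y))
          + stepChar θ ^ n * Real.cos (phase θ (Function.update x i (x i - 1) - y))))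
          / (2 * m) := by
      rw [pow_succ, mul_assoc, stepChar_mul_cos_phase, mul_div_assoc', Finset.mul_sum]
      simp only [mul_add]
    have hint := integrable_stepChar_pow_mul_cos (m := m) n
    simp only [hpt]
    rw [integral_div, integral_finsetSum _ (fun i _ => by exact (hint _).add (hint _))]
    simp only [integral_add (hint _) (hint _), ← ih, ← add_mul, ← Finset.sum_mul]
    rw [srwKernel, div_mul_eq_mul_div]

theorem heatSymbol_eq_exp (t : ℝ) (θ : Fin m → ℝ) :
    heatSymbol t θ = Real.exp (2 * m * t * (stepChar θ - 1)) := by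
  rw [heatSymbol, ← Real.exp_sum, stepChar]
  congr 1
  obtain rfl | hm := m.eq_zero_or_pos
  · simp
  rw [← Finset.mul_sum, Finset.sum_sub_distrib, Finset.sum_const, Finset.card_univ,
    Fintype.card_fin, nsmul_eq_mul, mul_one]
  field_simp
  ring

theorem heatKernel_mul_two_pi_pow {t : ℝ} (ht : 0 ≤ t) (x y : Fin m → ℤ) :
    heatKernel m t x y * (2 * π) ^ m
      = ∫ θ, heatSymbol t θ * Real.cos (phase θ (x - y)) ∂torusMeasure m := by
  let F (n : ℕ) (θ : Fin m → ℝ) : ℝ :=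
    jumpProb m t n * (stepChar θ ^ n * Real.cos (phase θ (x - y)))
  have hF (n : ℕ) : Integrable (F n) (torusMeasure m) :=
    (integrable_stepChar_pow_mul_cos n _).const_mul _
  have hnorm (n : ℕ) :
      ∫ θ, ‖F n θ‖ ∂torusMeasure m ≤ (torusMeasure m).real univ * jumpProb m t n := by
    refine (integral_mono (hF n).norm (integrable_const (jumpProb m t n)) fun θ => ?_).trans_eq
      (by rw [integral_const, smul_eq_mul])
    rw [norm_mul, Real.norm_of_nonneg (jumpProb_nonneg ht n)]
    exact mul_le_of_le_one_right (jumpProb_nonneg ht n)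
      (abs_stepChar_pow_mul_cos_le_one n θ (x - y))
  have hsum := hasSum_integral_of_summable_integral_norm hF
    (((summable_jumpProb m t).mul_left _).of_nonneg_of_le
      (fun n => integral_nonneg fun _ => norm_nonneg _) hnorm)
  have hpt (θ : Fin m → ℝ) :
      ∑' n, F n θ = heatSymbol t θ * Real.cos (phase θ (x - y)) := by
    simp only [F, ← mul_assoc, tsum_mul_right]
    rw [(hasSum_jumpProb_mul_pow m t (stepChar θ)).tsum_eq, heatSymbol_eq_exp]
  simp only [hpt] at hsum
  rw [heatKernel_eq_tsum, ← tsum_mul_right, ← hsum.tsum_eq]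
  refine tsum_congr fun n => ?_
  rw [mul_assoc, srwKernel_mul_two_pi_pow, integral_const_mul]

end Kernels

/-! ### Gaussian bounds on the heat kernel -/

section GaussianBounds

variable {m : ℕ}

theorem exp_neg_mul_one_sub_cos_le {t θ : ℝ} (ht : 0 ≤ t) (hθ : |θ| ≤ π) :
    Real.exp (-(2 * t) * (1 - Real.cos θ)) ≤ Real.exp (-(4 * t / π ^ 2) * θ ^ 2) := by
  refine Real.exp_le_exp.mpr ?_
  have hcos : 2 / π ^ 2 * θ ^ 2 ≤ 1 - Real.cos θ := by
    linarith [Real.cos_le_one_sub_mul_cos_sq hθ]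
  calc -(2 * t) * (1 - Real.cos θ) ≤ -(2 * t) * (2 / π ^ 2 * θ ^ 2) :=
        mul_le_mul_of_nonpos_left hcos (by linarith)
    _ = -(4 * t / π ^ 2) * θ ^ 2 := by ring

theorem exp_neg_mul_one_sub_cos_le_one {t : ℝ} (ht : 0 ≤ t) (θ : ℝ) :
    Real.exp (-(2 * t) * (1 - Real.cos θ)) ≤ 1 := by
  rw [Real.exp_le_one_iff]
  exact mul_nonpos_of_nonpos_of_nonneg (by linarith) (by linarith [Real.cos_le_one θ])

theorem integral_exp_neg_mul_one_sub_cos_le {t : ℝ} (ht : 0 < t) :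
    ∫ θ in Ioc (-π) π, Real.exp (-(2 * t) * (1 - Real.cos θ)) ≤ 4 * (√t)⁻¹ := by
  have hint := integrable_exp_neg_mul_sq (b := 4 * t / π ^ 2) (by positivity)
  calc ∫ θ in Ioc (-π) π, Real.exp (-(2 * t) * (1 - Real.cos θ))
      ≤ ∫ θ in Ioc (-π) π, Real.exp (-(4 * t / π ^ 2) * θ ^ 2) := by
        refine integral_mono_of_nonneg (ae_of_all _ fun _ => (Real.exp_pos _).le) hint.restrict ?_
        filter_upwards [ae_restrict_mem measurableSet_Ioc] with θ hθ
        exact exp_neg_mul_one_sub_cos_le ht.le (abs_le.mpr ⟨hθ.1.le, hθ.2⟩)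
    _ ≤ ∫ θ, Real.exp (-(4 * t / π ^ 2) * θ ^ 2) :=
        setIntegral_le_integral hint (ae_of_all _ fun _ => (Real.exp_pos _).le)
    _ = √(π / (4 * t / π ^ 2)) := integral_gaussian _
    _ ≤ 4 * (√t)⁻¹ := by
        rw [Real.sqrt_le_left (by positivity), mul_pow, inv_pow, Real.sq_sqrt ht.le]
        have hπ : π ^ 3 ≤ 4 ^ 3 := pow_le_pow_left₀ Real.pi_pos.le Real.pi_lt_four.le 3
        calc π / (4 * t / π ^ 2) = π ^ 3 / 4 * t⁻¹ := by field_simp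
          _ ≤ 4 ^ 2 * t⁻¹ := by gcongr; linarith

theorem le_integral_exp_neg_mul_one_sub_cos {t : ℝ} (ht : 1 ≤ t) :
    Real.exp (-1) * (√t)⁻¹ ≤ ∫ θ in Ioc (-π) π, Real.exp (-(2 * t) * (1 - Real.cos θ)) := by
  have hsqrt : 1 ≤ √t := Real.one_le_sqrt.mpr ht
  have hle_one : (√t)⁻¹ ≤ 1 := inv_le_one_of_one_le₀ hsqrt
  have hint : IntegrableOn (fun θ => Real.exp (-(2 * t) * (1 - Real.cos θ))) (Ioc (-π) π) := by
    refine Integrable.of_bound (C := 1) (by fun_prop : Continuous _).aestronglyMeasurable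
      (ae_of_all _ fun θ => ?_)
    rw [Real.norm_of_nonneg (Real.exp_pos _).le]
    exact exp_neg_mul_one_sub_cos_le_one (by linarith) θ
  have hsub : Ioc 0 (√t)⁻¹ ⊆ Ioc (-π) π :=
    Ioc_subset_Ioc (by linarith [Real.pi_pos]) (by linarith [Real.pi_gt_three])
  calc Real.exp (-1) * (√t)⁻¹ = ∫ _θ in Ioc 0 (√t)⁻¹, Real.exp (-1) := by
        simp [mul_comm]
    _ ≤ ∫ θ in Ioc 0 (√t)⁻¹, Real.exp (-(2 * t) * (1 - Real.cos θ)) := by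
        refine setIntegral_mono_on (by simp) (hint.mono_set hsub) measurableSet_Ioc
          fun θ hθ => Real.exp_le_exp.mpr ?_
        have hcos := Real.one_sub_sq_div_two_le_cos (x := θ)
        have hsq : t * θ ^ 2 ≤ 1 := by
          calc t * θ ^ 2 ≤ t * (√t)⁻¹ ^ 2 := by gcongr; exacts [hθ.1.le, hθ.2]
            _ = 1 := by rw [inv_pow, Real.sq_sqrt (by linarith), mul_inv_cancel₀ (by linarith)]
        nlinarith
    _ ≤ _ := setIntegral_mono_set hint (ae_of_all _ fun _ => (Real.exp_pos _).le)
        hsub.eventuallyLE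

theorem heatSymbol_nonneg (t : ℝ) (θ : Fin m → ℝ) : 0 ≤ heatSymbol t θ :=
  Finset.prod_nonneg fun _ _ => (Real.exp_pos _).le

theorem heatSymbol_le {t : ℝ} (ht : 0 ≤ t) (θ : Fin m → ℝ) (j : Fin m) :
    heatSymbol t θ ≤ Real.exp (-(2 * t) * (1 - Real.cos (θ j))) := by
  rw [heatSymbol, ← Finset.mul_prod_erase _ _ (Finset.mem_univ j)]
  exact mul_le_of_le_one_right (Real.exp_pos _).le
    (Finset.prod_le_one (fun _ _ => (Real.exp_pos _).le)
      fun i _ => exp_neg_mul_one_sub_cos_le_one ht (θ i))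

theorem integrable_heatSymbol {t : ℝ} (ht : 0 ≤ t) :
    Integrable (heatSymbol t) (torusMeasure m) := by
  refine .of_bound (C := 1) (by fun_prop : Continuous _).aestronglyMeasurable
    (ae_of_all _ fun θ => ?_)
  rw [Real.norm_of_nonneg (heatSymbol_nonneg t θ)]
  exact Finset.prod_le_one (fun _ _ => (Real.exp_pos _).le)
    fun i _ => exp_neg_mul_one_sub_cos_le_one ht (θ i)

theorem integrable_heatSymbol_mul_cos {t : ℝ} (ht : 0 ≤ t) (k : Fin m → ℤ) :
    Integrable (fun θ => heatSymbol t θ * Real.cos (phase θ k)) (torusMeasure m) :=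
  (integrable_heatSymbol ht).mul_bdd (c := 1) (by fun_prop : Continuous _).aestronglyMeasurable
    (ae_of_all _ fun _ => Real.abs_cos_le_one _)

theorem integral_heatSymbol (t : ℝ) :
    ∫ θ, heatSymbol t θ ∂torusMeasure m
      = (∫ θ in Ioc (-π) π, Real.exp (-(2 * t) * (1 - Real.cos θ))) ^ m := by
  simp only [heatSymbol, torusMeasure]
  rw [integral_fintype_prod_eq_prod fun _ (θ : ℝ) => Real.exp (-(2 * t) * (1 - Real.cos θ)),
    Finset.prod_const, Finset.card_univ, Fintype.card_fin]

theorem heatKernel_le {t : ℝ} (ht : 0 < t) (x y : Fin m → ℤ) :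
    heatKernel m t x y ≤ (√t)⁻¹ ^ m := by
  refine le_of_mul_le_mul_right ?_ (by positivity : 0 < (2 * π) ^ m)
  calc heatKernel m t x y * (2 * π) ^ m
      = ∫ θ, heatSymbol t θ * Real.cos (phase θ (x - y)) ∂torusMeasure m :=
        heatKernel_mul_two_pi_pow ht.le x y
    _ ≤ ∫ θ, heatSymbol t θ ∂torusMeasure m :=
        integral_mono (integrable_heatSymbol_mul_cos ht.le _) (integrable_heatSymbol ht.le)
          fun θ => mul_le_of_le_one_right (heatSymbol_nonneg t θ) (Real.cos_le_one _)
    _ = (∫ θ in Ioc (-π) π, Real.exp (-(2 * t) * (1 - Real.cos θ))) ^ m := integral_heatSymbol t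
    _ ≤ (4 * (√t)⁻¹) ^ m := pow_le_pow_left₀ (integral_nonneg fun _ => (Real.exp_pos _).le)
        (integral_exp_neg_mul_one_sub_cos_le ht) m
    _ = (√t)⁻¹ ^ m * 4 ^ m := by rw [mul_pow, mul_comm]
    _ ≤ (√t)⁻¹ ^ m * (2 * π) ^ m := by gcongr; linarith [Real.pi_gt_three]

-- Within `|θ j| ≤ h` the cosine is at least `1/2`; elsewhere the symbol is Gaussian small.
theorem heatSymbol_half_sub_le {t h : ℝ} (ht : 0 ≤ t) (hh : 0 ≤ h) {θ : Fin m → ℝ}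
    (hθ : ∀ j, |θ j| ≤ π) {k : Fin m → ℤ} (hk : ∑ j, h * |(k j : ℝ)| ≤ 1) :
    heatSymbol t θ / 2 - 2 * Real.exp (-(4 * t / π ^ 2) * h ^ 2)
      ≤ heatSymbol t θ * Real.cos (phase θ k) := by
  have hsymbol := heatSymbol_nonneg t θ
  have herror := Real.exp_pos (-(4 * t / π ^ 2) * h ^ 2)
  by_cases hsmall : ∀ j, |θ j| ≤ h
  · have hphase : |phase θ k| ≤ 1 := calc
      |phase θ k| ≤ ∑ j, |θ j * k j| := Finset.abs_sum_le_sum_abs _ _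
      _ ≤ ∑ j, h * |(k j : ℝ)| := Finset.sum_le_sum fun j _ => by
          rw [abs_mul]; exact mul_le_mul_of_nonneg_right (hsmall j) (abs_nonneg _)
      _ ≤ 1 := hk
    have hcos : 1 / 2 ≤ Real.cos (phase θ k) := by
      linarith [Real.one_sub_sq_div_two_le_cos (x := phase θ k),
        (sq_le_one_iff_abs_le_one _).mpr hphase]
    nlinarith
  · push Not at hsmall
    obtain ⟨j, hj⟩ := hsmall
    have hle : heatSymbol t θ ≤ Real.exp (-(4 * t / π ^ 2) * h ^ 2) := by
      refine (heatSymbol_le ht θ j).trans ((exp_neg_mul_one_sub_cos_le ht (hθ j)).trans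
        (Real.exp_le_exp.mpr (mul_le_mul_of_nonpos_left ?_ (by rw [neg_nonpos]; positivity))))
      rw [← sq_abs (θ j)]
      exact pow_le_pow_left₀ hh hj.le 2
    nlinarith [Real.neg_one_le_cos (phase θ k)]

theorem le_heatKernel {t h : ℝ} (ht : 1 ≤ t) (hh : 0 ≤ h) (x y : Fin m → ℤ)
    (hxy : ∑ j, h * |((x - y) j : ℝ)| ≤ 1) :
    Real.exp (-m) / 2 / (2 * π) ^ m * (√t)⁻¹ ^ m - 2 * Real.exp (-(4 * t / π ^ 2) * h ^ 2)
      ≤ heatKernel m t x y := by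
  have ht0 : 0 ≤ t := zero_le_one.trans ht
  have hint : Integrable (heatSymbol t) (torusMeasure m) := integrable_heatSymbol ht0
  refine le_of_mul_le_mul_right ?_ (by positivity : 0 < (2 * π) ^ m)
  calc (Real.exp (-m) / 2 / (2 * π) ^ m * (√t)⁻¹ ^ m
          - 2 * Real.exp (-(4 * t / π ^ 2) * h ^ 2)) * (2 * π) ^ m
      = (Real.exp (-1) * (√t)⁻¹) ^ m / 2
          - (2 * π) ^ m * (2 * Real.exp (-(4 * t / π ^ 2) * h ^ 2)) := by
        rw [mul_pow _ (√t)⁻¹, ← Real.exp_nat_mul, mul_neg_one]; field_simp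
    _ ≤ (∫ θ in Ioc (-π) π, Real.exp (-(2 * t) * (1 - Real.cos θ))) ^ m / 2
          - (2 * π) ^ m * (2 * Real.exp (-(4 * t / π ^ 2) * h ^ 2)) := by
        gcongr; exact le_integral_exp_neg_mul_one_sub_cos ht
    _ = ∫ θ, (heatSymbol t θ / 2 - 2 * Real.exp (-(4 * t / π ^ 2) * h ^ 2))
          ∂torusMeasure m := by
        rw [integral_sub (hint.div_const 2) (integrable_const _), integral_div,
          integral_heatSymbol, integral_const, torusMeasure_real_univ, smul_eq_mul]
    _ ≤ ∫ θ, heatSymbol t θ * Real.cos (phase θ (x - y)) ∂torusMeasure m := by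
        refine integral_mono_ae ((hint.div_const 2).sub (integrable_const _))
          (integrable_heatSymbol_mul_cos ht0 _) ?_
        filter_upwards [ae_torusMeasure_abs_le_pi m] with θ hθ
        exact heatSymbol_half_sub_le ht0 hh hθ hxy
    _ = heatKernel m t x y * (2 * π) ^ m := (heatKernel_mul_two_pi_pow ht0 x y).symm

end GaussianBounds

/-! ### Exponential moments of the heat kernel -/

section ExponentialMoments

variable {m : ℕ}

theorem exp_update_add_exp_update_le (θ : ℝ) (i j : Fin m) (x : Fin m → ℤ) :
    Real.exp (θ * ((Function.update x j (x j + 1) i : ℤ) - x i))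
        + Real.exp (θ * ((Function.update x j (x j - 1) i : ℤ) - x i)) ≤ 2 * Real.cosh θ := by
  obtain rfl | hij := eq_or_ne i j
  · simp only [Function.update_self, Int.cast_add, Int.cast_sub, Int.cast_one, add_sub_cancel_left,
      sub_sub_cancel_left, mul_one, mul_neg, Real.cosh_eq]
    linarith
  · simp only [Function.update_of_ne hij, sub_self, mul_zero, Real.exp_zero]
    linarith [Real.one_le_cosh θ]

theorem srwKernel_succ_mul_exp (n : ℕ) (θ : ℝ) (i : Fin m) (x y : Fin m → ℤ) :
    srwKernel m (n + 1) x y * Real.exp (θ * (y i - x i))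
      = ∑ j, (Real.exp (θ * ((Function.update x j (x j + 1) i : ℤ) - x i)) / (2 * m)
            * (srwKernel m n (Function.update x j (x j + 1)) y
              * Real.exp (θ * (y i - (Function.update x j (x j + 1) i : ℤ))))
          + Real.exp (θ * ((Function.update x j (x j - 1) i : ℤ) - x i)) / (2 * m)
            * (srwKernel m n (Function.update x j (x j - 1)) y
              * Real.exp (θ * (y i - (Function.update x j (x j - 1) i : ℤ))))) := by
  have hterm (x' : Fin m → ℤ) : Real.exp (θ * (x' i - x i)) / (2 * m)
        * (srwKernel m n x' y * Real.exp (θ * (y i - x' i)))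
      = srwKernel m n x' y / (2 * m) * Real.exp (θ * (y i - x i)) := by
    have hexp : Real.exp (θ * (x' i - x i)) * Real.exp (θ * (y i - x' i))
        = Real.exp (θ * (y i - x i)) := by rw [← Real.exp_add]; ring_nf
    rw [← hexp]; ring
  simp only [hterm, ← add_mul, ← add_div, ← Finset.sum_mul, ← Finset.sum_div, srwKernel]

theorem tsum_srwKernel_mul_exp_le (n : ℕ) (θ : ℝ) (i : Fin m) (x : Fin m → ℤ) :
    ∑' y : Fin m → ℤ, ENNReal.ofReal (srwKernel m n x y * Real.exp (θ * (y i - x i)))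
      ≤ ENNReal.ofReal (Real.cosh θ ^ n) := by
  induction n generalizing x with
  | zero =>
    rw [tsum_eq_single x fun y hy => by simp [srwKernel, hy.symm]]
    simp [srwKernel]
  | succ n ih =>
    have hm : (m : ℝ) ≠ 0 := Nat.cast_ne_zero.mpr i.pos.ne'
    have hpos (a : ℝ) (x' y : Fin m → ℤ) : 0 ≤ Real.exp a / (2 * m)
        * (srwKernel m n x' y * Real.exp (θ * (y i - x' i))) :=
      mul_nonneg (by positivity) (mul_nonneg (srwKernel_nonneg n x' y) (Real.exp_pos _).le)
    have htsum (a : ℝ) (x' : Fin m → ℤ) : ∑' y : Fin m → ℤ,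
        ENNReal.ofReal (Real.exp a / (2 * m)
          * (srwKernel m n x' y * Real.exp (θ * (y i - x' i))))
        ≤ ENNReal.ofReal (Real.exp a / (2 * m) * Real.cosh θ ^ n) := by
      simp only [ENNReal.ofReal_mul (show 0 ≤ Real.exp a / (2 * m) by positivity),
        ENNReal.tsum_mul_left]
      exact mul_le_mul_right (ih x') _
    simp only [srwKernel_succ_mul_exp]
    simp only [ENNReal.ofReal_sum_of_nonneg fun _ _ => add_nonneg (hpos _ _ _) (hpos _ _ _),
      ENNReal.ofReal_add (hpos _ _ _) (hpos _ _ _)]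
    rw [Summable.tsum_finsetSum fun _ _ => ENNReal.summable]
    calc _ ≤ ∑ _j : Fin m, ENNReal.ofReal (2 * Real.cosh θ / (2 * m) * Real.cosh θ ^ n) := by
          refine Finset.sum_le_sum fun j _ => ?_
          rw [ENNReal.tsum_add]
          refine (add_le_add (htsum _ _) (htsum _ _)).trans ?_
          rw [← ENNReal.ofReal_add (by positivity) (by positivity), ← add_mul, ← add_div]
          gcongr
          exact exp_update_add_exp_update_le θ i j x
      _ = ENNReal.ofReal (Real.cosh θ ^ (n + 1)) := by
          rw [← ENNReal.ofReal_sum_of_nonneg fun _ _ => by positivity, Finset.sum_const,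
            Finset.card_univ, Fintype.card_fin, nsmul_eq_mul]
          congr 1; field_simp; ring

theorem tsum_heatKernel_mul_exp_le {t : ℝ} (ht : 0 ≤ t) (θ : ℝ) (i : Fin m) (x : Fin m → ℤ) :
    ∑' y : Fin m → ℤ, ENNReal.ofReal (heatKernel m t x y * Real.exp (θ * (y i - x i)))
      ≤ ENNReal.ofReal (Real.exp (2 * m * t * (Real.cosh θ - 1))) := by
  have hexpand (y : Fin m → ℤ) :
      ENNReal.ofReal (heatKernel m t x y * Real.exp (θ * (y i - x i)))
        = ∑' n, ENNReal.ofReal (jumpProb m t n)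
          * ENNReal.ofReal (srwKernel m n x y * Real.exp (θ * (y i - x i))) := by
    rw [heatKernel_eq_tsum, ← tsum_mul_right, ENNReal.ofReal_tsum_of_nonneg
      (fun n => mul_nonneg (mul_nonneg (jumpProb_nonneg ht n) (srwKernel_nonneg n x y))
        (Real.exp_pos _).le) ((summable_jumpProb_mul_srwKernel ht x y).mul_right _)]
    exact tsum_congr fun n => by rw [← ENNReal.ofReal_mul (jumpProb_nonneg ht n), mul_assoc]
  have hsum := hasSum_jumpProb_mul_pow m t (Real.cosh θ)
  simp only [hexpand]
  rw [ENNReal.tsum_comm, ← hsum.tsum_eq, ENNReal.ofReal_tsum_of_nonneg (fun n =>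
    mul_nonneg (jumpProb_nonneg ht n) (pow_nonneg (Real.cosh_pos θ).le n)) hsum.summable]
  refine ENNReal.tsum_le_tsum fun n => ?_
  rw [ENNReal.tsum_mul_left, ENNReal.ofReal_mul (jumpProb_nonneg ht n)]
  exact mul_le_mul_right (tsum_srwKernel_mul_exp_le n θ i x) _

theorem cosh_sub_one_le_sq {θ : ℝ} (hθ : |θ| ≤ 1) : Real.cosh θ - 1 ≤ θ ^ 2 := by
  have hsq : θ ^ 2 ≤ 1 := (sq_le_one_iff_abs_le_one θ).mpr hθ
  have habs : |θ ^ 2 / 2| = θ ^ 2 / 2 := abs_of_nonneg (by positivity)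
  have hexp := Real.abs_exp_sub_one_le (x := θ ^ 2 / 2) (by rw [habs]; linarith)
  rw [habs] at hexp
  linarith [Real.cosh_le_exp_half_sq θ, le_abs_self (Real.exp (θ ^ 2 / 2) - 1)]

theorem tsum_heatKernel_mul_exp_le_exp_two_mul {t θ : ℝ} (ht : 0 ≤ t) (hθ : |θ| ≤ 1)
    (htθ : t * θ ^ 2 ≤ 1) (i : Fin m) (x : Fin m → ℤ) :
    ∑' y : Fin m → ℤ, ENNReal.ofReal (heatKernel m t x y * Real.exp (θ * (y i - x i)))
      ≤ ENNReal.ofReal (Real.exp (2 * m)) := by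
  refine (tsum_heatKernel_mul_exp_le ht θ i x).trans
    (ENNReal.ofReal_le_ofReal (Real.exp_le_exp.mpr ?_))
  calc 2 * m * t * (Real.cosh θ - 1) ≤ 2 * m * t * θ ^ 2 := by
        gcongr; exact cosh_sub_one_le_sq hθ
    _ = 2 * m * (t * θ ^ 2) := by ring
    _ ≤ 2 * m := mul_le_of_le_one_right (by positivity) htθ

theorem heatKernel_le_exp_neg {t q : ℝ} (ht : 0 ≤ t) (hq : 0 ≤ q) (hq1 : q ≤ 1)
    (htq : t * q ^ 2 ≤ 1) (i : Fin m) (x y : Fin m → ℤ) :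
    heatKernel m t x y ≤ Real.exp (2 * m) * Real.exp (-(q * |(y i : ℝ) - x i|)) := by
  obtain ⟨θ, hθ, hθy⟩ : ∃ θ : ℝ, |θ| = q ∧ θ * (y i - x i) = q * |(y i : ℝ) - x i| := by
    obtain h | h := le_total 0 ((y i : ℝ) - x i)
    · exact ⟨q, abs_of_nonneg hq, by rw [abs_of_nonneg h]⟩
    · exact ⟨-q, by rw [abs_neg, abs_of_nonneg hq], by rw [abs_of_nonpos h]; ring⟩
  have h := (ENNReal.le_tsum y).trans (tsum_heatKernel_mul_exp_le_exp_two_mul ht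
    (hθ.trans_le hq1) (by rwa [← sq_abs, hθ]) i x)
  rw [ENNReal.ofReal_le_ofReal_iff (Real.exp_pos _).le, hθy] at h
  rwa [Real.exp_neg, ← div_eq_mul_inv, le_div_iff₀ (Real.exp_pos _)]

end ExponentialMoments

/-! ### The Markov property and hitting estimates -/

section Semigroup

/-- The heat semigroup acting on `[0, ∞]`-valued functions. -/
noncomputable def heatSemigroup (m : ℕ) (u : ℝ) (f : (Fin m → ℤ) → ℝ≥0∞) (x : Fin m → ℤ) : ℝ≥0∞ :=
  ∑' y, ENNReal.ofReal (heatKernel m u x y) * f y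

theorem heatSemigroup_mono {m : ℕ} {u : ℝ} {f g : (Fin m → ℤ) → ℝ≥0∞} (hfg : ∀ y, f y ≤ g y)
    (x : Fin m → ℤ) : heatSemigroup m u f x ≤ heatSemigroup m u g x :=
  ENNReal.tsum_le_tsum fun y => mul_le_mul_right (hfg y) _

theorem lintegral_comp_eq_tsum {Ω β : Type*} [MeasurableSpace Ω] [Countable β] [MeasurableSpace β]
    [MeasurableSingletonClass β] (μ : Measure Ω) {X : Ω → β} (hX : Measurable X) (f : β → ℝ≥0∞) :
    ∫⁻ ω, f (X ω) ∂μ = ∑' b, f b * μ {ω | X ω = b} := by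
  rw [← lintegral_map (measurable_of_countable f) hX, lintegral_countable']
  exact tsum_congr fun b => by rw [Measure.map_apply hX (measurableSet_singleton b)]; rfl

end Semigroup

namespace IsCTSRW

variable {m : ℕ} {Ω : Type*} [MeasurableSpace Ω] {P : (Fin m → ℤ) → Measure Ω}
  {S : ℝ → Ω → (Fin m → ℤ)}

theorem measurable (hS : IsCTSRW m P S) (u : ℝ) : Measurable (S u) :=
  hS.meas.comp (measurable_const.prodMk measurable_id)

theorem measurableSet_mem (hS : IsCTSRW m P S) (u : ℝ) (H : Set (Fin m → ℤ)) :
    MeasurableSet {ω | S u ω ∈ H} :=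
  hS.measurable u (DiscreteMeasurableSpace.forall_measurableSet H)

theorem measurable_path (hS : IsCTSRW m P S) {n : ℕ} (t : Fin n → ℝ) :
    Measurable fun ω i => S (t i) ω :=
  measurable_pi_lambda _ fun i => hS.measurable (t i)

theorem measure_eq (hS : IsCTSRW m P S) (x y : Fin m → ℤ) {u : ℝ} (hu : 0 ≤ u) :
    P x {ω | S u ω = y} = ENNReal.ofReal (heatKernel m u x y) := by
  have := hS.prob x
  have h := hS.fdd x 0 (fun _ => u) hu (fun i => i.elim0) fun _ => y
  simp only [Finset.univ_eq_empty, Finset.prod_empty, mul_one, forall_const] at h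
  rw [← h, ENNReal.ofReal_toReal (measure_ne_top _ _)]

theorem lintegral_eq_heatSemigroup (hS : IsCTSRW m P S) (x : Fin m → ℤ) {u : ℝ} (hu : 0 ≤ u)
    (f : (Fin m → ℤ) → ℝ≥0∞) : ∫⁻ ω, f (S u ω) ∂P x = heatSemigroup m u f x := by
  simp only [lintegral_comp_eq_tsum (P x) (hS.measurable u), hS.measure_eq x _ hu, heatSemigroup,
    mul_comm]

theorem measure_path_eq_and_eq (hS : IsCTSRW m P S) (x : Fin m → ℤ) {n : ℕ} {t : Fin (n + 1) → ℝ}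
    (h0 : 0 ≤ t 0) (ht : ∀ i : Fin n, t i.castSucc ≤ t i.succ) {T : ℝ} (hT : t (Fin.last n) ≤ T)
    (v : Fin (n + 1) → (Fin m → ℤ)) (y : Fin m → ℤ) :
    P x {ω | (fun i => S (t i) ω) = v ∧ S T ω = y}
      = P x {ω | (fun i => S (t i) ω) = v}
        * ENNReal.ofReal (heatKernel m (T - t (Fin.last n)) (v (Fin.last n)) y) := by
  have := hS.prob x
  have hpath : {ω | (fun i => S (t i) ω) = v} = {ω | ∀ i, S (t i) ω = v i} := by
    simp only [funext_iff]
  have hsnoc : {ω | (fun i => S (t i) ω) = v ∧ S T ω = y} = {ω | ∀ i : Fin (n + 1 + 1),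
      S (Fin.snoc (α := fun _ => ℝ) t T i) ω
        = Fin.snoc (α := fun _ => Fin m → ℤ) v y i} := by
    simp only [Fin.forall_fin_succ' (n := n + 1), Fin.snoc_castSucc, Fin.snoc_last, funext_iff]
  have hfdd := hS.fdd x (n + 1) (Fin.snoc (α := fun _ => ℝ) t T)
    (by rwa [← Fin.castSucc_zero, Fin.snoc_castSucc])
    (Fin.forall_fin_succ'.mpr ⟨fun i => by
        simpa only [Fin.succ_castSucc, Fin.snoc_castSucc] using ht i, by
        simpa only [Fin.succ_last, Fin.snoc_last, Fin.snoc_castSucc] using hT⟩)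
    (Fin.snoc (α := fun _ => Fin m → ℤ) v y)
  rw [← hsnoc, Fin.prod_univ_castSucc, ← Fin.castSucc_zero] at hfdd
  simp only [Fin.succ_castSucc, Fin.succ_last, Fin.snoc_castSucc, Fin.snoc_last] at hfdd
  rw [← mul_assoc, ← hS.fdd x n t h0 ht v, ← hpath] at hfdd
  rw [← ENNReal.ofReal_toReal (measure_ne_top (P x) {ω | (fun i => S (t i) ω) = v}),
    ← ENNReal.ofReal_mul ENNReal.toReal_nonneg, ← hfdd, ENNReal.ofReal_toReal (measure_ne_top _ _)]

theorem lintegral_path_mul (hS : IsCTSRW m P S) (x : Fin m → ℤ) {n : ℕ} {t : Fin (n + 1) → ℝ}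
    (h0 : 0 ≤ t 0) (ht : ∀ i : Fin n, t i.castSucc ≤ t i.succ) {T : ℝ} (hT : t (Fin.last n) ≤ T)
    (F : (Fin (n + 1) → (Fin m → ℤ)) → ℝ≥0∞) (f : (Fin m → ℤ) → ℝ≥0∞) :
    ∫⁻ ω, F (fun i => S (t i) ω) * f (S T ω) ∂P x
      = ∫⁻ ω, F (fun i => S (t i) ω)
          * heatSemigroup m (T - t (Fin.last n)) f (S (t (Fin.last n)) ω) ∂P x := by
  have hpath := hS.measurable_path t
  rw [lintegral_comp_eq_tsum (P x) (hpath.prodMk (hS.measurable T)) fun a => F a.1 * f a.2,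
    lintegral_comp_eq_tsum (P x) hpath fun v =>
      F v * heatSemigroup m (T - t (Fin.last n)) f (v (Fin.last n)), ENNReal.tsum_prod']
  refine tsum_congr fun v => ?_
  simp only [Prod.mk.injEq, hS.measure_path_eq_and_eq x h0 ht hT]
  rw [heatSemigroup, ← ENNReal.tsum_mul_left, ← ENNReal.tsum_mul_right]
  exact tsum_congr fun y => by ring

theorem lintegral_mul (hS : IsCTSRW m P S) (x : Fin m → ℤ) {u T : ℝ} (hu : 0 ≤ u) (hT : u ≤ T)
    (g f : (Fin m → ℤ) → ℝ≥0∞) :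
    ∫⁻ ω, g (S u ω) * f (S T ω) ∂P x
      = ∫⁻ ω, g (S u ω) * heatSemigroup m (T - u) f (S u ω) ∂P x :=
  hS.lintegral_path_mul x (n := 0) (t := fun _ => u) hu (fun i => i.elim0) hT (fun v => g (v 0)) f

theorem heatSemigroup_zero (hS : IsCTSRW m P S) (f : (Fin m → ℤ) → ℝ≥0∞) :
    heatSemigroup m 0 f = f := by
  funext x
  have := hS.prob x
  rw [← hS.lintegral_eq_heatSemigroup x le_rfl, lintegral_congr_ae (g := fun _ => f x)]
  · simp
  · filter_upwards [hS.start x] with ω hω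
    rw [hω]

theorem heatSemigroup_add (hS : IsCTSRW m P S) {u v : ℝ} (hu : 0 ≤ u) (hv : 0 ≤ v)
    (f : (Fin m → ℤ) → ℝ≥0∞) :
    heatSemigroup m u (heatSemigroup m v f) = heatSemigroup m (u + v) f := by
  funext x
  have h := hS.lintegral_mul x hu (le_add_of_nonneg_right hv : u ≤ u + v) (fun _ => 1) f
  simp only [one_mul, add_sub_cancel_left] at h
  rw [← hS.lintegral_eq_heatSemigroup x hu, ← h, hS.lintegral_eq_heatSemigroup x (add_nonneg hu hv)]

theorem heatSemigroup_le (hS : IsCTSRW m P S) (x : Fin m → ℤ) {u : ℝ} (hu : 0 ≤ u)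
    {f : (Fin m → ℤ) → ℝ≥0∞} {M : ℝ≥0∞} (hf : ∀ y, f y ≤ M) : heatSemigroup m u f x ≤ M := by
  have := hS.prob x
  rw [← hS.lintegral_eq_heatSemigroup x hu]
  exact (lintegral_mono fun ω => hf _).trans (by simp)

theorem heatSemigroup_one_add_mul_sum (hS : IsCTSRW m P S) (x : Fin m → ℤ) {u : ℝ} (hu : 0 ≤ u)
    (c : ℝ≥0∞) (s : Finset ℕ) (f : ℕ → (Fin m → ℤ) → ℝ≥0∞) :
    heatSemigroup m u (fun y => 1 + c * ∑ j ∈ s, f j y) x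
      = 1 + c * ∑ j ∈ s, heatSemigroup m u (f j) x := by
  have := hS.prob x
  have hmeas (g : (Fin m → ℤ) → ℝ≥0∞) : Measurable fun ω => g (S u ω) :=
    (measurable_of_countable g).comp (hS.measurable u)
  simp only [← hS.lintegral_eq_heatSemigroup x hu]
  rw [lintegral_add_left measurable_const, lintegral_const_mul _ (hmeas fun y => ∑ j ∈ s, f j y),
    lintegral_finsetSum _ fun j _ => hmeas (f j), lintegral_const, measure_univ, mul_one]

-- The factor `e^{-2m}` is the probability of making no jump during a unit of time.
theorem exp_neg_mul_measure_path_mem_le (hS : IsCTSRW m P S) (x : Fin m → ℤ) {n : ℕ}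
    {t : Fin (n + 1) → ℝ} (h0 : 0 ≤ t 0) (ht : ∀ i : Fin n, t i.castSucc ≤ t i.succ) {T : ℝ}
    (hT : t (Fin.last n) ≤ T) (hT1 : T ≤ t (Fin.last n) + 1) {B : Set (Fin (n + 1) → (Fin m → ℤ))}
    {H : Set (Fin m → ℤ)} (hB : ∀ v ∈ B, v (Fin.last n) ∈ H) :
    ENNReal.ofReal (Real.exp (-(2 * m))) * P x {ω | (fun i => S (t i) ω) ∈ B}
      ≤ P x {ω | (fun i => S (t i) ω) ∈ B ∧ S T ω ∈ H} := by
  classical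
  have hBm : MeasurableSet {ω | (fun i => S (t i) ω) ∈ B} :=
    hS.measurable_path t (DiscreteMeasurableSpace.forall_measurableSet B)
  have hstay (y : Fin m → ℤ) (hy : y ∈ H) : ENNReal.ofReal (Real.exp (-(2 * m)))
      ≤ heatSemigroup m (T - t (Fin.last n)) (H.indicator 1) y := by
    refine le_trans ?_ (ENNReal.le_tsum y)
    rw [indicator_of_mem hy, Pi.one_apply, mul_one]
    refine ENNReal.ofReal_le_ofReal (le_trans (Real.exp_le_exp.mpr (neg_le_neg ?_))
      (exp_neg_le_heatKernel_self (sub_nonneg.mpr hT) y))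
    exact mul_le_of_le_one_right (by positivity) (by linarith)
  calc ENNReal.ofReal (Real.exp (-(2 * m))) * P x {ω | (fun i => S (t i) ω) ∈ B}
      = ∫⁻ ω, ENNReal.ofReal (Real.exp (-(2 * m)))
          * B.indicator 1 (fun i => S (t i) ω) ∂P x := by
        rw [← lintegral_indicator_one hBm, ← lintegral_const_mul _ (measurable_one.indicator hBm)]
        rfl
    _ ≤ ∫⁻ ω, B.indicator 1 (fun i => S (t i) ω) * heatSemigroup m (T - t (Fin.last n))
          (H.indicator 1) (S (t (Fin.last n)) ω) ∂P x := by
        refine lintegral_mono fun ω => ?_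
        by_cases hω : (fun i => S (t i) ω) ∈ B
        · simpa only [indicator_of_mem hω, Pi.one_apply, mul_one, one_mul]
            using hstay _ (hB _ hω)
        · simp [indicator_of_notMem hω]
    _ = ∫⁻ ω, B.indicator 1 (fun i => S (t i) ω) * H.indicator 1 (S T ω) ∂P x :=
        (hS.lintegral_path_mul x h0 ht hT _ _).symm
    _ = P x {ω | (fun i => S (t i) ω) ∈ B ∧ S T ω ∈ H} := by
        refine Eq.trans (lintegral_congr fun ω => ?_)
          (lintegral_indicator_one (hBm.inter (hS.measurableSet_mem T H)))
        refine Eq.trans (inter_indicator_mul (s := {ω | (fun i => S (t i) ω) ∈ B})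
          (t := {ω | S T ω ∈ H}) 1 1 ω).symm ?_
        simp only [Pi.one_apply, mul_one]
        rfl

theorem measure_exists_le_mem_le (hS : IsCTSRW m P S) (x : Fin m → ℤ) (N : ℕ) {t : ℕ → ℝ}
    (h0 : 0 ≤ t 0) (ht : Monotone t) {T : ℝ} (hT : t N ≤ T) (hT1 : T ≤ t 0 + 1)
    (H : Set (Fin m → ℤ)) :
    P x {ω | ∃ j ≤ N, S (t j) ω ∈ H}
      ≤ ENNReal.ofReal (Real.exp (2 * m)) * P x {ω | S T ω ∈ H} := by
  classical
  let firstHit (i : ℕ) : Set Ω := {ω | (fun j : Fin (i + 1) => S (t j) ω) ∈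
    {v : Fin (i + 1) → (Fin m → ℤ) | v (Fin.last i) ∈ H ∧ ∀ j : Fin i, v j.castSucc ∉ H}}
  have hmeas (i : ℕ) : MeasurableSet (firstHit i) :=
    hS.measurable_path _ (DiscreteMeasurableSpace.forall_measurableSet _)
  have hdisj : Pairwise (Function.onFun Disjoint firstHit) :=
    (pairwise_disjoint_on firstHit).mpr fun i j hij =>
      Set.disjoint_left.mpr fun _ hi hj => hj.2 ⟨i, hij⟩ hi.1
  have hfirst (i : ℕ) (hi : i ≤ N) : P x (firstHit i)
      ≤ ENNReal.ofReal (Real.exp (2 * m)) * P x (firstHit i ∩ {ω | S T ω ∈ H}) := by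
    have h := hS.exp_neg_mul_measure_path_mem_le x (t := fun j : Fin (i + 1) => t j) h0
      (fun j => ht (Nat.le_succ j)) ((ht hi).trans hT) (hT1.trans (by gcongr; exact ht i.zero_le))
      (H := H) fun v (hv : v (Fin.last i) ∈ H ∧ ∀ j : Fin i, v j.castSucc ∉ H) => hv.1
    calc P x (firstHit i) = ENNReal.ofReal (Real.exp (2 * m))
          * (ENNReal.ofReal (Real.exp (-(2 * m))) * P x (firstHit i)) := by
          rw [← mul_assoc, ← ENNReal.ofReal_mul (Real.exp_pos _).le, ← Real.exp_add,
            add_neg_cancel, Real.exp_zero, ENNReal.ofReal_one, one_mul]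
      _ ≤ _ := mul_le_mul_right h _
  have hcover : {ω | ∃ j ≤ N, S (t j) ω ∈ H} ⊆ ⋃ i ∈ Finset.range (N + 1), firstHit i := by
    rintro ω ⟨j, hj, hω⟩
    have hex : ∃ j, S (t j) ω ∈ H := ⟨j, hω⟩
    exact mem_biUnion (Finset.mem_coe.mpr (Finset.mem_range_succ_iff.mpr
      ((Nat.find_min' hex hω).trans hj))) ⟨Nat.find_spec hex, fun k => Nat.find_min hex k.2⟩
  calc P x {ω | ∃ j ≤ N, S (t j) ω ∈ H}
      ≤ ∑ i ∈ Finset.range (N + 1), P x (firstHit i) :=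
        (measure_mono hcover).trans (measure_biUnion_finset_le _ _)
    _ ≤ ∑ i ∈ Finset.range (N + 1), ENNReal.ofReal (Real.exp (2 * m))
          * P x (firstHit i ∩ {ω | S T ω ∈ H}) :=
        Finset.sum_le_sum fun i hi => hfirst i (Finset.mem_range_succ_iff.mp hi)
    _ = ENNReal.ofReal (Real.exp (2 * m))
          * P x (⋃ i ∈ Finset.range (N + 1), firstHit i ∩ {ω | S T ω ∈ H}) := by
        rw [← Finset.mul_sum, measure_biUnion_finset
          (fun i _ j _ hij => (hdisj hij).mono inter_subset_left inter_subset_left)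
          fun i _ => (hmeas i).inter (hS.measurableSet_mem T H)]
    _ ≤ ENNReal.ofReal (Real.exp (2 * m)) * P x {ω | S T ω ∈ H} := by
        gcongr
        exact iUnion₂_subset fun i _ => inter_subset_right

theorem exists_dyadic_mem_Ico {u ε : ℝ} (hu : 0 ≤ u) (hε : 0 < ε) :
    ∃ M j : ℕ, j ≤ 2 ^ M ∧ u ≤ ⌊u⌋₊ + (j : ℝ) / 2 ^ M ∧ ⌊u⌋₊ + (j : ℝ) / 2 ^ M < u + ε := by
  have hfloor := Nat.floor_le hu
  obtain ⟨M, hM⟩ := exists_pow_lt_of_lt_one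
    (lt_min hε (sub_pos.mpr (Nat.lt_floor_add_one u))) (show (2⁻¹ : ℝ) < 1 by norm_num)
  rw [inv_pow, lt_min_iff] at hM
  have hpow : (0 : ℝ) < 2 ^ M := by positivity
  have hle : u - ⌊u⌋₊ ≤ (⌈(u - ⌊u⌋₊) * 2 ^ M⌉₊ : ℝ) / 2 ^ M := by
    rw [le_div_iff₀ hpow]; exact Nat.le_ceil _
  have hlt : (⌈(u - ⌊u⌋₊) * 2 ^ M⌉₊ : ℝ) / 2 ^ M < u - ⌊u⌋₊ + (2 ^ M)⁻¹ := by
    rw [div_lt_iff₀ hpow, add_mul, inv_mul_cancel₀ hpow.ne']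
    exact Nat.ceil_lt_add_one (mul_nonneg (sub_nonneg.mpr hfloor) hpow.le)
  refine ⟨M, ⌈(u - ⌊u⌋₊) * 2 ^ M⌉₊, ?_, by linarith, by linarith⟩
  have hone : (⌈(u - ⌊u⌋₊) * 2 ^ M⌉₊ : ℝ) / 2 ^ M ≤ 1 := by linarith
  exact_mod_cast (div_le_one hpow).mp hone

theorem measure_exists_lt_mem_le (hS : IsCTSRW m P S) (x : Fin m → ℤ) (n : ℕ)
    (H : Set (Fin m → ℤ)) :
    P x {ω | ∃ u : ℝ, 0 ≤ u ∧ u < n ∧ S u ω ∈ H}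
      ≤ ENNReal.ofReal (Real.exp (2 * m))
        * ∑ k ∈ Finset.range n, P x {ω | S (k + 1) ω ∈ H} := by
  let gridHit (M k : ℕ) : Set Ω :=
    {ω | ∃ j : ℕ, j ≤ 2 ^ M ∧ S (k + (j : ℝ) / 2 ^ M) ω ∈ H}
  have hmono : Monotone fun M => ⋃ k ∈ Finset.range n, gridHit M k := by
    refine monotone_nat_of_le_succ fun M => iUnion₂_mono fun k _ => ?_
    rintro ω ⟨j, hj, hω⟩
    refine ⟨2 * j, by rw [pow_succ]; lia, ?_⟩
    rwa [show ((2 * j : ℕ) : ℝ) / 2 ^ (M + 1) = j / 2 ^ M by push_cast; field_simp; ring]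
  have hgrid (M : ℕ) : P x (⋃ k ∈ Finset.range n, gridHit M k)
      ≤ ENNReal.ofReal (Real.exp (2 * m))
        * ∑ k ∈ Finset.range n, P x {ω | S (k + 1) ω ∈ H} := by
    rw [Finset.mul_sum]
    refine (measure_biUnion_finset_le _ _).trans (Finset.sum_le_sum fun k _ => ?_)
    refine hS.measure_exists_le_mem_le x (2 ^ M) (t := fun j => k + (j : ℝ) / 2 ^ M) (by simp)
      (fun a b hab => ?_) (T := k + 1) (by simp) (by simp) H
    have hab' : (a : ℝ) ≤ b := Nat.cast_le.mpr hab
    simp only; gcongr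
  have hcover : ∀ᵐ ω ∂P x, (∃ u : ℝ, 0 ≤ u ∧ u < n ∧ S u ω ∈ H) →
      ω ∈ ⋃ M, ⋃ k ∈ Finset.range n, gridHit M k := by
    filter_upwards [hS.rightCont x] with ω hω
    rintro ⟨u, hu0, hun, hu⟩
    obtain ⟨ε, hε, hconst⟩ := hω u hu0
    obtain ⟨M, j, hj, hle, hlt⟩ := exists_dyadic_mem_Ico hu0 hε
    have hfloor : ⌊u⌋₊ < n := by exact_mod_cast (Nat.floor_le hu0).trans_lt hun
    simp only [mem_iUnion]
    exact ⟨M, ⌊u⌋₊, Finset.mem_range.mpr hfloor, j, hj, by rwa [hconst _ hle hlt]⟩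
  calc P x {ω | ∃ u : ℝ, 0 ≤ u ∧ u < n ∧ S u ω ∈ H}
      ≤ P x (⋃ M, ⋃ k ∈ Finset.range n, gridHit M k) := measure_mono_ae hcover
    _ = ⨆ M, P x (⋃ k ∈ Finset.range n, gridHit M k) := hmono.measure_iUnion
    _ ≤ _ := iSup_le hgrid

end IsCTSRW

/-! ### Khas'minskii's recursion -/

/-- The bound `1 + 2c ∑_{j < i} P_j V` which, when `2c ∑_{j < n} P_{j+1} V ≤ 1` on the support of
`V`, dominates the expectation of `∏_{j < i} (1 + c V (S_j))` for `i ≤ n`. -/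
noncomputable def khasminskiiBound (m : ℕ) (c : ℝ≥0∞) (V : (Fin m → ℤ) → ℝ≥0∞) (i : ℕ)
    (y : Fin m → ℤ) : ℝ≥0∞ :=
  1 + 2 * c * ∑ j ∈ Finset.range i, heatSemigroup m j V y

namespace IsCTSRW

variable {m : ℕ} {Ω : Type*} [MeasurableSpace Ω] {P : (Fin m → ℤ) → Measure Ω}
  {S : ℝ → Ω → (Fin m → ℤ)} {V : (Fin m → ℤ) → ℝ≥0∞} {c : ℝ≥0∞} {n : ℕ}

theorem one_add_mul_heatSemigroup_khasminskiiBound_le (hS : IsCTSRW m P S)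
    (hV : ∀ y, V y ≠ 0 → 2 * c * ∑ j ∈ Finset.range n, heatSemigroup m (j + 1) V y ≤ 1)
    {i : ℕ} (hi : i ≤ n) (y : Fin m → ℤ) :
    (1 + c * V y) * heatSemigroup m 1 (khasminskiiBound m c V i) y
      ≤ khasminskiiBound m c V (i + 1) y := by
  have hshift : heatSemigroup m 1 (khasminskiiBound m c V i) y
      = 1 + 2 * c * ∑ j ∈ Finset.range i, heatSemigroup m (j + 1) V y := by
    refine (hS.heatSemigroup_one_add_mul_sum y zero_le_one _ _
      fun j => heatSemigroup m j V).trans ?_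
    simp only [hS.heatSemigroup_add zero_le_one (Nat.cast_nonneg _), add_comm (1 : ℝ)]
  have hsucc : khasminskiiBound m c V (i + 1) y
      = 1 + 2 * c * (∑ j ∈ Finset.range i, heatSemigroup m (j + 1) V y + V y) := by
    simp only [khasminskiiBound, Finset.sum_range_succ', Nat.cast_add, Nat.cast_one,
      Nat.cast_zero, hS.heatSemigroup_zero]
  rw [hshift, hsucc]
  obtain h0 | h0 := eq_or_ne (V y) 0
  · simp [h0]
  set G := ∑ j ∈ Finset.range i, heatSemigroup m (j + 1) V y
  have hG : 2 * c * G ≤ 1 := by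
    refine le_trans ?_ (hV y h0)
    gcongr
    exact Finset.sum_le_sum_of_subset (Finset.range_subset_range.mpr hi)
  calc (1 + c * V y) * (1 + 2 * c * G) = 1 + 2 * c * G + c * V y * (1 + 2 * c * G) := by ring
    _ ≤ 1 + 2 * c * G + c * V y * (1 + 1) := by gcongr
    _ = 1 + 2 * c * (G + V y) := by ring

theorem lintegral_prod_mul_khasminskiiBound_le (hS : IsCTSRW m P S) (x : Fin m → ℤ)
    (hV : ∀ y, V y ≠ 0 → 2 * c * ∑ j ∈ Finset.range n, heatSemigroup m (j + 1) V y ≤ 1)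
    {s : ℝ} (hs : 0 ≤ s) (l i : ℕ) (hli : l + i ≤ n) :
    ∫⁻ ω, (∏ j ∈ Finset.range l, (1 + c * V (S (s + j) ω)))
        * khasminskiiBound m c V i (S (s + l) ω) ∂P x
      ≤ ∫⁻ ω, khasminskiiBound m c V (i + l) (S s ω) ∂P x := by
  induction l generalizing i with
  | zero => simp
  | succ l ih =>
    have hmarkov := hS.lintegral_path_mul x (t := fun j : Fin (l + 1) => s + j)
      (by simpa using hs) (fun j => by simp) (T := s + (l + 1 : ℕ)) (by simp)
      (fun v => ∏ j, (1 + c * V (v j))) (khasminskiiBound m c V i)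
    rw [show s + ((l + 1 : ℕ) : ℝ) - (s + ((Fin.last l : Fin (l + 1)) : ℕ)) = 1 by simp] at hmarkov
    have hprod (ω : Ω) : ∏ j : Fin (l + 1), (1 + c * V (S (s + (j : ℕ)) ω))
        = ∏ j ∈ Finset.range (l + 1), (1 + c * V (S (s + j) ω)) := by rw [Finset.prod_range]
    simp only [hprod] at hmarkov
    rw [hmarkov]
    calc _ ≤ ∫⁻ ω, (∏ j ∈ Finset.range l, (1 + c * V (S (s + j) ω)))
          * khasminskiiBound m c V (i + 1) (S (s + l) ω) ∂P x := by
          refine lintegral_mono fun ω => ?_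
          simp only [Finset.prod_range_succ, mul_assoc, Fin.val_last]
          gcongr
          exact hS.one_add_mul_heatSemigroup_khasminskiiBound_le hV (by lia) _
      _ ≤ _ := (ih (i + 1) (by lia)).trans_eq (by rw [add_right_comm, add_assoc])

theorem lintegral_prod_one_add_le (hS : IsCTSRW m P S) (x : Fin m → ℤ) {M : ℝ≥0∞}
    (hVM : ∀ y, V y ≤ M)
    (hV : ∀ y, V y ≠ 0 → 2 * c * ∑ j ∈ Finset.range n, heatSemigroup m (j + 1) V y ≤ 1)
    {s : ℝ} (hs : 0 ≤ s) :
    ∫⁻ ω, ∏ j ∈ Finset.range n, (1 + c * V (S (s + j) ω)) ∂P x ≤ 1 + 2 * c * (n * M) := by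
  have := hS.prob x
  have hbound (y : Fin m → ℤ) : khasminskiiBound m c V n y ≤ 1 + 2 * c * (n * M) := by
    rw [khasminskiiBound]
    gcongr
    exact (Finset.sum_le_sum fun j _ => hS.heatSemigroup_le y (Nat.cast_nonneg j) hVM).trans
      (by simp)
  calc ∫⁻ ω, ∏ j ∈ Finset.range n, (1 + c * V (S (s + j) ω)) ∂P x
      ≤ ∫⁻ ω, khasminskiiBound m c V (0 + n) (S s ω) ∂P x := by
        simpa [khasminskiiBound] using
          hS.lintegral_prod_mul_khasminskiiBound_le x hV hs n 0 le_rfl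
    _ ≤ ∫⁻ _, (1 + 2 * c * (n * M)) ∂P x := lintegral_mono fun ω => by
        rw [zero_add]; exact hbound _
    _ = 1 + 2 * c * (n * M) := by simp

end IsCTSRW

/-! ### Boxes and the Green function -/

/-- The lattice points at sup-norm distance at most `R` from `x`. -/
noncomputable def box {d : ℕ} (x : Fin d → ℤ) (R : ℕ) : Finset (Fin d → ℤ) :=
  Finset.Icc (x - fun _ => (R : ℤ)) (x + fun _ => (R : ℤ))

section Green

variable {d : ℕ}

theorem mem_box {x y : Fin d → ℤ} {R : ℕ} : y ∈ box x R ↔ ∀ i, |y i - x i| ≤ R := by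
  simp only [box, Finset.mem_Icc, Pi.le_def, Pi.sub_apply, Pi.add_apply, ← forall_and]
  exact forall_congr' fun i => by rw [abs_le]; lia

theorem card_box (x : Fin d → ℤ) (R : ℕ) : (box x R).card = (2 * R + 1) ^ d := by
  have hside (i : Fin d) : (x i + (R : ℤ) + 1 - (x i - R)).toNat = 2 * R + 1 := by lia
  simp [box, Pi.card_Icc, hside]

theorem box_subset_box (x : Fin d → ℤ) {R n : ℕ} (hRn : R ≤ n) : box x R ⊆ box x n :=
  fun _ hy => mem_box.mpr fun i => (mem_box.mp hy i).trans (by exact_mod_cast hRn)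

theorem summable_inv_sqrt_pow (hd : 3 ≤ d) :
    Summable fun k : ℕ => (√((k : ℝ) + 1))⁻¹ ^ d := by
  have hd' : (1 : ℝ) < d / 2 := by
    have : (3 : ℝ) ≤ d := by exact_mod_cast hd
    linarith
  have h := (summable_nat_add_iff 1).mpr (Real.summable_nat_rpow_inv.mpr hd')
  refine h.congr fun k => ?_
  rw [inv_pow, Real.sqrt_eq_rpow, ← Real.rpow_natCast, ← Real.rpow_mul (by positivity)]
  push_cast; ring_nf

/-- The constant in the bound `sum_range_sum_heatKernel_le` on the Green function: the first summand
bounds the contribution of nearby sites, the second that of the sites within the diffusive range,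
the third that of the sites beyond it. -/
noncomputable def greenConst (d : ℕ) : ℝ :=
  ∑' k : ℕ, (√((k : ℝ) + 1))⁻¹ ^ d + 2 ^ d + Real.exp (2 * d)

theorem tsum_inv_sqrt_pow_nonneg (d : ℕ) : 0 ≤ ∑' k : ℕ, (√((k : ℝ) + 1))⁻¹ ^ d :=
  tsum_nonneg fun k => by positivity

theorem greenConst_pos (d : ℕ) : 0 < greenConst d := by
  have := tsum_inv_sqrt_pow_nonneg d
  unfold greenConst; positivity

theorem sum_heatKernel_inter_box_le {t l a b : ℝ} (ht : 1 ≤ t) (hl : 1 ≤ l) (hb : 0 ≤ b)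
    {F : Finset (Fin d → ℤ)} {x : Fin d → ℤ}
    (hF : ((F ∩ box x ⌈√t * l⌉₊).card : ℝ) ≤ a + b * (⌈√t * l⌉₊ : ℝ) ^ d) :
    ∑ y ∈ F ∩ box x ⌈√t * l⌉₊, heatKernel d t x y
      ≤ (√t)⁻¹ ^ d * a + 2 ^ d * (b * l ^ d) := by
  have hsqrt : 1 ≤ √t := Real.one_le_sqrt.mpr ht
  have hceil : (⌈√t * l⌉₊ : ℝ) ≤ 2 * √t * l := by
    have := Nat.ceil_lt_add_one (show 0 ≤ √t * l by positivity)
    nlinarith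
  calc ∑ y ∈ F ∩ box x ⌈√t * l⌉₊, heatKernel d t x y
      ≤ ∑ _y ∈ F ∩ box x ⌈√t * l⌉₊, (√t)⁻¹ ^ d :=
        Finset.sum_le_sum fun y _ => heatKernel_le (by linarith) x y
    _ = ((F ∩ box x ⌈√t * l⌉₊).card : ℝ) * (√t)⁻¹ ^ d := by simp
    _ ≤ (a + b * (2 * √t * l) ^ d) * (√t)⁻¹ ^ d := by
        gcongr
        exact hF.trans (by gcongr)
    _ = (√t)⁻¹ ^ d * a + 2 ^ d * (b * l ^ d) := by
        rw [mul_pow, mul_pow, inv_pow]; field_simp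

theorem sum_heatKernel_sdiff_box_le {t l : ℝ} (ht : 1 ≤ t) (F : Finset (Fin d → ℤ))
    (x : Fin d → ℤ) :
    ∑ y ∈ F \ box x ⌈√t * l⌉₊, heatKernel d t x y
      ≤ F.card * (Real.exp (2 * d) * Real.exp (-l)) := by
  have hsqrt : 1 ≤ √t := Real.one_le_sqrt.mpr ht
  have hfar (y : Fin d → ℤ) (hy : y ∈ F \ box x ⌈√t * l⌉₊) :
      heatKernel d t x y ≤ Real.exp (2 * d) * Real.exp (-l) := by
    have hout := (Finset.mem_sdiff.mp hy).2
    rw [mem_box] at hout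
    push Not at hout
    obtain ⟨i, hi⟩ := hout
    have hdist : √t * l ≤ |(y i : ℝ) - x i| :=
      (Nat.le_ceil _).trans (by exact_mod_cast hi.le)
    refine (heatKernel_le_exp_neg (q := (√t)⁻¹) (by linarith) (by positivity)
      (inv_le_one_of_one_le₀ hsqrt) ?_ i x y).trans ?_
    · rw [inv_pow, Real.sq_sqrt (by linarith), mul_inv_cancel₀ (by linarith)]
    · gcongr
      rwa [← div_eq_inv_mul, le_div_iff₀' (by linarith)]
  calc ∑ y ∈ F \ box x ⌈√t * l⌉₊, heatKernel d t x y
      ≤ ((F \ box x ⌈√t * l⌉₊).card : ℝ) * (Real.exp (2 * d) * Real.exp (-l)) := by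
        simpa using Finset.sum_le_sum hfar
    _ ≤ F.card * (Real.exp (2 * d) * Real.exp (-l)) := by
        gcongr
        exact Finset.sdiff_subset

theorem sum_range_sum_heatKernel_le (hd : 3 ≤ d) (n : ℕ) {l a b : ℝ} (hl : 1 ≤ l) (ha : 0 ≤ a)
    (hb : 0 ≤ b) {F : Finset (Fin d → ℤ)} {x : Fin d → ℤ}
    (hF : ∀ R : ℕ, 1 ≤ R → (R : ℝ) ≤ 2 * √n * l →
      ((F ∩ box x R).card : ℝ) ≤ a + b * (R : ℝ) ^ d) :
    ∑ k ∈ Finset.range n, ∑ y ∈ F, heatKernel d ((k : ℝ) + 1) x y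
      ≤ greenConst d * (a + b * (n * l ^ d) + n * F.card * Real.exp (-l)) := by
  have hterm (k : ℕ) (hk : k ∈ Finset.range n) : ∑ y ∈ F, heatKernel d ((k : ℝ) + 1) x y
      ≤ (√((k : ℝ) + 1))⁻¹ ^ d * a + 2 ^ d * (b * l ^ d)
        + F.card * (Real.exp (2 * d) * Real.exp (-l)) := by
    have ht : (1 : ℝ) ≤ (k : ℝ) + 1 := by simp
    have hsqrt : 1 ≤ √((k : ℝ) + 1) := Real.one_le_sqrt.mpr ht
    have hkn : √((k : ℝ) + 1) ≤ √n :=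
      Real.sqrt_le_sqrt (by exact_mod_cast Finset.mem_range.mp hk)
    have hone : 1 ≤ √((k : ℝ) + 1) * l := by nlinarith
    have hceil : (⌈√((k : ℝ) + 1) * l⌉₊ : ℝ) ≤ 2 * √n * l := by
      have := Nat.ceil_lt_add_one (show 0 ≤ √((k : ℝ) + 1) * l by positivity)
      nlinarith
    rw [← Finset.sum_inter_add_sum_sdiff F (box x ⌈√((k : ℝ) + 1) * l⌉₊)]
    exact add_le_add
      (sum_heatKernel_inter_box_le ht hl hb (hF _ (Nat.one_le_ceil_iff.mpr (by linarith)) hceil))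
      (sum_heatKernel_sdiff_box_le ht F x)
  have hnear := tsum_inv_sqrt_pow_nonneg d
  have hexp := Real.exp_pos (2 * d)
  have hpow : (0 : ℝ) < 2 ^ d := by positivity
  calc ∑ k ∈ Finset.range n, ∑ y ∈ F, heatKernel d ((k : ℝ) + 1) x y
      ≤ (∑ k ∈ Finset.range n, (√((k : ℝ) + 1))⁻¹ ^ d) * a + 2 ^ d * (b * (n * l ^ d))
        + Real.exp (2 * d) * (n * F.card * Real.exp (-l)) := by
        refine (Finset.sum_le_sum hterm).trans_eq ?_
        rw [Finset.sum_add_distrib, Finset.sum_add_distrib, ← Finset.sum_mul]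
        simp only [Finset.sum_const, Finset.card_range, nsmul_eq_mul]
        ring
    _ ≤ greenConst d * a + greenConst d * (b * (n * l ^ d))
        + greenConst d * (n * F.card * Real.exp (-l)) := by
        gcongr
        · have := (summable_inv_sqrt_pow hd).sum_le_tsum (Finset.range n)
            fun k _ => by positivity
          unfold greenConst; linarith
        · unfold greenConst; linarith
        · unfold greenConst; linarith
    _ = greenConst d * (a + b * (n * l ^ d) + n * F.card * Real.exp (-l)) := by ring

theorem heatSemigroup_indicator {u : ℝ} (hu : 0 ≤ u) (F : Finset (Fin d → ℤ)) (x : Fin d → ℤ) :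
    heatSemigroup d u ((F : Set (Fin d → ℤ)).indicator 1) x
      = ENNReal.ofReal (∑ y ∈ F, heatKernel d u x y) := by
  rw [ENNReal.ofReal_sum_of_nonneg fun y _ => heatKernel_nonneg hu x y, heatSemigroup,
    tsum_eq_sum (s := F) fun y hy => by simp [hy]]
  exact Finset.sum_congr rfl fun y hy => by simp [hy]

theorem sum_range_heatSemigroup_indicator_le (hd : 3 ≤ d) (n : ℕ) {l a b : ℝ} (hl : 1 ≤ l)
    (ha : 0 ≤ a) (hb : 0 ≤ b) {F : Finset (Fin d → ℤ)} {x : Fin d → ℤ}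
    (hF : ∀ R : ℕ, 1 ≤ R → (R : ℝ) ≤ 2 * √n * l →
      ((F ∩ box x R).card : ℝ) ≤ a + b * (R : ℝ) ^ d) :
    ∑ k ∈ Finset.range n, heatSemigroup d ((k : ℝ) + 1) ((F : Set (Fin d → ℤ)).indicator 1) x
      ≤ ENNReal.ofReal (greenConst d * (a + b * (n * l ^ d) + n * F.card * Real.exp (-l))) := by
  refine Eq.trans_le ?_
    (ENNReal.ofReal_le_ofReal (sum_range_sum_heatKernel_le hd n hl ha hb hF))
  rw [ENNReal.ofReal_sum_of_nonneg fun k _ =>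
    Finset.sum_nonneg fun y _ => heatKernel_nonneg (by positivity) x y]
  exact Finset.sum_congr rfl fun k _ => heatSemigroup_indicator (by positivity) F x

end Green

/-! ### Tails of additive functionals -/

theorem setLIntegral_Ioc_zero_natCast (f : ℝ → ℝ≥0∞) (n : ℕ) :
    ∫⁻ u in Ioc (0 : ℝ) n, f u = ∑ j ∈ Finset.range n, ∫⁻ s in Ioc (0 : ℝ) 1, f (s + j) := by
  induction n with
  | zero => simp
  | succ n ih =>
    have hunion : Ioc (0 : ℝ) ((n + 1 : ℕ) : ℝ) = Ioc (0 : ℝ) n ∪ Ioc (n : ℝ) (n + 1) := by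
      rw [Ioc_union_Ioc_eq_Ioc (Nat.cast_nonneg n) (by linarith), Nat.cast_succ]
    have hshift := (measurePreserving_add_right volume (n : ℝ)).setLIntegral_comp_preimage_emb
      (measurableEmbedding_addRight (n : ℝ)) f (Ioc (n : ℝ) (n + 1))
    rw [Finset.sum_range_succ, ← ih, hunion, lintegral_union measurableSet_Ioc
      (Ioc_disjoint_Ioc_of_le le_rfl), ← hshift]
    simp

theorem exp_half_le_one_add {x : ℝ} (h0 : 0 ≤ x) (h1 : x ≤ 1) : Real.exp (x / 2) ≤ 1 + x := by
  have h := Real.abs_exp_sub_one_sub_id_le (x := x / 2) (abs_le.mpr (by constructor <;> linarith))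
  have := (abs_le.mp h).2
  nlinarith

-- The tangent line of `exp` at `T` plays the role of Jensen's inequality.
theorem exp_add_exp_mul_sum_le_prod {ι : Type*} (s : Finset ι) {w : ι → ℝ} (h0 : ∀ i, 0 ≤ w i)
    (h1 : ∀ i, w i ≤ 1) (T : ℝ) :
    Real.exp T + Real.exp T * (∑ i ∈ s, w i / 2) ≤ ∏ i ∈ s, (1 + w i) + Real.exp T * T := by
  have hprod : Real.exp (∑ i ∈ s, w i / 2) ≤ ∏ i ∈ s, (1 + w i) := by
    rw [Real.exp_sum]
    exact Finset.prod_le_prod (fun i _ => (Real.exp_pos _).le)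
      fun i _ => exp_half_le_one_add (h0 i) (h1 i)
  have htangent := mul_le_mul_of_nonneg_left
    (Real.add_one_le_exp (∑ i ∈ s, w i / 2 - T)) (Real.exp_pos T).le
  rw [← Real.exp_add, add_sub_cancel] at htangent
  linarith

theorem ofReal_exp_add_mul_sum_le_prod {ι : Type*} (s : Finset ι) {v : ι → ℝ} {c M T : ℝ}
    (hc : 0 ≤ c) (hT : 0 ≤ T) (h0 : ∀ i, 0 ≤ v i) (hM : ∀ i, v i ≤ M) (hcM : c * M ≤ 1) :
    ENNReal.ofReal (Real.exp (c * T / 2))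
        + ENNReal.ofReal (Real.exp (c * T / 2) * (c / 2)) * ∑ i ∈ s, ENNReal.ofReal (v i)
      ≤ ∏ i ∈ s, (1 + ENNReal.ofReal c * ENNReal.ofReal (v i))
        + ENNReal.ofReal (Real.exp (c * T / 2) * (c / 2)) * ENNReal.ofReal T := by
  have hcv (i : ι) : 0 ≤ c * v i := mul_nonneg hc (h0 i)
  have hprod : ∏ i ∈ s, (1 + ENNReal.ofReal c * ENNReal.ofReal (v i))
      = ENNReal.ofReal (∏ i ∈ s, (1 + c * v i)) := by
    rw [ENNReal.ofReal_prod_of_nonneg fun i _ => add_nonneg zero_le_one (hcv i)]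
    refine Finset.prod_congr rfl fun i _ => ?_
    rw [ENNReal.ofReal_add zero_le_one (hcv i), ENNReal.ofReal_mul hc, ENNReal.ofReal_one]
  have hsum : 0 ≤ ∑ i ∈ s, v i := Finset.sum_nonneg fun i _ => h0 i
  have hpos : 0 ≤ ∏ i ∈ s, (1 + c * v i) :=
    Finset.prod_nonneg fun i _ => add_nonneg zero_le_one (hcv i)
  rw [hprod, ← ENNReal.ofReal_sum_of_nonneg fun i _ => h0 i, ← ENNReal.ofReal_mul (by positivity),
    ← ENNReal.ofReal_mul (by positivity), ← ENNReal.ofReal_add (by positivity) (by positivity),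
    ← ENNReal.ofReal_add hpos (by positivity)]
  have h := exp_add_exp_mul_sum_le_prod s hcv
    (fun i => (mul_le_mul_of_nonneg_left (hM i) hc).trans hcM) (c * T / 2)
  rw [← Finset.sum_div, ← Finset.mul_sum] at h
  exact ENNReal.ofReal_le_ofReal (by linarith)

namespace IsCTSRW

variable {m : ℕ} {Ω : Type*} [MeasurableSpace Ω] {P : (Fin m → ℤ) → Measure Ω}
  {S : ℝ → Ω → (Fin m → ℤ)}

theorem measurable_comp_add (hS : IsCTSRW m P S) (f : (Fin m → ℤ) → ℝ≥0∞) (r : ℝ) :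
    Measurable fun p : ℝ × Ω => f (S (p.1 + r) p.2) :=
  (measurable_of_countable f).comp <| hS.meas.comp <|
    (measurable_fst.add_const r).prodMk measurable_snd

theorem measurable_comp (hS : IsCTSRW m P S) (f : (Fin m → ℤ) → ℝ≥0∞) :
    Measurable fun p : ℝ × Ω => f (S p.1 p.2) :=
  (measurable_of_countable f).comp hS.meas

theorem ofReal_exp_le_setLIntegral_prod (hS : IsCTSRW m P S) {v : (Fin m → ℤ) → ℝ}
    {c M T : ℝ} {n : ℕ} (hc : 0 ≤ c) (hT : 0 ≤ T) (hv0 : ∀ y, 0 ≤ v y) (hvM : ∀ y, v y ≤ M)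
    (hcM : c * M ≤ 1) {ω : Ω}
    (hω : ENNReal.ofReal T ≤ ∫⁻ u in Ioc (0 : ℝ) n, ENNReal.ofReal (v (S u ω))) :
    ENNReal.ofReal (Real.exp (c * T / 2)) ≤ ∫⁻ s in Ioc (0 : ℝ) 1,
      ∏ j ∈ Finset.range n, (1 + ENNReal.ofReal c * ENNReal.ofReal (v (S (s + j) ω))) := by
  have hmeas (j : ℕ) : Measurable fun s : ℝ => ENNReal.ofReal (v (S (s + j) ω)) :=
    (hS.measurable_comp_add (fun y => ENNReal.ofReal (v y)) j).comp
      (measurable_id.prodMk measurable_const)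
  have h := setLIntegral_mono' (μ := volume) (measurableSet_Ioc (a := (0 : ℝ)) (b := 1))
    fun s _ => ofReal_exp_add_mul_sum_le_prod (Finset.range n)
      (v := fun j : ℕ => v (S (s + j) ω)) hc hT (fun _ => hv0 _) (fun _ => hvM _) hcM
  rw [lintegral_add_left measurable_const, lintegral_add_right _ measurable_const,
    lintegral_const_mul _ (Finset.measurable_sum _ fun j _ => hmeas j),
    lintegral_finsetSum _ fun j _ => hmeas j,
    ← setLIntegral_Ioc_zero_natCast fun u => ENNReal.ofReal (v (S u ω))] at h
  simp only [lintegral_const, Measure.restrict_apply MeasurableSet.univ, univ_inter,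
    Real.volume_Ioc, sub_zero, ENNReal.ofReal_one, mul_one] at h
  exact (ENNReal.add_le_add_iff_right (by finiteness)).mp (h.trans' (by gcongr))

theorem measure_le_lintegral_le_exp (hS : IsCTSRW m P S) (x : Fin m → ℤ)
    {v : (Fin m → ℤ) → ℝ} {c M T : ℝ} (n : ℕ) (hc : 0 ≤ c) (hM : 0 ≤ M) (hT : 0 ≤ T)
    (hv0 : ∀ y, 0 ≤ v y) (hvM : ∀ y, v y ≤ M) (hcM : c * M ≤ 1)
    (hV : ∀ y, v y ≠ 0 → 2 * ENNReal.ofReal c * ∑ j ∈ Finset.range n,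
      heatSemigroup m (j + 1) (fun y => ENNReal.ofReal (v y)) y ≤ 1) :
    P x {ω | ENNReal.ofReal T ≤ ∫⁻ u in Ioc (0 : ℝ) n, ENNReal.ofReal (v (S u ω))}
      ≤ ENNReal.ofReal ((1 + 2 * c * (n * M)) * Real.exp (-(c * T / 2))) := by
  have := hS.prob x
  set V : (Fin m → ℤ) → ℝ≥0∞ := fun y => ENNReal.ofReal (v y)
  have hmeas : Measurable fun p : ℝ × Ω =>
      ∏ j ∈ Finset.range n, (1 + ENNReal.ofReal c * V (S (p.1 + j) p.2)) :=
    Finset.measurable_prod _ fun j _ =>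
      measurable_const.add ((hS.measurable_comp_add V j).const_mul _)
  have hmoment (s : ℝ) (hs : 0 ≤ s) :
      ∫⁻ ω, ∏ j ∈ Finset.range n, (1 + ENNReal.ofReal c * V (S (s + j) ω)) ∂P x
        ≤ ENNReal.ofReal (1 + 2 * c * (n * M)) := by
    refine (hS.lintegral_prod_one_add_le x (fun y => ENNReal.ofReal_le_ofReal (hvM y))
      (fun y hy => hV y fun h => hy (by simp [h])) hs).trans_eq ?_
    rw [ENNReal.ofReal_add zero_le_one (by positivity), ENNReal.ofReal_mul (by positivity),
      ENNReal.ofReal_mul (by positivity), ENNReal.ofReal_mul (by positivity)]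
    simp
  calc P x {ω | ENNReal.ofReal T ≤ ∫⁻ u in Ioc (0 : ℝ) n, V (S u ω)}
      ≤ P x {ω | ENNReal.ofReal (Real.exp (c * T / 2)) ≤ ∫⁻ s in Ioc (0 : ℝ) 1,
          ∏ j ∈ Finset.range n, (1 + ENNReal.ofReal c * V (S (s + j) ω))} :=
        measure_mono fun ω hω => hS.ofReal_exp_le_setLIntegral_prod hc hT hv0 hvM hcM hω
    _ ≤ (∫⁻ ω, (∫⁻ s in Ioc (0 : ℝ) 1,
          ∏ j ∈ Finset.range n, (1 + ENNReal.ofReal c * V (S (s + j) ω))) ∂P x)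
          / ENNReal.ofReal (Real.exp (c * T / 2)) :=
        meas_ge_le_lintegral_div (Measurable.lintegral_prod_left' hmeas).aemeasurable
          (ENNReal.ofReal_pos.mpr (Real.exp_pos _)).ne' ENNReal.ofReal_ne_top
    _ ≤ ENNReal.ofReal (1 + 2 * c * (n * M)) / ENNReal.ofReal (Real.exp (c * T / 2)) := by
        gcongr
        rw [lintegral_lintegral_swap (f := fun ω s =>
          ∏ j ∈ Finset.range n, (1 + ENNReal.ofReal c * V (S (s + j) ω)))
          (hmeas.comp measurable_swap).aemeasurable]
        exact (setLIntegral_mono measurable_const fun s hs => hmoment s hs.1.le).trans_eq (by simp)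
    _ = ENNReal.ofReal ((1 + 2 * c * (n * M)) * Real.exp (-(c * T / 2))) := by
        rw [← ENNReal.ofReal_div_of_pos (Real.exp_pos _), Real.exp_neg, div_eq_mul_inv]

theorem measure_exists_lt_mem_le_sum_heatSemigroup (hS : IsCTSRW m P S) (x : Fin m → ℤ) (n : ℕ)
    (H : Set (Fin m → ℤ)) : P x {ω | ∃ u : ℝ, 0 ≤ u ∧ u < n ∧ S u ω ∈ H}
      ≤ ENNReal.ofReal (Real.exp (2 * m))
        * ∑ k ∈ Finset.range n, heatSemigroup m (k + 1) (H.indicator 1) x := by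
  refine (hS.measure_exists_lt_mem_le x n H).trans_eq ?_
  congr! 2 with k
  rw [← hS.lintegral_eq_heatSemigroup x (Nat.cast_add_one_pos k).le,
    ← lintegral_indicator_one (hS.measurableSet_mem _ H)]
  rfl

end IsCTSRW

/-! ### Functions of polynomial growth far away from the origin -/

theorem pow_le_mul_exp_half {s r : ℝ} (hs : 0 < s) (hr : 0 ≤ r) (Q : ℕ) :
    r ^ Q ≤ (2 * s) ^ Q * Q.factorial * Real.exp (r / s / 2) := by
  have h := Real.pow_div_factorial_le_exp (r / s / 2) (by positivity) Q
  rw [div_le_iff₀ (by positivity)] at h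
  calc r ^ Q = (2 * s) ^ Q * (r / s / 2) ^ Q := by rw [← mul_pow]; congr 1; field_simp
    _ ≤ (2 * s) ^ Q * (Real.exp (r / s / 2) * Q.factorial) := by gcongr
    _ = (2 * s) ^ Q * Q.factorial * Real.exp (r / s / 2) := by ring

theorem le_exp_neg_mul_sum_cosh {d Q L : ℕ} {z : (Fin d → ℤ) → ℝ} {C s : ℝ} (hC : 0 ≤ C)
    (hz : ∀ R : ℕ, 1 ≤ R → ∀ y ∈ box 0 R, z y ≤ C * (R : ℝ) ^ Q) (hs : 0 < s)
    {y : Fin d → ℤ} (hy : y ∉ box 0 L) :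
    z y ≤ C * ((2 * s) ^ Q * Q.factorial * Real.exp (-(L / s / 2)))
      * ∑ i, 2 * Real.cosh (s⁻¹ * y i) := by
  rw [mem_box] at hy
  push Not at hy
  obtain ⟨i₀, hi₀⟩ := hy
  obtain ⟨i, -, hmax⟩ :=
    Finset.exists_max_image Finset.univ (fun i => |y i|) ⟨i₀, Finset.mem_univ _⟩
  set R := (y i).natAbs
  have hR : (R : ℤ) = |y i| := (Int.abs_eq_natAbs _).symm
  have hLR : L < R := by
    have := hmax i₀ (Finset.mem_univ _)
    simp only [Pi.zero_apply, sub_zero] at hi₀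
    lia
  have hmem : y ∈ box 0 R := mem_box.mpr fun j => by
    simpa [hR] using hmax j (Finset.mem_univ _)
  have hcosh : Real.exp (R / s) ≤ ∑ i, 2 * Real.cosh (s⁻¹ * y i) := by
    refine le_trans ?_ (Finset.single_le_sum (f := fun i => 2 * Real.cosh (s⁻¹ * y i))
      (fun j _ => by positivity) (Finset.mem_univ i))
    have habs : |s⁻¹ * (y i : ℝ)| = R / s := by
      rw [abs_mul, abs_of_pos (inv_pos.mpr hs), ← Int.cast_abs, ← hR, div_eq_inv_mul,
        Int.cast_natCast]
    rw [← Real.cosh_abs, habs, Real.cosh_eq]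
    linarith [Real.exp_pos (-(R / s))]
  calc z y ≤ C * (R : ℝ) ^ Q := hz R (by lia) y hmem
    _ ≤ C * ((2 * s) ^ Q * Q.factorial * Real.exp (R / s / 2)) := by
        gcongr
        exact pow_le_mul_exp_half hs R.cast_nonneg Q
    _ ≤ C * ((2 * s) ^ Q * Q.factorial
          * (Real.exp (-(L / s / 2)) * Real.exp (R / s))) := by
        rw [← Real.exp_add]
        have : (L : ℝ) / s / 2 ≤ R / s / 2 := by gcongr
        gcongr
        linarith
    _ ≤ C * ((2 * s) ^ Q * Q.factorial
          * (Real.exp (-(L / s / 2)) * ∑ i, 2 * Real.cosh (s⁻¹ * y i))) := by gcongr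
    _ = _ := by ring

section CoshMoments

variable {m : ℕ}

theorem heatSemigroup_two_mul_cosh_le {t θ : ℝ} (ht : 0 ≤ t) (hθ : |θ| ≤ 1) (htθ : t * θ ^ 2 ≤ 1)
    (i : Fin m) :
    heatSemigroup m t (fun y => ENNReal.ofReal (2 * Real.cosh (θ * y i))) 0
      ≤ ENNReal.ofReal (2 * Real.exp (2 * m)) := by
  have hsplit (y : Fin m → ℤ) :
      ENNReal.ofReal (heatKernel m t 0 y) * ENNReal.ofReal (2 * Real.cosh (θ * y i))
        = ENNReal.ofReal (heatKernel m t 0 y * Real.exp (θ * (y i - (0 : Fin m → ℤ) i)))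
          + ENNReal.ofReal (heatKernel m t 0 y * Real.exp (-θ * (y i - (0 : Fin m → ℤ) i))) := by
    have hk := heatKernel_nonneg ht 0 y
    rw [← ENNReal.ofReal_mul hk, ← ENNReal.ofReal_add (by positivity) (by positivity),
      Real.cosh_eq]
    simp only [Pi.zero_apply, Int.cast_zero, sub_zero]
    ring_nf
  rw [heatSemigroup, tsum_congr hsplit, ENNReal.tsum_add, two_mul,
    ENNReal.ofReal_add (by positivity) (by positivity)]
  exact add_le_add (tsum_heatKernel_mul_exp_le_exp_two_mul ht hθ htθ i 0)
    (tsum_heatKernel_mul_exp_le_exp_two_mul ht (by rwa [abs_neg]) (by rwa [neg_sq]) i 0)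

theorem heatSemigroup_mul_sum_cosh_le {t θ B : ℝ} (ht : 0 ≤ t) (hθ : |θ| ≤ 1)
    (htθ : t * θ ^ 2 ≤ 1) (hB : 0 ≤ B) :
    heatSemigroup m t (fun y => ENNReal.ofReal (B * ∑ i, 2 * Real.cosh (θ * y i))) 0
      ≤ ENNReal.ofReal (B * (m * (2 * Real.exp (2 * m)))) := by
  calc heatSemigroup m t (fun y => ENNReal.ofReal (B * ∑ i, 2 * Real.cosh (θ * y i))) 0
      = ENNReal.ofReal B * ∑ i,
          heatSemigroup m t (fun y => ENNReal.ofReal (2 * Real.cosh (θ * y i))) 0 := by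
        simp only [heatSemigroup]
        rw [← Summable.tsum_finsetSum fun i _ => ENNReal.summable, ← ENNReal.tsum_mul_left]
        refine tsum_congr fun y => ?_
        rw [ENNReal.ofReal_mul hB, ENNReal.ofReal_sum_of_nonneg fun i _ => by positivity,
          ← Finset.mul_sum]
        ring
    _ ≤ ENNReal.ofReal B * ∑ _i : Fin m, ENNReal.ofReal (2 * Real.exp (2 * m)) := by
        gcongr with i
        exact heatSemigroup_two_mul_cosh_le ht hθ htθ i
    _ = ENNReal.ofReal (B * (m * (2 * Real.exp (2 * m)))) := by
        rw [ENNReal.ofReal_mul hB, ENNReal.ofReal_mul (Nat.cast_nonneg m)]; simp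

theorem IsCTSRW.lintegral_lintegral_le_of_le_sum_cosh {Ω : Type*} [MeasurableSpace Ω]
    {P : (Fin m → ℤ) → Measure Ω} {S : ℝ → Ω → (Fin m → ℤ)} (hS : IsCTSRW m P S)
    {f : (Fin m → ℤ) → ℝ≥0∞} {B : ℝ} (hB : 0 ≤ B) {n : ℕ} (hn : 1 ≤ n)
    (hf : ∀ y, f y ≤ ENNReal.ofReal (B * ∑ i, 2 * Real.cosh ((√n)⁻¹ * y i))) :
    ∫⁻ ω, (∫⁻ u in Ioc (0 : ℝ) n, f (S u ω)) ∂P 0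
      ≤ ENNReal.ofReal (n * (B * (m * (2 * Real.exp (2 * m))))) := by
  have := hS.prob 0
  have hn' : (1 : ℝ) ≤ n := by exact_mod_cast hn
  have hsqrt : |(√n)⁻¹| ≤ 1 := by
    rw [abs_of_nonneg (by positivity)]
    exact inv_le_one_of_one_le₀ (Real.one_le_sqrt.mpr hn')
  have hat (u : ℝ) (hu : u ∈ Ioc (0 : ℝ) n) :
      ∫⁻ ω, f (S u ω) ∂P 0 ≤ ENNReal.ofReal (B * (m * (2 * Real.exp (2 * m)))) := by
    refine le_trans ?_ (heatSemigroup_mul_sum_cosh_le hu.1.le hsqrt ?_ hB)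
    · rw [← hS.lintegral_eq_heatSemigroup 0 hu.1.le]
      exact lintegral_mono fun ω => hf _
    · rw [inv_pow, Real.sq_sqrt (Nat.cast_nonneg n)]
      exact mul_inv_le_one_of_le₀ hu.2 (Nat.cast_nonneg n)
  rw [lintegral_lintegral_swap (f := fun ω u => f (S u ω))
    ((hS.measurable_comp f).comp measurable_swap).aemeasurable]
  calc ∫⁻ u in Ioc (0 : ℝ) n, ∫⁻ ω, f (S u ω) ∂P 0
      ≤ ∫⁻ _ in Ioc (0 : ℝ) n, ENNReal.ofReal (B * (m * (2 * Real.exp (2 * m)))) :=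
        setLIntegral_mono measurable_const hat
    _ = ENNReal.ofReal (n * (B * (m * (2 * Real.exp (2 * m))))) := by
        rw [ENNReal.ofReal_mul (Nat.cast_nonneg n)]; simp [mul_comm]

end CoshMoments

/-! ### Environments with few high sites -/

theorem eventually_mul_rpow_le (A : ℝ) {a b : ℝ} (hab : a < b) :
    ∀ᶠ n : ℕ in atTop, A * (n : ℝ) ^ a ≤ (n : ℝ) ^ b := by
  have hlim : Tendsto (fun n : ℕ => (n : ℝ) ^ (b - a)) atTop atTop :=
    (tendsto_rpow_atTop (by linarith)).comp tendsto_natCast_atTop_atTop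
  filter_upwards [hlim.eventually_ge_atTop A, eventually_gt_atTop 0] with n hn hpos
  calc A * (n : ℝ) ^ a ≤ (n : ℝ) ^ (b - a) * (n : ℝ) ^ a := by gcongr
    _ = (n : ℝ) ^ b := by rw [← Real.rpow_add (by exact_mod_cast hpos), sub_add_cancel]

theorem eventually_mul_rpow_mul_exp_le (A a b : ℝ) {κ c : ℝ} (hκ : 0 < κ) (hc : 0 < c) :
    ∀ᶠ n : ℕ in atTop, A * (n : ℝ) ^ a * Real.exp (-(c * (n : ℝ) ^ κ)) ≤ (n : ℝ) ^ b := by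
  have hpow : Tendsto (fun n : ℕ => (n : ℝ) ^ κ) atTop atTop :=
    (tendsto_rpow_atTop hκ).comp tendsto_natCast_atTop_atTop
  have hlim := (tendsto_rpow_mul_exp_neg_mul_atTop_nhds_zero ((a + 1 - b) / κ) c hc).comp hpow
  filter_upwards [hlim.eventually (gt_mem_nhds zero_lt_one), eventually_gt_atTop 0,
    eventually_mul_rpow_le A (lt_add_one a)] with n hn hpos hA
  have hn0 : (0 : ℝ) < n := by exact_mod_cast hpos
  rw [Function.comp_apply, ← Real.rpow_mul hn0.le, mul_div_cancel₀ _ hκ.ne', neg_mul] at hn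
  calc A * (n : ℝ) ^ a * Real.exp (-(c * (n : ℝ) ^ κ))
      ≤ (n : ℝ) ^ (a + 1) * Real.exp (-(c * (n : ℝ) ^ κ)) := by gcongr
    _ = (n : ℝ) ^ b * ((n : ℝ) ^ (a + 1 - b) * Real.exp (-(c * (n : ℝ) ^ κ))) := by
        rw [← mul_assoc, ← Real.rpow_add hn0]; ring_nf
    _ ≤ (n : ℝ) ^ b := mul_le_of_le_one_right (by positivity) hn.le

/-- The sites of `box x R` at which the scenery exceeds `h`. -/
noncomputable def highSites {d : ℕ} (z : (Fin d → ℤ) → ℝ) (h : ℝ) (x : Fin d → ℤ) (R : ℕ) :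
    Finset (Fin d → ℤ) :=
  (box x R).filter fun y => h < z y

/-- In every box inside `[-n, n]^d` the number of sites higher than `n ^ s` is, up to a factor
`n ^ ε`, at most what one expects of a scenery with tail exponent `α`. -/
def HasSparseHighSites {d : ℕ} (z : (Fin d → ℤ) → ℝ) (α s ε : ℝ) : Prop :=
  ∀ᶠ n : ℕ in atTop, ∀ x ∈ box (0 : Fin d → ℤ) n, ∀ R : ℕ, 1 ≤ R → R ≤ n →
    ((highSites z ((n : ℝ) ^ s) x R).card : ℝ)
      ≤ (n : ℝ) ^ ε * (1 + (n : ℝ) ^ (-(α * s)) * (R : ℝ) ^ d)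

/-- The scenery grows at most like `|y| ^ q`. -/
def HasPolynomialGrowth {d : ℕ} (z : (Fin d → ℤ) → ℝ) (q : ℝ) : Prop :=
  ∃ C : ℝ, 0 < C ∧ ∀ R : ℕ, 1 ≤ R → ∀ y ∈ box (0 : Fin d → ℤ) R, z y ≤ C * (R : ℝ) ^ q

section HighSites

variable {d : ℕ} {z : (Fin d → ℤ) → ℝ} {h : ℝ} {x y : Fin d → ℤ} {n R : ℕ}

theorem mem_highSites : y ∈ highSites z h x R ↔ y ∈ box x R ∧ h < z y :=
  Finset.mem_filter

theorem highSites_subset_highSites (z : (Fin d → ℤ) → ℝ) (h : ℝ) (x : Fin d → ℤ) (hRn : R ≤ n) :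
    highSites z h x R ⊆ highSites z h x n :=
  Finset.filter_subset_filter _ (box_subset_box x hRn)

theorem card_highSites_le (z : (Fin d → ℤ) → ℝ) (h : ℝ) (x : Fin d → ℤ) (hn : 1 ≤ n) :
    ((highSites z h x n).card : ℝ) ≤ 3 ^ d * (n : ℝ) ^ d := by
  have hcard : (highSites z h x n).card ≤ (2 * n + 1) ^ d :=
    (Finset.card_filter_le _ _).trans_eq (card_box x n)
  have hside : (2 * n + 1) ^ d ≤ (3 * n) ^ d := Nat.pow_le_pow_left (by lia) d
  rw [← mul_pow]
  exact_mod_cast hcard.trans hside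

theorem highSites_inter_box_subset (w : Fin d → ℤ) :
    highSites z h w n ∩ box x R ⊆ highSites z h x R := fun y hy => by
  rw [Finset.mem_inter, mem_highSites] at hy
  exact mem_highSites.mpr ⟨hy.2, hy.1.2⟩

theorem eventually_sum_heatSemigroup_highSites_le (hd : 3 ≤ d) (z : (Fin d → ℤ) → ℝ) {ε : ℝ}
    (hε : 0 < ε) (hε4 : ε ≤ 1 / 4) (D : ℝ) :
    ∀ᶠ n : ℕ in atTop, ∀ (h : ℝ) (x : Fin d → ℤ) (a b : ℝ), 0 ≤ a → 0 ≤ b →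
      (∀ R : ℕ, 1 ≤ R → R ≤ n → ((highSites z h x R).card : ℝ) ≤ a + b * (R : ℝ) ^ d) →
      ∑ k ∈ Finset.range n, heatSemigroup d ((k : ℝ) + 1)
          ((highSites z h 0 n : Set (Fin d → ℤ)).indicator 1) x
        ≤ ENNReal.ofReal (greenConst d * (a + b * (n : ℝ) ^ (1 + d * ε) + (n : ℝ) ^ D)) := by
  filter_upwards [eventually_ge_atTop 1, eventually_mul_rpow_le 2 (by linarith : 1 / 2 + ε < 1),
    eventually_mul_rpow_mul_exp_le (3 ^ d) (d + 1) D hε one_pos]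
    with n hn hscale hexp h x a b ha hb hcount
  have hn0 : (0 : ℝ) < n := by exact_mod_cast hn
  have hl : (1 : ℝ) ≤ (n : ℝ) ^ ε := Real.one_le_rpow (by exact_mod_cast hn) hε.le
  have hrange : 2 * √n * (n : ℝ) ^ ε ≤ n := by
    rwa [Real.sqrt_eq_rpow, mul_assoc, ← Real.rpow_add hn0, ← Real.rpow_one (n : ℝ),
      ← Real.rpow_mul hn0.le, one_mul]
  have hfar : n * ((highSites z h 0 n).card : ℝ) * Real.exp (-(n : ℝ) ^ ε) ≤ (n : ℝ) ^ D := by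
    refine le_trans ?_ hexp
    rw [one_mul, Real.rpow_add_one hn0.ne', Real.rpow_natCast, ← mul_assoc, mul_comm (n : ℝ)]
    gcongr
    exact card_highSites_le z h 0 hn
  have hpow : (n : ℝ) * ((n : ℝ) ^ ε) ^ d = (n : ℝ) ^ (1 + d * ε) := by
    rw [← Real.rpow_natCast, ← Real.rpow_mul hn0.le, Real.rpow_one_add' hn0.le (by positivity),
      mul_comm ε]
  refine (sum_range_heatSemigroup_indicator_le hd n hl ha hb fun R hR hRn => ?_).trans
    (ENNReal.ofReal_le_ofReal ?_)
  · refine le_trans ?_ (hcount R hR (by exact_mod_cast hRn.trans hrange))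
    exact_mod_cast Finset.card_le_card (highSites_inter_box_subset 0)
  · have := (greenConst_pos d).le
    rw [hpow]
    gcongr

theorem HasSparseHighSites.eventually_sum_heatSemigroup_le (hd : 3 ≤ d) {α s ε : ℝ} (hε : 0 < ε)
    (hε4 : ε ≤ 1 / 4) (hz : HasSparseHighSites z α s ε) :
    ∀ᶠ n : ℕ in atTop, ∀ x ∈ box (0 : Fin d → ℤ) n,
      ∑ k ∈ Finset.range n, heatSemigroup d ((k : ℝ) + 1)
          ((highSites z ((n : ℝ) ^ s) 0 n : Set (Fin d → ℤ)).indicator 1) x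
        ≤ ENNReal.ofReal
          (greenConst d * (2 * (n : ℝ) ^ ε + (n : ℝ) ^ (1 - α * s + (d + 1) * ε))) := by
  filter_upwards [hz, eventually_ge_atTop 1,
    eventually_sum_heatSemigroup_highSites_le hd z hε hε4 0] with n hcount hn hgreen x hx
  have hn0 : (0 : ℝ) < n := by exact_mod_cast hn
  have hl : (1 : ℝ) ≤ (n : ℝ) ^ ε := Real.one_le_rpow (by exact_mod_cast hn) hε.le
  refine (hgreen _ x ((n : ℝ) ^ ε) ((n : ℝ) ^ ε * (n : ℝ) ^ (-(α * s))) (by positivity)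
    (by positivity) fun R hR hRn => (hcount x hx R hR hRn).trans_eq (by ring)).trans
    (ENNReal.ofReal_le_ofReal ?_)
  have := greenConst_pos d
  have hexp : (n : ℝ) ^ ε * (n : ℝ) ^ (-(α * s)) * (n : ℝ) ^ (1 + d * ε)
      = (n : ℝ) ^ (1 - α * s + (d + 1) * ε) := by
    rw [← Real.rpow_add hn0, ← Real.rpow_add hn0]; ring_nf
  rw [hexp, Real.rpow_zero, add_right_comm]
  gcongr
  linarith

-- Near the origin there are no high sites at all: a box that contains one has `n ^ (α * s)`
-- bounded by its volume, so that the term `1` in `HasSparseHighSites` is superfluous.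
theorem HasSparseHighSites.exists_card_highSites_zero_le {α s ε : ℝ} (hα : 0 < α) (hε : 0 < ε)
    (hz : HasSparseHighSites z α s ε) (hgrowth : HasPolynomialGrowth z (d / α + ε)) :
    ∃ C : ℝ, 0 ≤ C ∧ ∀ᶠ n : ℕ in atTop, ∀ R : ℕ, 1 ≤ R → R ≤ n →
      ((highSites z ((n : ℝ) ^ s) 0 R).card : ℝ)
        ≤ C * (n : ℝ) ^ (ε + α * ε - α * s) * (R : ℝ) ^ d := by
  obtain ⟨C, hC, hgrowth⟩ := hgrowth
  refine ⟨C ^ α + 1, by positivity, ?_⟩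
  filter_upwards [hz, eventually_ge_atTop 1] with n hcount hn R hR hRn
  have hn0 : (0 : ℝ) < n := by exact_mod_cast hn
  have hR0 : (0 : ℝ) < R := by exact_mod_cast hR
  rcases (highSites z ((n : ℝ) ^ s) 0 R).eq_empty_or_nonempty with hempty | ⟨y, hy⟩
  · rw [hempty, Finset.card_empty, Nat.cast_zero]
    positivity
  obtain ⟨hyR, hzy⟩ := mem_highSites.mp hy
  have hvolume : (n : ℝ) ^ (α * s) ≤ C ^ α * (n : ℝ) ^ (α * ε) * (R : ℝ) ^ d := by
    calc (n : ℝ) ^ (α * s) = ((n : ℝ) ^ s) ^ α := by rw [← Real.rpow_mul hn0.le, mul_comm]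
      _ ≤ (C * (R : ℝ) ^ (d / α + ε)) ^ α := by
          gcongr
          exact hzy.le.trans (hgrowth R hR y hyR)
      _ = C ^ α * (R : ℝ) ^ (α * ε) * (R : ℝ) ^ d := by
          rw [Real.mul_rpow hC.le (by positivity), ← Real.rpow_mul hR0.le, mul_assoc,
            ← Real.rpow_natCast, ← Real.rpow_add hR0]
          congr 2; field_simp; ring
      _ ≤ C ^ α * (n : ℝ) ^ (α * ε) * (R : ℝ) ^ d := by gcongr
  have hone : 1 ≤ (n : ℝ) ^ (-(α * s)) * (C ^ α * (n : ℝ) ^ (α * ε) * (R : ℝ) ^ d) := by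
    rwa [Real.rpow_neg hn0.le, inv_mul_eq_div, one_le_div (by positivity)]
  have hpow : (1 : ℝ) ≤ (n : ℝ) ^ (α * ε) := Real.one_le_rpow (by exact_mod_cast hn) (by positivity)
  calc ((highSites z ((n : ℝ) ^ s) 0 R).card : ℝ)
      ≤ (n : ℝ) ^ ε * (1 + (n : ℝ) ^ (-(α * s)) * (R : ℝ) ^ d) :=
        hcount 0 (mem_box.mpr fun i => by simp) R hR hRn
    _ ≤ (n : ℝ) ^ ε * ((n : ℝ) ^ (-(α * s)) * (C ^ α * (n : ℝ) ^ (α * ε) * (R : ℝ) ^ d)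
          + (n : ℝ) ^ (-(α * s)) * (R : ℝ) ^ d * (n : ℝ) ^ (α * ε)) :=
        mul_le_mul_of_nonneg_left (add_le_add hone (le_mul_of_one_le_right (by positivity) hpow))
          (by positivity)
    _ = (C ^ α + 1) * (n : ℝ) ^ (ε + α * ε - α * s) * (R : ℝ) ^ d := by
        rw [sub_eq_add_neg, Real.rpow_add hn0, Real.rpow_add hn0]; ring

theorem IsCTSRW.eventually_measure_exists_mem_highSites_le {Ω : Type*} [MeasurableSpace Ω]
    {P : (Fin d → ℤ) → Measure Ω} {S : ℝ → Ω → (Fin d → ℤ)} (hS : IsCTSRW d P S) (hd : 3 ≤ d)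
    {α s ε κ : ℝ} (hα : 0 < α) (hε : 0 < ε) (hε4 : ε ≤ 1 / 4) (hκ : (d + 1) * ε + α * ε < κ)
    (hz : HasSparseHighSites z α s ε) (hgrowth : HasPolynomialGrowth z (d / α + ε)) :
    ∀ᶠ n : ℕ in atTop,
      P 0 {ω | ∃ u : ℝ, 0 ≤ u ∧ u < n ∧ S u ω ∈ highSites z ((n : ℝ) ^ s) 0 n}
        ≤ ENNReal.ofReal ((n : ℝ) ^ (1 - α * s + κ)) := by
  obtain ⟨C, hC, hcount⟩ := hz.exists_card_highSites_zero_le hα hε hgrowth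
  set D := 1 - α * s + ((d + 1) * ε + α * ε) with hD
  filter_upwards [hcount, eventually_gt_atTop 0,
    eventually_sum_heatSemigroup_highSites_le hd z hε hε4 D,
    eventually_mul_rpow_le (Real.exp (2 * d) * (greenConst d * (C + 1)))
      (by linarith : D < 1 - α * s + κ)] with n hcount hn hgreen hconst
  have hn0 : (0 : ℝ) < n := by exact_mod_cast hn
  refine (hS.measure_exists_lt_mem_le_sum_heatSemigroup 0 n _).trans ?_
  refine (mul_le_mul_right (hgreen _ 0 0 (C * (n : ℝ) ^ (ε + α * ε - α * s)) le_rfl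
    (by positivity) fun R hR hRn => (hcount R hR hRn).trans_eq (zero_add _).symm) _).trans ?_
  rw [← ENNReal.ofReal_mul (by positivity)]
  refine ENNReal.ofReal_le_ofReal (Eq.trans_le ?_ hconst)
  have hexp : (n : ℝ) ^ (ε + α * ε - α * s) * (n : ℝ) ^ (1 + d * ε) = (n : ℝ) ^ D := by
    rw [← Real.rpow_add hn0, hD]; ring_nf
  rw [mul_assoc C, hexp]
  ring

end HighSites

/-! ### The upper bound -/

/-- The scenery inside `[-n, n]^d`, with the values above `h` replaced by zero. -/
noncomputable def lowScenery {d : ℕ} (z : (Fin d → ℤ) → ℝ) (h : ℝ) (n : ℕ) : (Fin d → ℤ) → ℝ :=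
  {y | y ∈ box 0 n ∧ z y ≤ h}.indicator z

/-- The scenery outside `[-n, n]^d`. -/
noncomputable def farScenery {d : ℕ} (z : (Fin d → ℤ) → ℝ) (n : ℕ) : (Fin d → ℤ) → ℝ :=
  {y | y ∉ box 0 n}.indicator z

/-- The parameters of the upper bound at time `n`: the heights below `n ^ ρ = n ^ ((K + 1) * η)` are
cut into the levels `n ^ (j * η)` with `j ≤ K`, and `ε` is the error allowed in the exponents of
the densities of these levels. -/
structure IsFineMesh (d K : ℕ) (α ρ η ε : ℝ) : Prop where
  tail_pos : 0 < α
  mesh_pos : 0 < η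
  error_pos : 0 < ε
  error_le : ε ≤ 1 / 4
  eq_mul : ρ = (K + 1) * η
  one_add_le : 1 + 4 * η ≤ ρ
  one_add_le_mul : 1 + 4 * η + 2 * α * η ≤ α * ρ
  mul_error_le : (d + 2) * ε ≤ η / 4
  tail_mul_error_le : α * ε ≤ η / 4

section LowScenery

variable {d : ℕ} {z : (Fin d → ℤ) → ℝ} {h : ℝ} {n : ℕ} {y : Fin d → ℤ}

theorem lowScenery_nonneg (hz : ∀ y, 0 ≤ z y) (h : ℝ) (n : ℕ) (y : Fin d → ℤ) :
    0 ≤ lowScenery z h n y :=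
  indicator_nonneg (fun y _ => hz y) y

theorem lowScenery_le (hh : 0 ≤ h) (n : ℕ) (y : Fin d → ℤ) : lowScenery z h n y ≤ h :=
  indicator_apply_le' (fun hy => hy.2) fun _ => hh

theorem exists_rpow_lt_le_rpow {K : ℕ} {η a x : ℝ} (hx : 1 < x) (hxK : x ≤ a ^ (K * η)) :
    ∃ j < K, a ^ (j * η) < x ∧ x ≤ a ^ ((j + 1) * η) := by
  induction K with
  | zero => simp only [CharP.cast_eq_zero, zero_mul, Real.rpow_zero] at hxK; linarith
  | succ K ih =>
    rcases le_or_gt x (a ^ (K * η)) with hle | hlt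
    · obtain ⟨j, hj, hjx⟩ := ih hle
      exact ⟨j, hj.trans K.lt_succ_self, hjx⟩
    · exact ⟨K, K.lt_succ_self, hlt, by exact_mod_cast hxK⟩

theorem ofReal_lowScenery_le (z : (Fin d → ℤ) → ℝ) (η : ℝ) (K n : ℕ) (y : Fin d → ℤ) :
    ENNReal.ofReal (lowScenery z ((n : ℝ) ^ (K * η)) n y)
      ≤ 1 + 1 * ∑ j ∈ Finset.range K, ENNReal.ofReal ((n : ℝ) ^ ((j + 1) * η))
          * (highSites z ((n : ℝ) ^ (j * η)) 0 n : Set (Fin d → ℤ)).indicator 1 y := by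
  by_cases hy : y ∈ box 0 n ∧ z y ≤ (n : ℝ) ^ (K * η)
  swap
  · simp [lowScenery, hy]
  rw [lowScenery, indicator_of_mem (s := {y | y ∈ box 0 n ∧ z y ≤ (n : ℝ) ^ (K * η)}) hy]
  rcases le_or_gt (z y) 1 with hle | hlt
  · exact (ENNReal.ofReal_le_one.mpr hle).trans le_self_add
  obtain ⟨j, hjK, hjz, hzj⟩ := exists_rpow_lt_le_rpow hlt hy.2
  have hmem : y ∈ (highSites z ((n : ℝ) ^ (j * η)) 0 n : Set (Fin d → ℤ)) :=
    mem_highSites.mpr ⟨hy.1, hjz⟩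
  rw [one_mul]
  refine le_add_left ((ENNReal.ofReal_le_ofReal hzj).trans (le_trans ?_
    (Finset.single_le_sum (fun _ _ => zero_le) (Finset.mem_range.mpr hjK))))
  rw [indicator_of_mem hmem, Pi.one_apply, mul_one]

end LowScenery

section UpperBound

variable {d K : ℕ} {α ρ η ε : ℝ} {z : (Fin d → ℤ) → ℝ}

theorem IsFineMesh.rpow_mul_green_le (hmesh : IsFineMesh d K α ρ η ε) {n j : ℕ} (hn : 1 ≤ n)
    (hj : j < K) {G : ℝ} (hG : 0 ≤ G) :
    (n : ℝ) ^ ((j + 1) * η)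
        * (G * (2 * (n : ℝ) ^ ε + (n : ℝ) ^ (1 - α * (j * η) + (d + 1) * ε)))
      ≤ 3 * G * (n : ℝ) ^ (ρ - η + η / 4) := by
  obtain ⟨-, hη, hε, -, hρ, hρ1, hαρ, hdε, -⟩ := hmesh
  have hn1 : (1 : ℝ) ≤ n := by exact_mod_cast hn
  have hn0 : (0 : ℝ) < n := by linarith
  have hdε0 : 0 ≤ d * ε := by positivity
  have hjη : (j + 1) * η ≤ ρ - η := by
    have : (j : ℝ) + 1 ≤ K := by exact_mod_cast hj
    nlinarith
  have hj0 : 0 ≤ j * η := by positivity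
  have hnear : (n : ℝ) ^ ((j + 1) * η) * (n : ℝ) ^ ε ≤ (n : ℝ) ^ (ρ - η + η / 4) := by
    rw [← Real.rpow_add hn0]
    exact Real.rpow_le_rpow_of_exponent_le hn1 (by linarith)
  have hfar : (n : ℝ) ^ ((j + 1) * η) * (n : ℝ) ^ (1 - α * (j * η) + (d + 1) * ε)
      ≤ (n : ℝ) ^ (ρ - η + η / 4) := by
    rw [← Real.rpow_add hn0]
    refine Real.rpow_le_rpow_of_exponent_le hn1 ?_
    rcases le_or_gt 1 α with h | h
    · nlinarith [mul_nonneg (by linarith : 0 ≤ α - 1) hj0]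
    · nlinarith [mul_nonneg (by linarith : 0 ≤ 1 - α) (by linarith : 0 ≤ ρ - 2 * η - j * η)]
  calc _ = G * (2 * ((n : ℝ) ^ ((j + 1) * η) * (n : ℝ) ^ ε)
        + (n : ℝ) ^ ((j + 1) * η) * (n : ℝ) ^ (1 - α * (j * η) + (d + 1) * ε)) := by ring
    _ ≤ G * (2 * (n : ℝ) ^ (ρ - η + η / 4) + (n : ℝ) ^ (ρ - η + η / 4)) := by gcongr
    _ = _ := by ring

variable {Ω : Type*} [MeasurableSpace Ω] {P : (Fin d → ℤ) → Measure Ω} {S : ℝ → Ω → (Fin d → ℤ)}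

theorem IsCTSRW.sum_heatSemigroup_lowScenery_le (hS : IsCTSRW d P S)
    (hmesh : IsFineMesh d K α ρ η ε) {n : ℕ} (hn : 1 ≤ n) {x : Fin d → ℤ} {G : ℝ} (hG : 0 ≤ G)
    (hgreen : ∀ j ∈ Finset.range K, ∑ k ∈ Finset.range n, heatSemigroup d ((k : ℝ) + 1)
        ((highSites z ((n : ℝ) ^ (j * η)) 0 n : Set (Fin d → ℤ)).indicator 1) x
      ≤ ENNReal.ofReal (G * (2 * (n : ℝ) ^ ε + (n : ℝ) ^ (1 - α * (j * η) + (d + 1) * ε)))) :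
    ∑ k ∈ Finset.range n, heatSemigroup d ((k : ℝ) + 1)
        (fun y => ENNReal.ofReal (lowScenery z ((n : ℝ) ^ (K * η)) n y)) x
      ≤ ENNReal.ofReal ((1 + K * (3 * G)) * (n : ℝ) ^ (ρ - η + η / 4)) := by
  have hlevel (k : ℕ) : heatSemigroup d ((k : ℝ) + 1)
        (fun y => ENNReal.ofReal (lowScenery z ((n : ℝ) ^ (K * η)) n y)) x
      ≤ 1 + ∑ j ∈ Finset.range K, ENNReal.ofReal ((n : ℝ) ^ ((j + 1) * η))
          * heatSemigroup d ((k : ℝ) + 1)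
            ((highSites z ((n : ℝ) ^ (j * η)) 0 n : Set (Fin d → ℤ)).indicator 1) x := by
    refine (heatSemigroup_mono (ofReal_lowScenery_le z η K n) x).trans_eq ?_
    refine (hS.heatSemigroup_one_add_mul_sum x (Nat.cast_add_one_pos k).le 1 _ _).trans ?_
    rw [one_mul]
    congr! 2 with j
    simp only [heatSemigroup, ← ENNReal.tsum_mul_left]
    exact tsum_congr fun y => mul_left_comm _ _ _
  have hn1 : (1 : ℝ) ≤ n := by exact_mod_cast hn
  have htime : (n : ℝ) ≤ (n : ℝ) ^ (ρ - η + η / 4) :=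
    Real.self_le_rpow_of_one_le hn1 (by linarith [hmesh.one_add_le, hmesh.mesh_pos])
  calc _ ≤ _ := Finset.sum_le_sum fun k _ => hlevel k
    _ = n + ∑ j ∈ Finset.range K, ENNReal.ofReal ((n : ℝ) ^ ((j + 1) * η))
          * ∑ k ∈ Finset.range n, heatSemigroup d ((k : ℝ) + 1)
            ((highSites z ((n : ℝ) ^ (j * η)) 0 n : Set (Fin d → ℤ)).indicator 1) x := by
        rw [Finset.sum_add_distrib, Finset.sum_comm]
        simp [Finset.mul_sum]
    _ ≤ n + ∑ _j ∈ Finset.range K, ENNReal.ofReal (3 * G * (n : ℝ) ^ (ρ - η + η / 4)) := by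
        gcongr with j hj
        refine (mul_le_mul_right (hgreen j hj) _).trans ?_
        rw [← ENNReal.ofReal_mul (by positivity)]
        exact ENNReal.ofReal_le_ofReal
          (hmesh.rpow_mul_green_le hn (Finset.mem_range.mp hj) hG)
    _ = ENNReal.ofReal (n + K * (3 * G * (n : ℝ) ^ (ρ - η + η / 4))) := by
        rw [ENNReal.ofReal_add (by positivity) (by positivity), ENNReal.ofReal_natCast,
          ENNReal.ofReal_mul K.cast_nonneg, ENNReal.ofReal_natCast]
        simp
    _ ≤ _ := ENNReal.ofReal_le_ofReal (by linarith)

theorem IsCTSRW.eventually_two_mul_sum_heatSemigroup_lowScenery_le_one (hS : IsCTSRW d P S)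
    (hd : 3 ≤ d) (hmesh : IsFineMesh d K α ρ η ε)
    (hz : ∀ j < K, HasSparseHighSites z α (j * η) ε) :
    ∀ᶠ n : ℕ in atTop, ∀ x ∈ box (0 : Fin d → ℤ) n,
      2 * ENNReal.ofReal ((n : ℝ) ^ (-ρ + η / 2)) * ∑ k ∈ Finset.range n,
        heatSemigroup d ((k : ℝ) + 1)
          (fun y => ENNReal.ofReal (lowScenery z ((n : ℝ) ^ (K * η)) n y)) x ≤ 1 := by
  have hgreen := (Filter.eventually_all_finset (Finset.range K)).mpr fun j hj =>
    (hz j (Finset.mem_range.mp hj)).eventually_sum_heatSemigroup_le hd hmesh.error_pos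
      hmesh.error_le
  filter_upwards [hgreen, eventually_ge_atTop 1,
    eventually_mul_rpow_le (2 * (1 + K * (3 * greenConst d)))
      (by linarith [hmesh.mesh_pos] : ρ - η + η / 4 < ρ - η / 2)] with n hgreen hn hconst x hx
  have hn0 : (0 : ℝ) < n := by exact_mod_cast hn
  have hG := (greenConst_pos d).le
  calc _ ≤ 2 * ENNReal.ofReal ((n : ℝ) ^ (-ρ + η / 2))
        * ENNReal.ofReal ((1 + K * (3 * greenConst d)) * (n : ℝ) ^ (ρ - η + η / 4)) := by
        gcongr
        exact hS.sum_heatSemigroup_lowScenery_le hmesh hn hG fun j hj => hgreen j hj x hx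
    _ = ENNReal.ofReal ((n : ℝ) ^ (-ρ + η / 2)
        * (2 * (1 + K * (3 * greenConst d)) * (n : ℝ) ^ (ρ - η + η / 4))) := by
        rw [← ENNReal.ofReal_ofNat 2, ← ENNReal.ofReal_mul (by norm_num),
          ← ENNReal.ofReal_mul (by positivity)]
        congr 1; ring
    _ ≤ ENNReal.ofReal ((n : ℝ) ^ (-ρ + η / 2) * (n : ℝ) ^ (ρ - η / 2)) := by gcongr
    _ = 1 := by rw [← Real.rpow_add hn0]; simp

theorem IsCTSRW.eventually_measure_le_lintegral_lowScenery_le (hS : IsCTSRW d P S)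
    (hd : 3 ≤ d) (hmesh : IsFineMesh d K α ρ η ε) (hz0 : ∀ y, 0 ≤ z y)
    (hz : ∀ j < K, HasSparseHighSites z α (j * η) ε) {c : ℝ} (hc : 0 < c) (D : ℝ) :
    ∀ᶠ n : ℕ in atTop, P 0 {ω | ENNReal.ofReal (c * (n : ℝ) ^ ρ)
        ≤ ∫⁻ u in Ioc (0 : ℝ) n, ENNReal.ofReal (lowScenery z ((n : ℝ) ^ (K * η)) n (S u ω))}
      ≤ ENNReal.ofReal ((n : ℝ) ^ D) := by
  have hη := hmesh.mesh_pos
  filter_upwards [hS.eventually_two_mul_sum_heatSemigroup_lowScenery_le_one hd hmesh hz,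
    eventually_ge_atTop 1,
    eventually_mul_rpow_mul_exp_le 3 1 D (half_pos hη) (half_pos hc)] with n hgreen hn hexp
  have hn1 : (1 : ℝ) ≤ n := by exact_mod_cast hn
  have hn0 : (0 : ℝ) < n := by linarith
  have hcM : (n : ℝ) ^ (-ρ + η / 2) * (n : ℝ) ^ (K * η) ≤ 1 := by
    rw [← Real.rpow_add hn0]
    exact Real.rpow_le_one_of_one_le_of_nonpos hn1 (by rw [hmesh.eq_mul]; linarith)
  refine (hS.measure_le_lintegral_le_exp 0 n (by positivity) (by positivity) (by positivity)
    (lowScenery_nonneg hz0 _ n) (lowScenery_le (by positivity) n) hcM fun y hy =>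
      hgreen y (mem_of_indicator_ne_zero hy).1).trans (ENNReal.ofReal_le_ofReal ?_)
  refine le_trans ?_ hexp
  have harg : (n : ℝ) ^ (-ρ + η / 2) * (c * (n : ℝ) ^ ρ) / 2 = c / 2 * (n : ℝ) ^ (η / 2) := by
    rw [show η / 2 = (-ρ + η / 2) + ρ by ring, Real.rpow_add hn0 (-ρ + η / 2) ρ]
    ring_nf
  rw [harg, Real.rpow_one]
  gcongr
  nlinarith

end UpperBound

section PolynomialGrowth

variable {d : ℕ} {q : ℝ} {z : (Fin d → ℤ) → ℝ}

theorem HasPolynomialGrowth.exists_le_mul_pow (hz : HasPolynomialGrowth z q) :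
    ∃ (C : ℝ) (Q : ℕ), 0 < C ∧ ∀ R : ℕ, 1 ≤ R → ∀ y ∈ box 0 R, z y ≤ C * (R : ℝ) ^ Q := by
  obtain ⟨C, hC, hz⟩ := hz
  refine ⟨C, ⌈q⌉₊, hC, fun R hR y hy => (hz R hR y hy).trans ?_⟩
  gcongr
  rw [← Real.rpow_natCast]
  exact Real.rpow_le_rpow_of_exponent_le (by exact_mod_cast hR) (Nat.le_ceil q)

theorem HasPolynomialGrowth.exists_le_mul_sum_cosh (hz : HasPolynomialGrowth z q) (hd : 1 ≤ d)
    {s : ℝ} (hs : 0 < s) :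
    ∃ B : ℝ, 0 ≤ B ∧ ∀ y, z y ≤ B * ∑ i, 2 * Real.cosh (s⁻¹ * y i) := by
  obtain ⟨C, Q, hC, hz⟩ := hz.exists_le_mul_pow
  refine ⟨C + C * ((2 * s) ^ Q * Q.factorial * Real.exp (-((0 : ℕ) / s / 2))), by positivity,
    fun y => ?_⟩
  have hsum : 1 ≤ ∑ i, 2 * Real.cosh (s⁻¹ * y i) := by
    calc (1 : ℝ) ≤ ∑ _i : Fin d, 1 := by simpa using hd
      _ ≤ ∑ i, 2 * Real.cosh (s⁻¹ * y i) :=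
        Finset.sum_le_sum fun i _ => by linarith [Real.one_le_cosh (s⁻¹ * y i)]
  rw [add_mul]
  by_cases hy : y ∈ box 0 0
  · have hy1 : y ∈ box 0 1 := mem_box.mpr fun i => (mem_box.mp hy i).trans (by simp)
    have hC1 := hz 1 le_rfl y hy1
    rw [Nat.cast_one, one_pow, mul_one] at hC1
    exact le_add_of_le_of_nonneg (hC1.trans (le_mul_of_one_le_right hC.le hsum)) (by positivity)
  · exact le_add_of_nonneg_of_le (by positivity) (le_exp_neg_mul_sum_cosh hC.le hz hs hy)

variable {Ω : Type*} [MeasurableSpace Ω] {P : (Fin d → ℤ) → Measure Ω} {S : ℝ → Ω → (Fin d → ℤ)}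

theorem IsCTSRW.measurable_setLIntegral (hS : IsCTSRW d P S) (f : (Fin d → ℤ) → ℝ≥0∞)
    (I : Set ℝ) : Measurable fun ω => ∫⁻ u in I, f (S u ω) :=
  (hS.measurable_comp f).lintegral_prod_left'

theorem IsCTSRW.ae_lintegral_ne_top (hS : IsCTSRW d P S) (hd : 1 ≤ d)
    (hz : HasPolynomialGrowth z q) {n : ℕ} (hn : 1 ≤ n) :
    ∀ᵐ ω ∂P 0, ∫⁻ u in Ioc (0 : ℝ) n, ENNReal.ofReal (z (S u ω)) ≠ ∞ := by
  obtain ⟨B, hB, hzB⟩ := hz.exists_le_mul_sum_cosh hd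
    (Real.sqrt_pos.mpr (show (0 : ℝ) < n by exact_mod_cast hn))
  have hmean := hS.lintegral_lintegral_le_of_le_sum_cosh hB hn
    (f := fun y => ENNReal.ofReal (z y)) fun y => ENNReal.ofReal_le_ofReal (hzB y)
  filter_upwards [ae_lt_top (hS.measurable_setLIntegral (fun y => ENNReal.ofReal (z y)) _)
    (ne_top_of_le_ne_top ENNReal.ofReal_ne_top hmean)] with ω hω using hω.ne

theorem IsCTSRW.eventually_lintegral_farScenery_le (hS : IsCTSRW d P S)
    (hz : HasPolynomialGrowth z q) (D : ℝ) :
    ∀ᶠ n : ℕ in atTop, ∫⁻ ω, (∫⁻ u in Ioc (0 : ℝ) n,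
        ENNReal.ofReal (farScenery z n (S u ω))) ∂P 0
      ≤ ENNReal.ofReal ((n : ℝ) ^ D) := by
  obtain ⟨C, Q, hC, hz⟩ := hz.exists_le_mul_pow
  filter_upwards [eventually_ge_atTop 1, eventually_mul_rpow_mul_exp_le
    (C * (2 ^ Q * Q.factorial) * (d * (2 * Real.exp (2 * d)))) (1 + Q / 2) D
    one_half_pos one_half_pos] with n hn hexp
  have hn0 : (0 : ℝ) < n := by exact_mod_cast hn
  refine (hS.lintegral_lintegral_le_of_le_sum_cosh
    (B := C * ((2 * √n) ^ Q * Q.factorial * Real.exp (-(n / √n / 2)))) (by positivity) hn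
    (f := fun y => ENNReal.ofReal (farScenery z n y)) fun y => ?_).trans
    (ENNReal.ofReal_le_ofReal (Eq.trans_le ?_ hexp))
  · by_cases hy : y ∈ box 0 n
    · simp [farScenery, hy]
    · rw [farScenery, indicator_of_mem (s := {y | y ∉ box 0 n}) hy]
      exact ENNReal.ofReal_le_ofReal
        (le_exp_neg_mul_sum_cosh hC.le hz (Real.sqrt_pos.mpr hn0) hy)
  · have hpow : (√(n : ℝ)) ^ Q = (n : ℝ) ^ ((Q : ℝ) / 2) := by
      rw [Real.sqrt_eq_rpow, ← Real.rpow_natCast, ← Real.rpow_mul hn0.le]; ring_nf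
    rw [mul_pow, hpow, Real.div_sqrt, Real.rpow_add hn0, Real.rpow_one, Real.sqrt_eq_rpow]
    ring_nf

theorem IsCTSRW.eventually_measure_le_lintegral_farScenery_le (hS : IsCTSRW d P S)
    (hz : HasPolynomialGrowth z q) {c : ℝ} (hc : 0 < c) (ρ D : ℝ) :
    ∀ᶠ n : ℕ in atTop, P 0 {ω | ENNReal.ofReal (c * (n : ℝ) ^ ρ) ≤ ∫⁻ u in Ioc (0 : ℝ) n,
        ENNReal.ofReal (farScenery z n (S u ω))}
      ≤ ENNReal.ofReal ((n : ℝ) ^ D) := by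
  filter_upwards [hS.eventually_lintegral_farScenery_le hz (ρ + (D - 1)),
    eventually_gt_atTop 0, eventually_mul_rpow_le c⁻¹ (sub_one_lt D)] with n hmean hn hconst
  have hn0 : (0 : ℝ) < n := by exact_mod_cast hn
  have hT : 0 < c * (n : ℝ) ^ ρ := by positivity
  refine (meas_ge_le_lintegral_div
    (hS.measurable_setLIntegral (fun y => ENNReal.ofReal (farScenery z n y)) _).aemeasurable
    (ENNReal.ofReal_pos.mpr hT).ne' ENNReal.ofReal_ne_top).trans
    ((ENNReal.div_le_div_right hmean _).trans ?_)
  rw [← ENNReal.ofReal_div_of_pos hT]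
  refine ENNReal.ofReal_le_ofReal (Eq.trans_le ?_ hconst)
  rw [Real.rpow_add hn0]
  field_simp

end PolynomialGrowth

section UpperBound

variable {d : ℕ} {z : (Fin d → ℤ) → ℝ} {Ω : Type*} [MeasurableSpace Ω]
  {P : (Fin d → ℤ) → Measure Ω} {S : ℝ → Ω → (Fin d → ℤ)}

theorem ofReal_le_lowScenery_add_farScenery {h : ℝ} {n : ℕ} {y : Fin d → ℤ}
    (hy : y ∉ highSites z h 0 n) :
    ENNReal.ofReal (z y) ≤ ENNReal.ofReal (lowScenery z h n y)
      + ENNReal.ofReal (farScenery z n y) := by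
  rw [mem_highSites, not_and, not_lt] at hy
  by_cases hbox : y ∈ box 0 n
  · rw [lowScenery, indicator_of_mem (s := {y | y ∈ box 0 n ∧ z y ≤ h}) ⟨hbox, hy hbox⟩]
    exact le_self_add
  · rw [farScenery, indicator_of_mem (s := {y | y ∉ box 0 n}) hbox]
    exact le_add_self

theorem IsCTSRW.le_lintegral_low_or_le_lintegral_far (hS : IsCTSRW d P S) {h T : ℝ}
    (hT : 0 ≤ T) {n : ℕ} {ω : Ω}
    (hω : ENNReal.ofReal T ≤ ∫⁻ u in Ioc (0 : ℝ) n, ENNReal.ofReal (z (S u ω)))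
    (havoid : ¬∃ u : ℝ, 0 ≤ u ∧ u < n ∧ S u ω ∈ highSites z h 0 n) :
    ENNReal.ofReal (T / 2) ≤ ∫⁻ u in Ioc (0 : ℝ) n, ENNReal.ofReal (lowScenery z h n (S u ω)) ∨
    ENNReal.ofReal (T / 2) ≤ ∫⁻ u in Ioc (0 : ℝ) n,
      ENNReal.ofReal (farScenery z n (S u ω)) := by
  have hsplit : ∫⁻ u in Ioc (0 : ℝ) n, ENNReal.ofReal (z (S u ω))
      ≤ (∫⁻ u in Ioc (0 : ℝ) n, ENNReal.ofReal (lowScenery z h n (S u ω)))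
        + ∫⁻ u in Ioc (0 : ℝ) n,
          ENNReal.ofReal (farScenery z n (S u ω)) := by
    have hmeas : Measurable fun u => ENNReal.ofReal (lowScenery z h n (S u ω)) :=
      (hS.measurable_comp fun y => ENNReal.ofReal (lowScenery z h n y)).comp
        (measurable_id.prodMk measurable_const)
    rw [← lintegral_add_left hmeas]
    simp only [← setLIntegral_congr Ioo_ae_eq_Ioc]
    exact setLIntegral_mono' measurableSet_Ioo fun u hu =>
      ofReal_le_lowScenery_add_farScenery fun hmem =>
        havoid ⟨u, hu.1.le, hu.2, hmem⟩
  by_contra! hlt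
  refine (hω.trans hsplit).not_gt ((ENNReal.add_lt_add hlt.1 hlt.2).trans_eq ?_)
  rw [← ENNReal.ofReal_add (by positivity) (by positivity), add_halves]

theorem IsCTSRW.eventually_measure_le_lintegral_le (hS : IsCTSRW d P S) (hd : 3 ≤ d) {K : ℕ}
    {α ρ η ε : ℝ} (hmesh : IsFineMesh d K α ρ η ε) (hz0 : ∀ y, 0 ≤ z y)
    (hz : ∀ j ≤ K, HasSparseHighSites z α (j * η) ε) (hgrowth : HasPolynomialGrowth z (d / α + ε))
    {c : ℝ} (hc : 0 < c) :
    ∀ᶠ n : ℕ in atTop, P 0 {ω | ENNReal.ofReal (c * (n : ℝ) ^ ρ)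
        ≤ ∫⁻ u in Ioc (0 : ℝ) n, ENNReal.ofReal (z (S u ω))}
      ≤ ENNReal.ofReal ((n : ℝ) ^ (1 - α * ρ + (α + 2) * η)) := by
  have hη := hmesh.mesh_pos
  set D := 1 - α * ρ + (α + 1) * η with hD
  have hhit := hS.eventually_measure_exists_mem_highSites_le hd (κ := η) hmesh.tail_pos
    hmesh.error_pos hmesh.error_le
    (by linarith [hmesh.mul_error_le, hmesh.tail_mul_error_le, hmesh.error_pos])
    (hz K le_rfl) hgrowth
  rw [show 1 - α * (K * η) + η = D by rw [hD, hmesh.eq_mul]; ring] at hhit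
  filter_upwards [hhit,
    hS.eventually_measure_le_lintegral_lowScenery_le hd hmesh hz0 (fun j hj => hz j hj.le)
      (half_pos hc) D,
    hS.eventually_measure_le_lintegral_farScenery_le hgrowth (half_pos hc) ρ D,
    eventually_mul_rpow_le 3 (by linarith : D < 1 - α * ρ + (α + 2) * η)] with n hhit hlow hfar h3
  rw [div_mul_eq_mul_div] at hlow hfar
  calc _ ≤ P 0 (_ ∪ (_ ∪ _)) := measure_mono fun ω hω => or_iff_not_imp_left.mpr
        (hS.le_lintegral_low_or_le_lintegral_far (by positivity) hω)
    _ ≤ _ + (_ + _) := (measure_union_le _ _).trans (add_le_add_right (measure_union_le _ _) _)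
    _ ≤ ENNReal.ofReal ((n : ℝ) ^ D)
          + (ENNReal.ofReal ((n : ℝ) ^ D) + ENNReal.ofReal ((n : ℝ) ^ D)) :=
        add_le_add hhit (add_le_add hlow hfar)
    _ ≤ _ := by
        rw [← ENNReal.ofReal_add (by positivity) (by positivity),
          ← ENNReal.ofReal_add (by positivity) (by positivity)]
        exact ENNReal.ofReal_le_ofReal (by linarith)

end UpperBound

/-! ### The lower bound -/

/-- The time in `(t, t + 1]` at which the path `S · ω` is at the site it occupies at time `t`. -/
noncomputable def holdingTime {d : ℕ} {Ω : Type*} (S : ℝ → Ω → (Fin d → ℤ)) (t : ℝ) (ω : Ω) :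
    ℝ≥0∞ :=
  volume.restrict (Ioc t (t + 1)) {u | S u ω = S t ω}

/-- The event that at time `t` the path is in `B`, at a site where it stays for a time `δ` at
least. -/
def longStay {d : ℕ} {Ω : Type*} (S : ℝ → Ω → (Fin d → ℤ)) (B : Finset (Fin d → ℤ)) (δ t : ℝ) :
    Set Ω :=
  {ω | S t ω ∈ B} ∩ {ω | ENNReal.ofReal δ ≤ holdingTime S t ω}

theorem setLIntegral_le_mul_add_measure_inter {Ω : Type*} [MeasurableSpace Ω] {μ : Measure Ω}
    {W : Ω → ℝ≥0∞} (hW : Measurable W) (hW1 : ∀ ω, W ω ≤ 1) (A : Set Ω) (δ : ℝ≥0∞) :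
    ∫⁻ ω in A, W ω ∂μ ≤ δ * μ A + μ (A ∩ {ω | δ ≤ W ω}) := by
  have hmeas : MeasurableSet {ω | δ ≤ W ω} := measurableSet_le measurable_const hW
  calc ∫⁻ ω in A, W ω ∂μ ≤ ∫⁻ ω in A, (δ + {ω | δ ≤ W ω}.indicator 1 ω) ∂μ := by
        refine lintegral_mono fun ω => ?_
        rcases le_or_gt δ (W ω) with h | h
        · rw [indicator_of_mem (s := {ω | δ ≤ W ω}) h]
          exact (hW1 ω).trans le_add_self
        · exact h.le.trans le_self_add
    _ = δ * μ A + μ (A ∩ {ω | δ ≤ W ω}) := by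
        rw [lintegral_add_left measurable_const, setLIntegral_const,
          lintegral_indicator_one hmeas, Measure.restrict_apply hmeas, inter_comm]

theorem sq_lintegral_le_lintegral_sq_mul_measure {Ω : Type*} [MeasurableSpace Ω] {μ : Measure Ω}
    {M : Ω → ℝ≥0∞} (hM : Measurable M) :
    (∫⁻ ω, M ω ∂μ) ^ 2 ≤ (∫⁻ ω, M ω ^ 2 ∂μ) * μ {ω | M ω ≠ 0} := by
  have hmeas : MeasurableSet {ω | M ω ≠ 0} := (hM (measurableSet_singleton 0)).compl
  have hsupp (ω : Ω) : M ω * {ω | M ω ≠ 0}.indicator 1 ω = M ω := by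
    by_cases h : M ω = 0 <;> simp [h]
  have hind (ω : Ω) : {ω | M ω ≠ 0}.indicator (1 : Ω → ℝ≥0∞) ω ^ (2 : ℝ)
      = {ω | M ω ≠ 0}.indicator 1 ω := by
    by_cases h : M ω = 0 <;> simp [h]
  have hhoelder := ENNReal.lintegral_mul_le_Lp_mul_Lq μ Real.HolderConjugate.two_two
    hM.aemeasurable (measurable_one.indicator hmeas).aemeasurable (g := {ω | M ω ≠ 0}.indicator 1)
  simp only [Pi.mul_apply, hsupp, hind, lintegral_indicator_one hmeas] at hhoelder
  calc (∫⁻ ω, M ω ∂μ) ^ 2 ≤ _ := pow_le_pow_left' hhoelder 2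
    _ = (∫⁻ ω, M ω ^ 2 ∂μ) * μ {ω | M ω ≠ 0} := by
        rw [mul_pow, ← ENNReal.rpow_natCast, ← ENNReal.rpow_natCast, ← ENNReal.rpow_mul,
          ← ENNReal.rpow_mul]
        simp

theorem sq_sum_measure_le_lintegral_sq_mul_measure_biUnion {Ω ι : Type*} [MeasurableSpace Ω]
    {μ : Measure Ω} (I : Finset ι) {E : ι → Set Ω} (hE : ∀ k, MeasurableSet (E k)) :
    (∑ k ∈ I, μ (E k)) ^ 2
      ≤ (∫⁻ ω, (∑ k ∈ I, (E k).indicator 1 ω) ^ 2 ∂μ) * μ (⋃ k ∈ I, E k) := by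
  have hmeas (k : ι) : Measurable ((E k).indicator (1 : Ω → ℝ≥0∞)) :=
    measurable_one.indicator (hE k)
  calc (∑ k ∈ I, μ (E k)) ^ 2 = (∫⁻ ω, ∑ k ∈ I, (E k).indicator 1 ω ∂μ) ^ 2 := by
        rw [lintegral_finsetSum _ fun k _ => hmeas k]
        simp only [lintegral_indicator_one (hE _)]
    _ ≤ _ :=
        sq_lintegral_le_lintegral_sq_mul_measure (Finset.measurable_fun_sum _ fun k _ => hmeas k)
    _ ≤ _ := by
        refine mul_le_mul_right (measure_mono fun ω hω => ?_) _
        obtain ⟨k, hk, hωk⟩ := Finset.exists_ne_zero_of_sum_ne_zero hω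
        exact mem_biUnion hk (mem_of_indicator_ne_zero hωk)

theorem sum_sum_le_two_mul_sum_add_sum {n : ℕ} {I : Finset ℕ} (hI : I ⊆ Finset.range n)
    {g : ℕ → ℕ → ℝ≥0∞} (hsymm : ∀ k l, g k l = g l k) :
    ∑ k ∈ I, ∑ l ∈ I, g k l
      ≤ 2 * ∑ k ∈ I, (g k k + ∑ j ∈ Finset.range n, g k (k + (j + 1))) := by
  have hsplit (k l : ℕ) :
      g k l ≤ (if k ≤ l then g k l else 0) + (if l ≤ k then g l k else 0) := by
    rcases le_total k l with h | h
    · simp [h]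
    · simp [h, hsymm k l]
  have hupper (k : ℕ) : ∑ l ∈ I, (if k ≤ l then g k l else 0)
      ≤ g k k + ∑ j ∈ Finset.range n, g k (k + (j + 1)) := by
    rw [← Finset.sum_filter, add_comm]
    change _ ≤ ∑ j ∈ Finset.range n, g k (k + (j + 1)) + g k (k + 0)
    rw [← Finset.sum_range_succ' (fun j => g k (k + j)),
      ← Finset.sum_image (f := g k) (add_right_injective k).injOn]
    refine Finset.sum_le_sum_of_subset fun l hl => ?_
    obtain ⟨hl, hkl⟩ := Finset.mem_filter.mp hl
    have := Finset.mem_range.mp (hI hl)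
    exact Finset.mem_image.mpr ⟨l - k, Finset.mem_range.mpr (by lia), by lia⟩
  calc ∑ k ∈ I, ∑ l ∈ I, g k l
      ≤ ∑ k ∈ I, ∑ l ∈ I, ((if k ≤ l then g k l else 0) + (if l ≤ k then g l k else 0)) :=
        Finset.sum_le_sum fun k _ => Finset.sum_le_sum fun l _ => hsplit k l
    _ = 2 * ∑ k ∈ I, ∑ l ∈ I, (if k ≤ l then g k l else 0) := by
        simp only [Finset.sum_add_distrib]
        rw [Finset.sum_comm (f := fun k l => if l ≤ k then g l k else 0), two_mul]
    _ ≤ _ := by gcongr with k; exact hupper k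

namespace IsCTSRW

variable {d : ℕ} {Ω : Type*} [MeasurableSpace Ω] {P : (Fin d → ℤ) → Measure Ω}
  {S : ℝ → Ω → (Fin d → ℤ)} {t u : ℝ}

theorem measurableSet_eq (hS : IsCTSRW d P S) (t : ℝ) :
    MeasurableSet {p : ℝ × Ω | S p.1 p.2 = S t p.2} :=
  measurableSet_eq_fun hS.meas ((hS.measurable t).comp measurable_snd)

theorem measurable_holdingTime (hS : IsCTSRW d P S) (t : ℝ) : Measurable (holdingTime S t) :=
  measurable_measure_prodMk_right (hS.measurableSet_eq t)

theorem measurableSet_longStay (hS : IsCTSRW d P S) (B : Finset (Fin d → ℤ)) (δ t : ℝ) :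
    MeasurableSet (longStay S B δ t) :=
  (hS.measurableSet_mem t B).inter
    (measurableSet_le measurable_const (hS.measurable_holdingTime t))

theorem exp_neg_mul_measure_mem_le_measure_eq (hS : IsCTSRW d P S) (x : Fin d → ℤ)
    (B : Finset (Fin d → ℤ)) (ht : 0 ≤ t) (htu : t ≤ u) (hut : u ≤ t + 1) :
    ENNReal.ofReal (Real.exp (-(2 * d))) * P x {ω | S t ω ∈ B}
      ≤ (P x).restrict {ω | S t ω ∈ B} {ω | S u ω = S t ω} := by
  have hmeas (y : Fin d → ℤ) : MeasurableSet (S t ⁻¹' {y}) :=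
    hS.measurable t (measurableSet_singleton y)
  have heq : MeasurableSet {ω | S u ω = S t ω} :=
    measurableSet_eq_fun (hS.measurable u) (hS.measurable t)
  have hstay (y : Fin d → ℤ) : ENNReal.ofReal (Real.exp (-(2 * d))) * P x (S t ⁻¹' {y})
      ≤ (P x).restrict {ω | S u ω = S t ω} (S t ⁻¹' {y}) := by
    rw [Measure.restrict_apply (hmeas y)]
    refine (hS.exp_neg_mul_measure_path_mem_le x (n := 0) (t := fun _ => t) ht (fun i => i.elim0)
      htu hut (B := {v | v 0 = y}) (H := {y}) fun v hv => hv).trans (measure_mono fun ω hω => ?_)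
    exact ⟨hω.1, hω.2.trans hω.1.symm⟩
  calc _ = ∑ y ∈ B, ENNReal.ofReal (Real.exp (-(2 * d))) * P x (S t ⁻¹' {y}) := by
        rw [← Finset.mul_sum, sum_measure_preimage_singleton B fun y _ => hmeas y]; rfl
    _ ≤ ∑ y ∈ B, (P x).restrict {ω | S u ω = S t ω} (S t ⁻¹' {y}) :=
        Finset.sum_le_sum fun y _ => hstay y
    _ = (P x).restrict {ω | S t ω ∈ B} {ω | S u ω = S t ω} := by
        rw [sum_measure_preimage_singleton B fun y _ => hmeas y, Measure.restrict_apply heq,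
          Measure.restrict_apply (hS.measurable t B.measurableSet), inter_comm]; rfl

theorem exp_neg_mul_measure_mem_le_setLIntegral_holdingTime (hS : IsCTSRW d P S) (x : Fin d → ℤ)
    (B : Finset (Fin d → ℤ)) (ht : 0 ≤ t) :
    ENNReal.ofReal (Real.exp (-(2 * d))) * P x {ω | S t ω ∈ B}
      ≤ ∫⁻ ω in {ω | S t ω ∈ B}, holdingTime S t ω ∂P x := by
  have := hS.prob x
  calc ENNReal.ofReal (Real.exp (-(2 * d))) * P x {ω | S t ω ∈ B}
      = ∫⁻ _u in Ioc t (t + 1), ENNReal.ofReal (Real.exp (-(2 * d))) * P x {ω | S t ω ∈ B} := by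
        simp
    _ ≤ ∫⁻ u in Ioc t (t + 1), (P x).restrict {ω | S t ω ∈ B} {ω | S u ω = S t ω} :=
        setLIntegral_mono' measurableSet_Ioc fun u hu =>
          hS.exp_neg_mul_measure_mem_le_measure_eq x B ht hu.1.le hu.2
    _ = ∫⁻ ω in {ω | S t ω ∈ B}, holdingTime S t ω ∂P x :=
        (Measure.prod_apply (hS.measurableSet_eq t)).symm.trans
          (Measure.prod_apply_symm (hS.measurableSet_eq t))

theorem measure_mem_eq_heatSemigroup (hS : IsCTSRW d P S) (x : Fin d → ℤ) (ht : 0 ≤ t)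
    (B : Finset (Fin d → ℤ)) :
    P x {ω | S t ω ∈ B} = heatSemigroup d t ((B : Set (Fin d → ℤ)).indicator 1) x := by
  rw [← hS.lintegral_eq_heatSemigroup x ht]
  exact (lintegral_indicator_one (hS.measurableSet_mem t B)).symm

theorem half_exp_neg_mul_measure_mem_le_measure_longStay (hS : IsCTSRW d P S) (x : Fin d → ℤ)
    (B : Finset (Fin d → ℤ)) (ht : 0 ≤ t) :
    ENNReal.ofReal (Real.exp (-(2 * d)) / 2) * P x {ω | S t ω ∈ B}
      ≤ P x (longStay S B (Real.exp (-(2 * d)) / 2) t) := by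
  have := hS.prob x
  have hW1 (ω : Ω) : holdingTime S t ω ≤ 1 :=
    (measure_mono (subset_univ _)).trans_eq (by simp)
  have hsplit := (hS.exp_neg_mul_measure_mem_le_setLIntegral_holdingTime x B ht).trans
    (setLIntegral_le_mul_add_measure_inter (hS.measurable_holdingTime t) hW1 _
      (ENNReal.ofReal (Real.exp (-(2 * d)) / 2)))
  have hhalf : ENNReal.ofReal (Real.exp (-(2 * d)))
      = ENNReal.ofReal (Real.exp (-(2 * d)) / 2) + ENNReal.ofReal (Real.exp (-(2 * d)) / 2) := by
    rw [← ENNReal.ofReal_add (by positivity) (by positivity), add_halves]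
  rw [hhalf, add_mul] at hsplit
  exact (ENNReal.add_le_add_iff_left
    (ENNReal.mul_ne_top ENNReal.ofReal_ne_top (measure_ne_top _ _))).mp hsplit

theorem mul_holdingTime_le (hS : IsCTSRW d P S) (f : (Fin d → ℤ) → ℝ≥0∞) (t : ℝ) (ω : Ω) :
    f (S t ω) * holdingTime S t ω ≤ ∫⁻ u in Ioc t (t + 1), f (S u ω) := by
  have hmeas : MeasurableSet {u | S u ω = S t ω} :=
    (hS.measurableSet_eq t).preimage (measurable_id.prodMk measurable_const)
  calc f (S t ω) * holdingTime S t ω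
      = ∫⁻ u in Ioc t (t + 1), {u | S u ω = S t ω}.indicator (fun _ => f (S t ω)) u := by
        rw [lintegral_indicator_const hmeas, holdingTime]
    _ ≤ ∫⁻ u in Ioc t (t + 1), f (S u ω) := by
        refine lintegral_mono fun u => ?_
        refine indicator_apply_le' (fun hu => ?_) fun _ => zero_le
        rw [show S u ω = S t ω from hu]

theorem le_lintegral_of_mem_longStay (hS : IsCTSRW d P S) {z : (Fin d → ℤ) → ℝ}
    {B : Finset (Fin d → ℤ)} {h δ : ℝ} (hh : 0 ≤ h) (hB : ∀ y ∈ B, h ≤ z y) {n k : ℕ} (hk : k < n)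
    {ω : Ω} (hω : ω ∈ longStay S B δ k) :
    ENNReal.ofReal (h * δ) ≤ ∫⁻ u in Ioc (0 : ℝ) n, ENNReal.ofReal (z (S u ω)) :=
  calc ENNReal.ofReal (h * δ)
      ≤ ENNReal.ofReal (z (S k ω)) * holdingTime S k ω := by
        rw [ENNReal.ofReal_mul hh]
        exact mul_le_mul' (ENNReal.ofReal_le_ofReal (hB _ hω.1)) hω.2
    _ ≤ ∫⁻ u in Ioc (k : ℝ) (k + 1), ENNReal.ofReal (z (S u ω)) :=
        hS.mul_holdingTime_le (fun y => ENNReal.ofReal (z y)) k ω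
    _ ≤ ∫⁻ u in Ioc (0 : ℝ) n, ENNReal.ofReal (z (S u ω)) :=
        lintegral_mono_set (Ioc_subset_Ioc k.cast_nonneg (by exact_mod_cast hk))

theorem lintegral_sq_sum_indicator_le (hS : IsCTSRW d P S) (x : Fin d → ℤ)
    {B : Finset (Fin d → ℤ)} {n : ℕ} {I : Finset ℕ} (hI : I ⊆ Finset.range n) {D : ℝ≥0∞}
    (hD : ∀ y ∈ B, 1 + ∑ j ∈ Finset.range n,
      heatSemigroup d ((j : ℝ) + 1) ((B : Set (Fin d → ℤ)).indicator 1) y ≤ D) :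
    ∫⁻ ω, (∑ k ∈ I, (B : Set (Fin d → ℤ)).indicator 1 (S k ω)) ^ 2 ∂P x
      ≤ 2 * (D * ∑ k ∈ I, heatSemigroup d k ((B : Set (Fin d → ℤ)).indicator 1) x) := by
  set f : (Fin d → ℤ) → ℝ≥0∞ := (B : Set (Fin d → ℤ)).indicator 1 with hf
  have hmeas (s : ℝ) (g : (Fin d → ℤ) → ℝ≥0∞) : Measurable fun ω => g (S s ω) :=
    (measurable_of_countable g).comp (hS.measurable s)
  have hvisits (k : ℕ) : (∫⁻ ω, f (S k ω) * f (S k ω) ∂P x)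
      + ∑ j ∈ Finset.range n, ∫⁻ ω, f (S k ω) * f (S (k + (j + 1) : ℕ) ω) ∂P x
        ≤ D * heatSemigroup d k f x := by
    have hmarkov (j : ℕ) : ∫⁻ ω, f (S k ω) * f (S (k + (j + 1) : ℕ) ω) ∂P x
        = ∫⁻ ω, f (S k ω) * heatSemigroup d ((j : ℝ) + 1) f (S k ω) ∂P x := by
      rw [hS.lintegral_mul x k.cast_nonneg (by exact_mod_cast k.le_add_right (j + 1))]
      push_cast
      rw [add_sub_cancel_left]
    simp only [hmarkov]
    rw [← lintegral_finsetSum _ fun j _ => hmeas k fun y => f y * heatSemigroup d _ f y,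
      ← lintegral_add_left (hmeas k fun y => f y * f y),
      ← hS.lintegral_eq_heatSemigroup x k.cast_nonneg, ← lintegral_const_mul _ (hmeas k f)]
    refine lintegral_mono fun ω => ?_
    by_cases hω : S k ω ∈ B
    · simpa [hf, hω] using hD _ hω
    · simp [hf, hω]
  have hmeas2 (k l : ℕ) : Measurable fun ω => f (S k ω) * f (S l ω) :=
    (hmeas k f).mul (hmeas l f)
  calc ∫⁻ ω, (∑ k ∈ I, f (S k ω)) ^ 2 ∂P x
      = ∑ k ∈ I, ∑ l ∈ I, ∫⁻ ω, f (S k ω) * f (S l ω) ∂P x := by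
        simp only [sq, Finset.sum_mul_sum]
        rw [lintegral_finsetSum _ fun k _ => Finset.measurable_fun_sum _ fun l _ => hmeas2 k l]
        exact Finset.sum_congr rfl fun k _ => lintegral_finsetSum _ fun l _ => hmeas2 k l
    _ ≤ _ := sum_sum_le_two_mul_sum_add_sum hI fun k l => by simp only [mul_comm]
    _ ≤ 2 * (D * ∑ k ∈ I, heatSemigroup d k f x) := by
        rw [Finset.mul_sum I _ D]
        exact mul_le_mul_right (Finset.sum_le_sum fun k _ => hvisits k) 2

theorem sum_heatSemigroup_mul_le_measure_longStay (hS : IsCTSRW d P S) (x : Fin d → ℤ)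
    {B : Finset (Fin d → ℤ)} {n : ℕ} {I : Finset ℕ} (hI : I ⊆ Finset.range n) {D : ℝ} (hD0 : 0 < D)
    (hD : ∀ y ∈ B, 1 + ∑ j ∈ Finset.range n,
      heatSemigroup d ((j : ℝ) + 1) ((B : Set (Fin d → ℤ)).indicator 1) y ≤ ENNReal.ofReal D) :
    (∑ k ∈ I, heatSemigroup d k ((B : Set (Fin d → ℤ)).indicator 1) x)
        * ENNReal.ofReal (Real.exp (-(2 * d)) ^ 2 / (8 * D))
      ≤ P x (⋃ k ∈ I, longStay S B (Real.exp (-(2 * d)) / 2) k) := by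
  set p := Real.exp (-(2 * d))
  set f : (Fin d → ℤ) → ℝ≥0∞ := (B : Set (Fin d → ℤ)).indicator 1
  set σ := ∑ k ∈ I, heatSemigroup d k f x with hσ
  set E : ℕ → Set Ω := fun k => longStay S B (p / 2) k
  have hEm (k : ℕ) : MeasurableSet (E k) := hS.measurableSet_longStay B _ k
  have hmean : ENNReal.ofReal (p / 2) * σ ≤ ∑ k ∈ I, P x (E k) := by
    rw [hσ, Finset.mul_sum]
    refine Finset.sum_le_sum fun k _ => ?_
    rw [← hS.measure_mem_eq_heatSemigroup x k.cast_nonneg]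
    exact hS.half_exp_neg_mul_measure_mem_le_measure_longStay x B k.cast_nonneg
  have hsq : ∫⁻ ω, (∑ k ∈ I, (E k).indicator 1 ω) ^ 2 ∂P x ≤ 2 * (ENNReal.ofReal D * σ) := by
    refine (lintegral_mono fun ω => pow_le_pow_left' (Finset.sum_le_sum fun k _ => ?_) 2).trans
      (hS.lintegral_sq_sum_indicator_le x hI hD)
    exact indicator_le_indicator_of_subset (t := {ω | S k ω ∈ B}) inter_subset_left
      (fun _ => zero_le) ω
  have hσtop : σ ≠ ∞ := ENNReal.sum_ne_top.mpr fun k _ => ne_top_of_le_ne_top ENNReal.one_ne_top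
    (hS.heatSemigroup_le x k.cast_nonneg fun y => indicator_apply_le' (by simp) (by simp))
  rcases eq_or_ne σ 0 with h0 | h0
  · simp [h0]
  refine (ENNReal.mul_le_mul_iff_right (a := 2 * (ENNReal.ofReal D * σ))
    (by simp [h0, hD0]) (by finiteness)).mp ?_
  have hconst : ENNReal.ofReal D * ENNReal.ofReal (p ^ 2 / (8 * D)) * 2
      = ENNReal.ofReal (p / 2) ^ 2 := by
    rw [← ENNReal.ofReal_mul hD0.le, ← ENNReal.ofReal_ofNat 2,
      ← ENNReal.ofReal_mul (by positivity), ← ENNReal.ofReal_pow (by positivity)]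
    congr 1; field_simp; norm_num
  calc _ = (ENNReal.ofReal (p / 2) * σ) ^ 2 := by rw [mul_pow, ← hconst]; ring
    _ ≤ (∑ k ∈ I, P x (E k)) ^ 2 := by gcongr
    _ ≤ _ := sq_sum_measure_le_lintegral_sq_mul_measure_biUnion I hEm
    _ ≤ _ := by gcongr

end IsCTSRW

/-- In `[-n ^ (1 / 2 - ε), n ^ (1 / 2 - ε)]^d`, over which the walk is spread out at times of order
`n`, the number of sites higher than `n ^ s` is, up to a factor `n ^ ε`, at least what one expects
of a scenery with tail exponent `α`. -/
def HasDenseHighSites {d : ℕ} (z : (Fin d → ℤ) → ℝ) (α s ε : ℝ) : Prop :=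
  ∀ᶠ n : ℕ in atTop, (n : ℝ) ^ ((d : ℝ) / 2 - α * s - (d + 1) * ε)
    ≤ ((highSites z ((n : ℝ) ^ s) 0 ⌊(n : ℝ) ^ (1 / 2 - ε)⌋₊).card : ℝ)

section LowerBound

variable {d : ℕ} {z : (Fin d → ℤ) → ℝ} {α ρ s ε : ℝ}

theorem sum_mul_abs_sub_le {x y : Fin d → ℤ} {R : ℕ} (hy : y ∈ box x R) {h : ℝ} (hh : 0 ≤ h) :
    ∑ j, h * |((x - y) j : ℝ)| ≤ d * (h * R) := by
  have hj (j : Fin d) : |((x - y) j : ℝ)| ≤ R := by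
    rw [Pi.sub_apply, ← Int.cast_abs, abs_sub_comm]
    exact_mod_cast mem_box.mp hy j
  calc ∑ j, h * |((x - y) j : ℝ)| ≤ ∑ _j : Fin d, h * R := by gcongr with j; exact hj j
    _ = d * (h * R) := by simp

theorem le_heatKernel_of_mem_box {n t : ℝ} (hn : 2 ≤ n) (ht : n / 2 ≤ t) (htn : t ≤ n) {R : ℕ}
    (hR : d * (n ^ (-(1 / 2) + ε / 2) * R) ≤ 1) {x y : Fin d → ℤ} (hy : y ∈ box x R) :
    Real.exp (-d) / 2 / (2 * π) ^ d * n ^ (-(d / 2 : ℝ)) - 2 * Real.exp (-(2 / π ^ 2 * n ^ ε))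
      ≤ heatKernel d t x y := by
  have hn0 : 0 < n := by linarith
  have ht0 : 0 < √t := Real.sqrt_pos.mpr (by linarith)
  refine le_trans ?_ (le_heatKernel (by linarith) (by positivity) x y
    ((sum_mul_abs_sub_le hy (by positivity)).trans hR))
  have hpow : n ^ (-(d / 2 : ℝ)) = (√n)⁻¹ ^ d := by
    rw [inv_pow, Real.sqrt_eq_rpow, ← Real.rpow_natCast, ← Real.rpow_mul hn0.le,
      ← Real.rpow_neg hn0.le]
    ring_nf
  have hsq : (n ^ (-(1 / 2) + ε / 2)) ^ 2 * n = n ^ ε := by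
    rw [← Real.rpow_natCast, ← Real.rpow_mul hn0.le, ← Real.rpow_add_one hn0.ne']
    congr 1; push_cast; ring
  have hexp : 2 / π ^ 2 * n ^ ε ≤ 4 * t / π ^ 2 * (n ^ (-(1 / 2) + ε / 2)) ^ 2 := by
    calc 2 / π ^ 2 * n ^ ε = 4 * (n / 2) / π ^ 2 * (n ^ (-(1 / 2) + ε / 2)) ^ 2 := by
          rw [← hsq]; ring
      _ ≤ _ := by gcongr
  rw [hpow, neg_mul]
  gcongr

theorem eventually_rpow_le_heatKernel (d : ℕ) (hε : 0 < ε) :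
    ∀ᶠ n : ℕ in atTop, ∀ y ∈ box (0 : Fin d → ℤ) ⌊(n : ℝ) ^ (1 / 2 - ε)⌋₊, ∀ t : ℝ,
      n / 2 ≤ t → t ≤ n → (n : ℝ) ^ (-(d / 2 : ℝ) - ε) ≤ heatKernel d t 0 y := by
  set c := Real.exp (-d) / 2 / (2 * π) ^ d
  have hc : 0 < c := by positivity
  filter_upwards [eventually_ge_atTop 2, eventually_mul_rpow_le d (by linarith : -(ε / 2) < 0),
    eventually_mul_rpow_mul_exp_le (4 / c) 0 (-(d / 2 : ℝ)) hε (by positivity : 0 < 2 / π ^ 2),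
    eventually_mul_rpow_le (2 / c) (by linarith : -(d / 2 : ℝ) - ε < -(d / 2 : ℝ))]
    with n hn hbox hexp hpow y hy t ht htn
  have hn0 : (0 : ℝ) < n := by exact_mod_cast pos_of_gt hn
  refine le_trans ?_ (le_heatKernel_of_mem_box (ε := ε) (by exact_mod_cast hn) ht htn ?_ hy)
  · rw [Real.rpow_zero, mul_one, div_mul_eq_mul_div, div_le_iff₀' hc] at hexp
    rw [div_mul_eq_mul_div, div_le_iff₀' hc] at hpow
    linarith
  · calc d * ((n : ℝ) ^ (-(1 / 2) + ε / 2) * ⌊(n : ℝ) ^ (1 / 2 - ε)⌋₊)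
        ≤ d * ((n : ℝ) ^ (-(1 / 2) + ε / 2) * (n : ℝ) ^ (1 / 2 - ε)) := by
          gcongr
          exact Nat.floor_le (by positivity)
      _ = d * (n : ℝ) ^ (-(ε / 2)) := by rw [← Real.rpow_add hn0]; ring_nf
      _ ≤ 1 := by rwa [Real.rpow_zero] at hbox

theorem HasDenseHighSites.eventually_le_sum_heatSemigroup (hz : HasDenseHighSites z α s ε)
    (hε : 0 < ε) :
    ∀ᶠ n : ℕ in atTop, ENNReal.ofReal ((n : ℝ) ^ (1 - α * s - (d + 2) * ε) / 4)
      ≤ ∑ k ∈ Finset.Ico (n / 2 + 1) n, heatSemigroup d k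
        ((highSites z ((n : ℝ) ^ s) 0 ⌊(n : ℝ) ^ (1 / 2 - ε)⌋₊ : Set (Fin d → ℤ)).indicator 1)
        0 := by
  filter_upwards [hz, eventually_rpow_le_heatKernel d hε, eventually_ge_atTop 4]
    with n hcard hheat hn
  have hn0 : (0 : ℝ) < n := by exact_mod_cast pos_of_gt hn
  set B := highSites z ((n : ℝ) ^ s) 0 ⌊(n : ℝ) ^ (1 / 2 - ε)⌋₊
  have htimes : (n : ℝ) / 4 ≤ ((Finset.Ico (n / 2 + 1) n).card : ℝ) := by
    rw [Nat.card_Ico, div_le_iff₀ four_pos]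
    exact_mod_cast (show n ≤ (n - (n / 2 + 1)) * 4 by lia)
  simp only [heatSemigroup_indicator (Nat.cast_nonneg _)]
  rw [← ENNReal.ofReal_sum_of_nonneg fun k _ =>
    Finset.sum_nonneg fun y _ => heatKernel_nonneg k.cast_nonneg 0 y]
  refine ENNReal.ofReal_le_ofReal ?_
  calc (n : ℝ) ^ (1 - α * s - (d + 2) * ε) / 4
      = n / 4 * ((n : ℝ) ^ ((d : ℝ) / 2 - α * s - (d + 1) * ε) * (n : ℝ) ^ (-(d / 2 : ℝ) - ε)) := by
        rw [← Real.rpow_add hn0, div_mul_eq_mul_div, mul_comm (n : ℝ),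
          ← Real.rpow_add_one hn0.ne']
        ring_nf
    _ ≤ (Finset.Ico (n / 2 + 1) n).card * (B.card * (n : ℝ) ^ (-(d / 2 : ℝ) - ε)) := by gcongr
    _ = ∑ _k ∈ Finset.Ico (n / 2 + 1) n, ∑ _y ∈ B, (n : ℝ) ^ (-(d / 2 : ℝ) - ε) := by simp
    _ ≤ ∑ k ∈ Finset.Ico (n / 2 + 1) n, ∑ y ∈ B, heatKernel d k 0 y := by
        refine Finset.sum_le_sum fun k hk => Finset.sum_le_sum fun y hy => ?_
        obtain ⟨hnk, hkn⟩ := Finset.mem_Ico.mp hk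
        refine hheat y (mem_highSites.mp hy).1 k ?_ (by exact_mod_cast hkn.le)
        rw [div_le_iff₀ two_pos]
        exact_mod_cast (show n ≤ k * 2 by lia)

theorem HasSparseHighSites.eventually_one_add_sum_heatSemigroup_le (hd : 3 ≤ d)
    (hz : HasSparseHighSites z α s ε) (hε : 0 < ε) (hε4 : ε ≤ 1 / 4) (hαs : 1 ≤ α * s) :
    ∀ᶠ n : ℕ in atTop, ∀ L ≤ n, ∀ y ∈ highSites z ((n : ℝ) ^ s) 0 L,
      1 + ∑ j ∈ Finset.range n, heatSemigroup d ((j : ℝ) + 1)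
          ((highSites z ((n : ℝ) ^ s) 0 L : Set (Fin d → ℤ)).indicator 1) y
        ≤ ENNReal.ofReal ((n : ℝ) ^ ((d + 2) * ε)) := by
  filter_upwards [hz.eventually_sum_heatSemigroup_le hd hε hε4, eventually_ge_atTop 1,
    eventually_mul_rpow_le (1 + 3 * greenConst d)
      (by linarith : ((d : ℝ) + 1) * ε < (d + 2) * ε)] with n hgreen hn hconst L hL y hy
  have hsubset := highSites_subset_highSites z ((n : ℝ) ^ s) 0 hL
  have hn1 : (1 : ℝ) ≤ n := by exact_mod_cast hn
  have hsum : ∑ j ∈ Finset.range n, heatSemigroup d ((j : ℝ) + 1)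
      ((highSites z ((n : ℝ) ^ s) 0 L : Set (Fin d → ℤ)).indicator 1) y
        ≤ ENNReal.ofReal
          (greenConst d * (2 * (n : ℝ) ^ ε + (n : ℝ) ^ (1 - α * s + (d + 1) * ε))) :=
    (Finset.sum_le_sum fun j _ => heatSemigroup_mono (fun w => indicator_le_indicator_of_subset
      (Finset.coe_subset.mpr hsubset) (fun _ => zero_le) w) y).trans
      (hgreen y (mem_highSites.mp (hsubset hy)).1)
  have hG := greenConst_pos d
  refine (add_le_add_right hsum 1).trans ?_
  rw [← ENNReal.ofReal_one, ← ENNReal.ofReal_add zero_le_one (by positivity)]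
  refine ENNReal.ofReal_le_ofReal (le_trans ?_ hconst)
  calc 1 + greenConst d * (2 * (n : ℝ) ^ ε + (n : ℝ) ^ (1 - α * s + (d + 1) * ε))
      ≤ (n : ℝ) ^ (((d : ℝ) + 1) * ε) + greenConst d
          * (2 * (n : ℝ) ^ (((d : ℝ) + 1) * ε) + (n : ℝ) ^ (((d : ℝ) + 1) * ε)) := by
        gcongr
        · exact Real.one_le_rpow hn1 (by positivity)
        · exact le_mul_of_one_le_left hε.le (by linarith [d.cast_nonneg (α := ℝ)])
        · linarith
    _ = (1 + 3 * greenConst d) * (n : ℝ) ^ (((d : ℝ) + 1) * ε) := by ring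

theorem IsCTSRW.eventually_le_measure_le_lintegral {Ω : Type*} [MeasurableSpace Ω]
    {P : (Fin d → ℤ) → Measure Ω} {S : ℝ → Ω → (Fin d → ℤ)} (hS : IsCTSRW d P S) (hd : 3 ≤ d)
    (hρs : ρ < s) (hαs : 1 ≤ α * s) (hε : 0 < ε) (hε4 : ε ≤ 1 / 4)
    (hsparse : HasSparseHighSites z α s ε) (hdense : HasDenseHighSites z α s ε) (c : ℝ) :
    ∀ᶠ n : ℕ in atTop, ENNReal.ofReal ((n : ℝ) ^ (1 - α * s - (2 * d + 5) * ε))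
      ≤ P 0 {ω | ENNReal.ofReal (c * (n : ℝ) ^ ρ)
        ≤ ∫⁻ u in Ioc (0 : ℝ) n, ENNReal.ofReal (z (S u ω))} := by
  set p := Real.exp (-(2 * d))
  have : 0 < p := Real.exp_pos _
  filter_upwards [hsparse.eventually_one_add_sum_heatSemigroup_le hd hε hε4 hαs,
    hdense.eventually_le_sum_heatSemigroup hε, eventually_ge_atTop 1,
    eventually_mul_rpow_le (c / (p / 2)) hρs, eventually_mul_rpow_le (32 / p ^ 2)
      (by linarith : 1 - α * s - (2 * d + 5) * ε < 1 - α * s - (d + 2) * ε - (d + 2) * ε)]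
    with n hgreen hvisits hn hheight hconst
  have hn0 : (0 : ℝ) < n := by exact_mod_cast hn
  have hL : ⌊(n : ℝ) ^ (1 / 2 - ε)⌋₊ ≤ n := Nat.floor_le_of_le <|
    Real.rpow_le_self_of_one_le (by exact_mod_cast hn) (by linarith)
  calc ENNReal.ofReal ((n : ℝ) ^ (1 - α * s - (2 * d + 5) * ε))
      ≤ ENNReal.ofReal ((n : ℝ) ^ (1 - α * s - (d + 2) * ε) / 4)
          * ENNReal.ofReal (p ^ 2 / (8 * (n : ℝ) ^ ((d + 2) * ε))) := by
        rw [← ENNReal.ofReal_mul (by positivity)]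
        refine ENNReal.ofReal_le_ofReal ?_
        rw [Real.rpow_sub hn0 (1 - α * s - (d + 2) * ε), div_mul_eq_mul_div,
          div_le_iff₀' (by positivity)] at hconst
        calc _ ≤ _ := (le_div_iff₀' (by norm_num : (0 : ℝ) < 32)).mpr hconst
          _ = _ := by ring
    _ ≤ _ := mul_le_mul_left hvisits _
    _ ≤ _ := hS.sum_heatSemigroup_mul_le_measure_longStay 0
        (fun k hk => Finset.mem_range.mpr (Finset.mem_Ico.mp hk).2) (by positivity) (hgreen _ hL)
    _ ≤ _ := by
        refine measure_mono (iUnion₂_subset fun k hk ω hω => le_trans ?_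
          (hS.le_lintegral_of_mem_longStay (h := (n : ℝ) ^ s) (by positivity)
            (fun y hy => (mem_highSites.mp hy).2.le) (Finset.mem_Ico.mp hk).2 hω))
        rw [div_mul_eq_mul_div, div_le_iff₀ (by positivity)] at hheight
        exact ENNReal.ofReal_le_ofReal hheight

end LowerBound

/-! ### Chernoff bounds for the number of independent events that occur -/

section Chernoff

variable {ι Ω : Type*} [MeasurableSpace Ω] {μ : Measure Ω} {E : ι → Set Ω}

theorem integrable_exp_mul_sum_indicator [IsFiniteMeasure μ] (hE : ∀ i, MeasurableSet (E i))
    (F : Finset ι) (t : ℝ) :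
    Integrable (fun ω => Real.exp (t * ∑ i ∈ F, (E i).indicator 1 ω)) μ := by
  refine integrable_exp_mul_of_mem_Icc (a := 0) (b := F.card) ?_ (ae_of_all _ fun ω => ⟨?_, ?_⟩)
  · exact (Finset.measurable_fun_sum F fun i _ =>
      measurable_const.indicator (hE i)).aemeasurable
  · exact Finset.sum_nonneg fun i _ => indicator_nonneg (fun _ _ => zero_le_one) ω
  · exact (Finset.sum_le_card_nsmul F _ 1 fun i _ =>
      indicator_le_self' (fun _ _ => zero_le_one) ω).trans_eq (by simp)

theorem mgf_indicator_one [IsProbabilityMeasure μ] {A : Set Ω} (hA : MeasurableSet A) (t : ℝ) :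
    mgf (A.indicator 1) μ t = 1 + μ.real A * (Real.exp t - 1) := by
  have hexp : ∀ ω, Real.exp (t * A.indicator 1 ω)
      = 1 + A.indicator (fun _ => Real.exp t - 1) ω := fun ω => by
    by_cases hω : ω ∈ A <;> simp [hω]
  simp only [mgf, hexp]
  rw [integral_add (integrable_const _) ((integrable_const _).indicator hA),
    integral_indicator_const _ hA, integral_const, probReal_univ, one_smul, smul_eq_mul]

theorem mgf_sum_indicator_le (hE : iIndepSet E μ) (hmeas : ∀ i, MeasurableSet (E i))
    (F : Finset ι) (t : ℝ) :
    mgf (fun ω => ∑ i ∈ F, (E i).indicator 1 ω) μ t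
      ≤ Real.exp ((∑ i ∈ F, μ.real (E i)) * (Real.exp t - 1)) := by
  have := hE.isProbabilityMeasure
  have hindep : iIndepFun (fun i => (E i).indicator (1 : Ω → ℝ)) μ := hE.iIndepFun_indicator
  have hsum : (fun ω => ∑ i ∈ F, (E i).indicator (1 : Ω → ℝ) ω)
      = ∑ i ∈ F, (E i).indicator 1 := (Finset.sum_fn F _).symm
  rw [hsum, hindep.mgf_sum (fun i => measurable_one.indicator (hmeas i)), Finset.sum_mul,
    Real.exp_sum]
  refine Finset.prod_le_prod (fun _ _ => mgf_nonneg) fun i _ => ?_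
  rw [mgf_indicator_one (hmeas i), add_comm]
  exact Real.add_one_le_exp _

theorem measure_le_sum_indicator_le (hE : iIndepSet E μ)
    (hmeas : ∀ i, MeasurableSet (E i)) (F : Finset ι) (k : ℝ) :
    μ {ω | k ≤ ∑ i ∈ F, (E i).indicator 1 ω}
      ≤ ENNReal.ofReal (Real.exp (-k + 2 * ∑ i ∈ F, μ.real (E i))) := by
  have := hE.isProbabilityMeasure
  rw [← ofReal_measureReal]
  refine ENNReal.ofReal_le_ofReal ?_
  have hmean : 0 ≤ ∑ i ∈ F, μ.real (E i) := Finset.sum_nonneg fun _ _ => measureReal_nonneg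
  calc μ.real {ω | k ≤ ∑ i ∈ F, (E i).indicator 1 ω}
      ≤ Real.exp (-1 * k) * mgf (fun ω => ∑ i ∈ F, (E i).indicator 1 ω) μ 1 :=
        measure_ge_le_exp_mul_mgf k zero_le_one (integrable_exp_mul_sum_indicator hmeas F 1)
    _ ≤ Real.exp (-1 * k) * Real.exp ((∑ i ∈ F, μ.real (E i)) * (Real.exp 1 - 1)) := by
        gcongr
        exact mgf_sum_indicator_le hE hmeas F 1
    _ ≤ Real.exp (-k + 2 * ∑ i ∈ F, μ.real (E i)) := by
        rw [← Real.exp_add, Real.exp_le_exp]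
        nlinarith [Real.exp_one_lt_d9]

theorem measure_sum_indicator_le_le (hE : iIndepSet E μ)
    (hmeas : ∀ i, MeasurableSet (E i)) (F : Finset ι) (k : ℝ) :
    μ {ω | ∑ i ∈ F, (E i).indicator 1 ω ≤ k}
      ≤ ENNReal.ofReal (Real.exp (k - (∑ i ∈ F, μ.real (E i)) / 2)) := by
  have := hE.isProbabilityMeasure
  rw [← ofReal_measureReal]
  refine ENNReal.ofReal_le_ofReal ?_
  have hmean : 0 ≤ ∑ i ∈ F, μ.real (E i) := Finset.sum_nonneg fun _ _ => measureReal_nonneg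
  calc μ.real {ω | ∑ i ∈ F, (E i).indicator 1 ω ≤ k}
      ≤ Real.exp (- -1 * k) * mgf (fun ω => ∑ i ∈ F, (E i).indicator 1 ω) μ (-1) :=
        measure_le_le_exp_mul_mgf k (by norm_num) (integrable_exp_mul_sum_indicator hmeas F (-1))
    _ ≤ Real.exp (- -1 * k) * Real.exp ((∑ i ∈ F, μ.real (E i)) * (Real.exp (-1) - 1)) := by
        gcongr
        exact mgf_sum_indicator_le hE hmeas F (-1)
    _ ≤ Real.exp (k - (∑ i ∈ F, μ.real (E i)) / 2) := by
        rw [← Real.exp_add, Real.exp_le_exp]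
        nlinarith [Real.exp_neg_one_lt_d9]

theorem ae_eventually_notMem_of_measure_le_ofReal {A : ℕ → Set Ω} {f : ℕ → ℝ} (hf : Summable f)
    (hA : ∀ᶠ n in atTop, μ (A n) ≤ ENNReal.ofReal (f n)) :
    ∀ᵐ ω ∂μ, ∀ᶠ n in atTop, ω ∉ A n := by
  obtain ⟨N, hN⟩ := eventually_atTop.mp hA
  have hsum : ∑' n, μ (A (n + N)) ≠ ∞ :=
    ne_top_of_le_ne_top ((summable_nat_add_iff N).mpr hf).tsum_ofReal_ne_top
      (ENNReal.tsum_le_tsum fun n => hN (n + N) (Nat.le_add_left N n))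
  filter_upwards [ae_eventually_notMem hsum] with ω hω
  rw [← map_add_atTop_eq_nat N]
  exact eventually_map.mpr hω

end Chernoff

/-! ### Almost sure properties of the scenery -/

theorem eventually_mem_Icc_rpow_of_tendsto_log_div_log {f : ℕ → ℝ} {a δ : ℝ} (hf : ∀ n, 0 ≤ f n)
    (ha : a < 0) (hδ : 0 < δ)
    (h : Tendsto (fun n : ℕ => Real.log (f n) / Real.log n) atTop (nhds a)) :
    ∀ᶠ n : ℕ in atTop, f n ∈ Icc ((n : ℝ) ^ (a - δ)) ((n : ℝ) ^ (a + δ)) := by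
  filter_upwards [h.eventually (Ioo_mem_nhds (sub_lt_self a hδ) (lt_add_of_pos_right a hδ)),
    h.eventually (gt_mem_nhds ha), eventually_ge_atTop 2] with n hn hneg hn2
  have hn1 : (1 : ℝ) < n := by exact_mod_cast hn2
  have hn0 : (0 : ℝ) < n := by linarith
  have hlog : 0 < Real.log n := Real.log_pos hn1
  have hfn : 0 < f n := (hf n).lt_of_ne fun h0 => by simp [← h0] at hneg
  rw [lt_div_iff₀' hlog, div_lt_iff₀' hlog] at hn
  rw [mem_Icc, Real.rpow_def_of_pos hn0, Real.rpow_def_of_pos hn0, ← Real.le_log_iff_exp_le hfn,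
    ← Real.log_le_iff_le_exp hfn]
  exact ⟨hn.1.le, hn.2.le⟩

theorem card_highSites_eq_sum_indicator {d : ℕ} {Ω : Type*} (z : (Fin d → ℤ) → Ω → ℝ) (h : ℝ)
    (x : Fin d → ℤ) (R : ℕ) (ω : Ω) :
    ((highSites (fun y => z y ω) h x R).card : ℝ)
      = ∑ y ∈ box x R, {ω | h < z y ω}.indicator 1 ω := by
  classical
  simp only [highSites, indicator_apply, mem_ofPred_eq, Pi.one_apply, Finset.sum_boole]

namespace IsScenery

variable {d : ℕ} {α s ε δ : ℝ} {Ω : Type*} [MeasurableSpace Ω] {μ : Measure Ω}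
  {z : (Fin d → ℤ) → Ω → ℝ}

theorem eventually_measureReal_rpow_lt_mem_Icc (hz : IsScenery d α μ z) (hα : 0 < α) (hs : 0 < s)
    (hδ : 0 < δ) :
    ∀ᶠ n : ℕ in atTop, μ.real {ω | (n : ℝ) ^ s < z 0 ω}
      ∈ Icc ((n : ℝ) ^ (-(α * s) - δ)) ((n : ℝ) ^ (-(α * s) + δ)) := by
  refine eventually_mem_Icc_rpow_of_tendsto_log_div_log (fun _ => measureReal_nonneg)
    (neg_neg_of_pos (mul_pos hα hs)) hδ ?_
  have hlim := (hz.tail.comp ((tendsto_rpow_atTop hs).comp tendsto_natCast_atTop_atTop)).mul_const s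
  rw [neg_mul] at hlim
  refine hlim.congr' ?_
  filter_upwards [eventually_gt_atTop 0] with n hn
  simp only [Function.comp_apply, Real.log_rpow (Nat.cast_pos.mpr hn), Measure.real]
  rw [mul_comm s, ← div_div, div_mul_cancel₀ _ hs.ne']

theorem eventually_measureReal_rpow_lt_le (hz : IsScenery d α μ z) (hα : 0 < α) (hs : 0 ≤ s)
    (hδ : 0 < δ) :
    ∀ᶠ n : ℕ in atTop, μ.real {ω | (n : ℝ) ^ s < z 0 ω} ≤ (n : ℝ) ^ (-(α * s) + δ) := by
  rcases hs.eq_or_lt with rfl | hs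
  · have := hz.prob
    filter_upwards [eventually_ge_atTop 1] with n hn
    exact measureReal_le_one.trans
      (Real.one_le_rpow (by exact_mod_cast hn) (by simpa using hδ.le))
  · exact (hz.eventually_measureReal_rpow_lt_mem_Icc hα hs hδ).mono fun n hn => hn.2

theorem measure_lt_eq (hz : IsScenery d α μ z) (x : Fin d → ℤ) (h : ℝ) :
    μ {ω | h < z x ω} = μ {ω | h < z 0 ω} :=
  (hz.ident x).measure_mem_eq measurableSet_Ioi

theorem iIndepSet_lt (hz : IsScenery d α μ z) (h : ℝ) : iIndepSet (fun x => {ω | h < z x ω}) μ := by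
  have := hz.prob
  refine (iIndepSet_iff_meas_biInter fun x => hz.meas x measurableSet_Ioi).mpr fun F => ?_
  exact hz.indep.measure_inter_preimage_eq_mul F fun _ _ => measurableSet_Ioi

theorem sum_measureReal_lt (hz : IsScenery d α μ z) (h : ℝ) (F : Finset (Fin d → ℤ)) :
    ∑ y ∈ F, μ.real {ω | h < z y ω} = F.card * μ.real {ω | h < z 0 ω} := by
  simp only [measureReal_def, hz.measure_lt_eq _ h, Finset.sum_const, nsmul_eq_mul]

theorem measure_le_card_highSites_le (hz : IsScenery d α μ z) (h k : ℝ) (x : Fin d → ℤ) (R : ℕ) :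
    μ {ω | k ≤ ((highSites (fun y => z y ω) h x R).card : ℝ)}
      ≤ ENNReal.ofReal
        (Real.exp (-k + 2 * ((box x R).card * μ.real {ω | h < z 0 ω}))) := by
  simp only [card_highSites_eq_sum_indicator, ← hz.sum_measureReal_lt]
  exact measure_le_sum_indicator_le (hz.iIndepSet_lt h)
    (fun y => hz.meas y measurableSet_Ioi) _ k

theorem measure_card_highSites_le_le (hz : IsScenery d α μ z) (h k : ℝ) (x : Fin d → ℤ) (R : ℕ) :
    μ {ω | ((highSites (fun y => z y ω) h x R).card : ℝ) ≤ k}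
      ≤ ENNReal.ofReal
        (Real.exp (k - (box x R).card * μ.real {ω | h < z 0 ω} / 2)) := by
  simp only [card_highSites_eq_sum_indicator, ← hz.sum_measureReal_lt]
  exact measure_sum_indicator_le_le (hz.iIndepSet_lt h)
    (fun y => hz.meas y measurableSet_Ioi) _ k

theorem eventually_measure_card_highSites_le (hz : IsScenery d α μ z) (hα : 0 < α) (hs : 0 ≤ s)
    (hε : 0 < ε) :
    ∀ᶠ n : ℕ in atTop, ∀ (x : Fin d → ℤ) (R : ℕ), 1 ≤ R →
      μ {ω | (n : ℝ) ^ ε * (1 + (n : ℝ) ^ (-(α * s)) * (R : ℝ) ^ d)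
          ≤ ((highSites (fun y => z y ω) ((n : ℝ) ^ s) x R).card : ℝ)}
        ≤ ENNReal.ofReal (Real.exp (-(n : ℝ) ^ ε)) := by
  filter_upwards [hz.eventually_measureReal_rpow_lt_le hα hs (half_pos hε),
    eventually_mul_rpow_le (2 * 3 ^ d) (by linarith : -(α * s) + ε / 2 < -(α * s) + ε),
    eventually_gt_atTop 0] with n htail hpow hn x R hR
  have hn0 : (0 : ℝ) < n := by exact_mod_cast hn
  refine (hz.measure_le_card_highSites_le _ _ x R).trans
    (ENNReal.ofReal_le_ofReal (Real.exp_le_exp.mpr ?_))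
  have hcard : ((box x R).card : ℝ) ≤ 3 ^ d * (R : ℝ) ^ d := by
    rw [card_box, ← mul_pow]
    exact_mod_cast Nat.pow_le_pow_left (by lia) d
  have hmean : 2 * ((box x R).card * μ.real {ω | (n : ℝ) ^ s < z 0 ω})
      ≤ (n : ℝ) ^ ε * (n : ℝ) ^ (-(α * s)) * (R : ℝ) ^ d := by
    calc 2 * ((box x R).card * μ.real {ω | (n : ℝ) ^ s < z 0 ω})
        ≤ 2 * (3 ^ d * (R : ℝ) ^ d * (n : ℝ) ^ (-(α * s) + ε / 2)) := by gcongr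
      _ = 2 * 3 ^ d * (n : ℝ) ^ (-(α * s) + ε / 2) * (R : ℝ) ^ d := by ring
      _ ≤ (n : ℝ) ^ (-(α * s) + ε) * (R : ℝ) ^ d := by gcongr
      _ = (n : ℝ) ^ ε * (n : ℝ) ^ (-(α * s)) * (R : ℝ) ^ d := by
        rw [Real.rpow_add hn0, mul_comm ((n : ℝ) ^ ε)]
  linarith

theorem ae_hasSparseHighSites (hz : IsScenery d α μ z) (hα : 0 < α) (hs : 0 ≤ s) (hε : 0 < ε) :
    ∀ᵐ ω ∂μ, HasSparseHighSites (fun y => z y ω) α s ε := by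
  let A (n : ℕ) (q : (Fin d → ℤ) × ℕ) : Set Ω :=
    {ω | (n : ℝ) ^ ε * (1 + (n : ℝ) ^ (-(α * s)) * (q.2 : ℝ) ^ d)
      ≤ ((highSites (fun y => z y ω) ((n : ℝ) ^ s) q.1 q.2).card : ℝ)}
  have hA : ∀ᶠ n : ℕ in atTop, μ (⋃ q ∈ box (0 : Fin d → ℤ) n ×ˢ Finset.Icc 1 n, A n q)
      ≤ ENNReal.ofReal ((n : ℝ) ^ (-2 : ℝ)) := by
    filter_upwards [hz.eventually_measure_card_highSites_le hα hs hε,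
      eventually_mul_rpow_mul_exp_le (3 ^ d) (d + 1) (-2) hε one_pos, eventually_ge_atTop 1]
      with n hbox hexp hn
    have hn0 : (0 : ℝ) < n := by exact_mod_cast hn
    have hside : (2 * n + 1) ^ d ≤ (3 * n) ^ d := Nat.pow_le_pow_left (by lia) d
    calc μ (⋃ q ∈ box (0 : Fin d → ℤ) n ×ˢ Finset.Icc 1 n, A n q)
        ≤ ∑ _q ∈ box (0 : Fin d → ℤ) n ×ˢ Finset.Icc 1 n,
            ENNReal.ofReal (Real.exp (-(n : ℝ) ^ ε)) :=
          (measure_biUnion_finset_le _ _).trans <| Finset.sum_le_sum fun q hq =>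
            hbox q.1 q.2 (Finset.mem_Icc.mp (Finset.mem_product.mp hq).2).1
      _ = ENNReal.ofReal (((2 * n + 1) ^ d * n : ℕ) * Real.exp (-(n : ℝ) ^ ε)) := by
          rw [Finset.sum_const, Finset.card_product, card_box, Nat.card_Icc, nsmul_eq_mul,
            ENNReal.ofReal_mul (by positivity), ENNReal.ofReal_natCast, Nat.add_sub_cancel]
      _ ≤ ENNReal.ofReal ((n : ℝ) ^ (-2 : ℝ)) := by
          refine ENNReal.ofReal_le_ofReal (le_trans ?_ hexp)
          rw [one_mul, Real.rpow_add_one hn0.ne', Real.rpow_natCast, ← mul_assoc, ← mul_pow]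
          gcongr
          exact_mod_cast Nat.mul_le_mul_right n hside
  filter_upwards [ae_eventually_notMem_of_measure_le_ofReal
    (Real.summable_nat_rpow.mpr (by norm_num)) hA] with ω hω
  filter_upwards [hω] with n hn x hx R hR hRn
  by_contra! hdense
  exact hn (mem_biUnion (x := (x, R))
    (Finset.mem_product.mpr ⟨hx, Finset.mem_Icc.mpr ⟨hR, hRn⟩⟩) hdense.le)

theorem ae_hasDenseHighSites (hz : IsScenery d α μ z) (hα : 0 < α) (hs : 0 < s) (hε : 0 < ε)
    (hεs : (d + 1) * ε < d / 2 - α * s) :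
    ∀ᵐ ω ∂μ, HasDenseHighSites (fun y => z y ω) α s ε := by
  set κ := (d : ℝ) / 2 - α * s - d * ε - ε / 2 with hκ
  have hA : ∀ᶠ n : ℕ in atTop,
      μ {ω | ((highSites (fun y => z y ω) ((n : ℝ) ^ s) 0 ⌊(n : ℝ) ^ (1 / 2 - ε)⌋₊).card : ℝ)
          ≤ (n : ℝ) ^ ((d : ℝ) / 2 - α * s - (d + 1) * ε)}
        ≤ ENNReal.ofReal ((n : ℝ) ^ (-2 : ℝ)) := by
    filter_upwards [hz.eventually_measureReal_rpow_lt_mem_Icc hα hs (half_pos hε),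
      eventually_mul_rpow_le 4 (by linarith : (d : ℝ) / 2 - α * s - (d + 1) * ε < κ),
      eventually_mul_rpow_mul_exp_le 1 0 (-2) (by linarith : 0 < κ)
        (by norm_num : (0 : ℝ) < 1 / 4), eventually_gt_atTop 0] with n htail hpow hexp hn
    have hn0 : (0 : ℝ) < n := by exact_mod_cast hn
    set L := ⌊(n : ℝ) ^ (1 / 2 - ε)⌋₊
    have hside : (n : ℝ) ^ (1 / 2 - ε) ≤ 2 * L + 1 := by
      linarith [Nat.lt_floor_add_one ((n : ℝ) ^ (1 / 2 - ε)), (Nat.cast_nonneg L : (0 : ℝ) ≤ L)]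
    have hmean : (n : ℝ) ^ κ
        ≤ (box (0 : Fin d → ℤ) L).card * μ.real {ω | (n : ℝ) ^ s < z 0 ω} := by
      calc (n : ℝ) ^ κ = ((n : ℝ) ^ (1 / 2 - ε)) ^ d * (n : ℝ) ^ (-(α * s) - ε / 2) := by
            rw [hκ, ← Real.rpow_natCast, ← Real.rpow_mul hn0.le, ← Real.rpow_add hn0]; ring_nf
        _ ≤ (2 * L + 1) ^ d * μ.real {ω | (n : ℝ) ^ s < z 0 ω} := by
            gcongr
            exact htail.1
        _ = (box (0 : Fin d → ℤ) L).card * μ.real {ω | (n : ℝ) ^ s < z 0 ω} := by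
            rw [card_box]; norm_cast
    rw [Real.rpow_zero, one_mul, one_mul] at hexp
    refine (hz.measure_card_highSites_le_le _ _ _ _).trans (ENNReal.ofReal_le_ofReal ?_)
    exact (Real.exp_le_exp.mpr (by linarith)).trans hexp
  filter_upwards [ae_eventually_notMem_of_measure_le_ofReal
    (Real.summable_nat_rpow.mpr (by norm_num)) hA] with ω hω
  exact hω.mono fun n hn => (not_le.mp hn).le

end IsScenery

theorem hasPolynomialGrowth_of_eventually_dyadic {d : ℕ} {z : (Fin d → ℤ) → ℝ} {q : ℝ}
    (hq : 0 ≤ q) (hz0 : ∀ y, 0 ≤ z y)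
    (hz : ∀ᶠ m : ℕ in atTop, ∀ y ∈ box (0 : Fin d → ℤ) (2 ^ (m + 1)), z y ≤ ((2 ^ m : ℕ) : ℝ) ^ q) :
    HasPolynomialGrowth z q := by
  obtain ⟨M, hM⟩ := eventually_atTop.mp hz
  set T := ∑ y ∈ box (0 : Fin d → ℤ) (2 ^ M), z y
  have hT : 0 ≤ T := Finset.sum_nonneg fun y _ => hz0 y
  refine ⟨1 + T, by linarith, fun R hR y hy => ?_⟩
  have hRq : (1 : ℝ) ≤ (R : ℝ) ^ q := Real.one_le_rpow (by exact_mod_cast hR) hq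
  by_cases hyM : y ∈ box (0 : Fin d → ℤ) (2 ^ M)
  · have hyT : z y ≤ T := Finset.single_le_sum (fun y _ => hz0 y) hyM
    nlinarith
  · have hMR : 2 ^ M < R := lt_of_not_ge fun h => hyM (box_subset_box 0 h hy)
    have hlow : 2 ^ Nat.log 2 R ≤ R := Nat.pow_log_le_self 2 (by lia)
    have hhigh : R ≤ 2 ^ (Nat.log 2 R + 1) := (Nat.lt_pow_succ_log_self one_lt_two R).le
    have hMlog : M ≤ Nat.log 2 R := Nat.le_log_of_pow_le one_lt_two hMR.le
    have hzy : z y ≤ (R : ℝ) ^ q := by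
      refine (hM _ hMlog y (box_subset_box 0 hhigh hy)).trans ?_
      gcongr
    nlinarith

theorem IsScenery.eventually_measure_dyadic_le {d : ℕ} {α q δ : ℝ} {Ω : Type*} [MeasurableSpace Ω]
    {μ : Measure Ω} {z : (Fin d → ℤ) → Ω → ℝ} (hz : IsScenery d α μ z) (hα : 0 < α) (hq : 0 ≤ q)
    (hδ : 0 < δ) (hαq : α * q = d + 2 * δ) :
    ∀ᶠ m : ℕ in atTop,
      μ (⋃ y ∈ box (0 : Fin d → ℤ) (2 ^ (m + 1)), {ω | ((2 ^ m : ℕ) : ℝ) ^ q < z y ω})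
        ≤ ENNReal.ofReal (5 ^ d * ((2 : ℝ) ^ (-δ)) ^ m) := by
  have := hz.prob
  filter_upwards [(tendsto_pow_atTop_atTop_of_one_lt (one_lt_two (α := ℕ))).eventually
    (hz.eventually_measureReal_rpow_lt_le hα hq hδ)] with m htail
  refine (measure_biUnion_finset_le _ _).trans ?_
  simp only [hz.measure_lt_eq, Finset.sum_const, card_box, nsmul_eq_mul]
  rw [← ofReal_measureReal, ← ENNReal.ofReal_natCast, ← ENNReal.ofReal_mul (by positivity)]
  refine ENNReal.ofReal_le_ofReal ?_
  have hside : 2 * 2 ^ (m + 1) + 1 ≤ 5 * 2 ^ m := by have := Nat.one_le_two_pow (n := m); lia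
  have hcard : (((2 * 2 ^ (m + 1) + 1) ^ d : ℕ) : ℝ) ≤ 5 ^ d * ((2 ^ m : ℕ) : ℝ) ^ d := by
    rw [← mul_pow]
    exact_mod_cast Nat.pow_le_pow_left hside d
  calc _ ≤ 5 ^ d * ((2 ^ m : ℕ) : ℝ) ^ d * ((2 ^ m : ℕ) : ℝ) ^ (-(α * q) + δ) := by gcongr
    _ = 5 ^ d * ((2 ^ m : ℕ) : ℝ) ^ (-δ) := by
        rw [mul_assoc, ← Real.rpow_natCast ((2 ^ m : ℕ) : ℝ) d, ← Real.rpow_add (by positivity),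
          hαq]
        ring_nf
    _ = 5 ^ d * ((2 : ℝ) ^ (-δ)) ^ m := by
        rw [Nat.cast_pow, ← Real.rpow_pow_comm (by norm_num), Nat.cast_ofNat]

theorem IsScenery.ae_hasPolynomialGrowth {d : ℕ} {α ε : ℝ} {Ω : Type*} [MeasurableSpace Ω]
    {μ : Measure Ω} {z : (Fin d → ℤ) → Ω → ℝ} (hz : IsScenery d α μ z) (hα : 0 < α) (hε : 0 < ε) :
    ∀ᵐ ω ∂μ, HasPolynomialGrowth (fun y => z y ω) (d / α + ε) := by
  have hq : 0 ≤ (d : ℝ) / α + ε := by positivity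
  have hδ : 0 < α * ε / 2 := by positivity
  have hsum : Summable fun m : ℕ => 5 ^ d * ((2 : ℝ) ^ (-(α * ε / 2))) ^ m :=
    (summable_geometric_of_lt_one (by positivity)
      (Real.rpow_lt_one_of_one_lt_of_neg one_lt_two (neg_neg_of_pos hδ))).mul_left _
  filter_upwards [ae_eventually_notMem_of_measure_le_ofReal hsum
    (hz.eventually_measure_dyadic_le hα hq hδ (by field_simp))] with ω hω
  refine hasPolynomialGrowth_of_eventually_dyadic hq (fun y => hz.nonneg y ω) ?_
  filter_upwards [hω] with m hm y hy
  exact not_lt.mp fun hlt => hm (mem_biUnion hy hlt)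

/-! ### From integer to real times -/

section RealTime

variable {d : ℕ} {a ρ : ℝ} {Ωz Ωw : Type*} [MeasurableSpace Ωw] {z : (Fin d → ℤ) → Ωz → ℝ}
  {ζ : Ωz} {P : (Fin d → ℤ) → Measure Ωw} {S : ℝ → Ωw → (Fin d → ℤ)}

theorem IsCTSRW.rwrs_eq_toReal_lintegral (hS : IsCTSRW d P S) (hz : ∀ y, 0 ≤ z y ζ) (t : ℝ)
    (ω : Ωw) :
    rwrs d z S t ζ ω = (∫⁻ u in Ioc 0 t, ENNReal.ofReal (z (S u ω) ζ)).toReal := by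
  have hpath : Measurable fun u : ℝ => S u ω :=
    hS.meas.comp (measurable_id.prodMk measurable_const)
  exact integral_eq_lintegral_of_nonneg_ae (ae_of_all _ fun u => hz _)
    ((measurable_of_countable fun y => z y ζ).comp hpath).aestronglyMeasurable

theorem IsCTSRW.eventually_rpow_le_measure_rwrs (hS : IsCTSRW d P S) (hz : ∀ y, 0 ≤ z y ζ)
    (hfin : ∀ n : ℕ, 1 ≤ n → ∀ᵐ ω ∂P 0, ∫⁻ u in Ioc (0 : ℝ) n, ENNReal.ofReal (z (S u ω) ζ) ≠ ∞)
    (hρ : 0 ≤ ρ) (ha : a ≤ 0)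
    (h : ∀ᶠ n : ℕ in atTop, ENNReal.ofReal ((n : ℝ) ^ a)
      ≤ P 0 {ω | ENNReal.ofReal (2 ^ ρ * (n : ℝ) ^ ρ)
        ≤ ∫⁻ u in Ioc (0 : ℝ) n, ENNReal.ofReal (z (S u ω) ζ)}) :
    ∀ᶠ t : ℝ in atTop, t ^ a ≤ (P 0 {ω | t ^ ρ ≤ rwrs d z S t ζ ω}).toReal := by
  have := hS.prob 0
  filter_upwards [tendsto_nat_floor_atTop.eventually h, eventually_ge_atTop 1] with t hfloor ht
  set n := ⌊t⌋₊
  have hn : (1 : ℝ) ≤ n := by exact_mod_cast Nat.le_floor (by exact_mod_cast ht)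
  have hnt : (n : ℝ) ≤ t := Nat.floor_le (by linarith)
  have htn : t ≤ (n + 1 : ℕ) := by exact_mod_cast (Nat.lt_floor_add_one t).le
  have hpow : t ^ ρ ≤ 2 ^ ρ * (n : ℝ) ^ ρ := by
    rw [← Real.mul_rpow zero_le_two (by linarith)]
    push_cast at htn
    exact Real.rpow_le_rpow (by linarith) (by linarith) hρ
  refine (Real.rpow_le_rpow_of_nonpos (by linarith) hnt ha).trans
    ((ENNReal.ofReal_le_iff_le_toReal (measure_ne_top _ _)).mp
      (hfloor.trans (measure_mono_ae ?_)))
  filter_upwards [hfin (n + 1) (Nat.le_add_left 1 n)] with ω hω hlarge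
  have hfin_t := ne_top_of_le_ne_top hω (lintegral_mono_set (Ioc_subset_Ioc_right htn))
  change t ^ ρ ≤ rwrs d z S t ζ ω
  rw [hS.rwrs_eq_toReal_lintegral hz, ← ENNReal.ofReal_le_iff_le_toReal hfin_t]
  exact ((ENNReal.ofReal_le_ofReal hpow).trans hlarge).trans
    (lintegral_mono_set (Ioc_subset_Ioc_right hnt))

theorem IsCTSRW.eventually_measure_rwrs_le_rpow (hS : IsCTSRW d P S) (hz : ∀ y, 0 ≤ z y ζ)
    (hρ : 0 ≤ ρ)
    (h : ∀ᶠ n : ℕ in atTop, P 0 {ω | ENNReal.ofReal (2 ^ (-ρ) * (n : ℝ) ^ ρ)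
        ≤ ∫⁻ u in Ioc (0 : ℝ) n, ENNReal.ofReal (z (S u ω) ζ)}
      ≤ ENNReal.ofReal ((n : ℝ) ^ a)) :
    ∀ᶠ t : ℝ in atTop, (P 0 {ω | t ^ ρ ≤ rwrs d z S t ζ ω}).toReal ≤ t ^ a := by
  have := hS.prob 0
  filter_upwards [tendsto_nat_ceil_atTop.eventually h, eventually_ge_atTop 1] with t hceil ht
  rcases le_total 0 a with ha | ha
  · exact measureReal_le_one.trans (Real.one_le_rpow ht ha)
  set n := ⌈t⌉₊
  have htn : t ≤ n := Nat.le_ceil t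
  have hnt : (n : ℝ) ≤ 2 * t := by linarith [Nat.ceil_lt_add_one (by linarith : 0 ≤ t)]
  have hpow : 2 ^ (-ρ) * (n : ℝ) ^ ρ ≤ t ^ ρ := by
    rw [Real.rpow_neg zero_le_two, inv_mul_le_iff₀ (by positivity),
      ← Real.mul_rpow zero_le_two (by linarith)]
    exact Real.rpow_le_rpow (by linarith) hnt hρ
  refine le_trans (ENNReal.toReal_le_of_le_ofReal (by positivity)
    ((measure_mono fun ω hω => ?_).trans hceil)) (Real.rpow_le_rpow_of_nonpos (by linarith) htn ha)
  rw [mem_ofPred_eq, hS.rwrs_eq_toReal_lintegral hz] at hω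
  exact (ENNReal.ofReal_le_ofReal (hpow.trans hω)).trans <|
    ENNReal.ofReal_toReal_le.trans (lintegral_mono_set (Ioc_subset_Ioc_right htn))

end RealTime

theorem abs_log_div_log_sub_le_of_mem_Icc_rpow {t x a δ : ℝ} (ht : 1 < t)
    (hx : x ∈ Icc (t ^ (a - δ)) (t ^ (a + δ))) : |Real.log x / Real.log t - a| ≤ δ := by
  have ht0 : 0 < t := by linarith
  have hlog : 0 < Real.log t := Real.log_pos ht
  have hx0 : 0 < x := (Real.rpow_pos_of_pos ht0 _).trans_le hx.1
  have hlower := Real.log_le_log (by positivity) hx.1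
  have hupper := Real.log_le_log hx0 hx.2
  rw [Real.log_rpow ht0, ← le_div_iff₀ hlog] at hlower
  rw [Real.log_rpow ht0, ← div_le_iff₀ hlog] at hupper
  exact abs_sub_le_iff.mpr ⟨by linarith, by linarith⟩

theorem ae_tendsto_log_div_log {Ω : Type*} [MeasurableSpace Ω] {μ : Measure Ω} {f : Ω → ℝ → ℝ}
    {a : ℝ}
    (h : ∀ δ > 0, ∀ᵐ ω ∂μ, ∀ᶠ t : ℝ in atTop, f ω t ∈ Icc (t ^ (a - δ)) (t ^ (a + δ))) :
    ∀ᵐ ω ∂μ, Tendsto (fun t : ℝ => Real.log (f ω t) / Real.log t) atTop (nhds a) := by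
  have hseq := ae_all_iff.mpr fun k : ℕ => h (1 / ((k : ℝ) + 1)) Nat.one_div_pos_of_nat
  filter_upwards [hseq] with ω hω
  refine Metric.tendsto_nhds.mpr fun ε hε => ?_
  obtain ⟨k, hk⟩ := exists_nat_one_div_lt hε
  filter_upwards [hω k, eventually_gt_atTop 1] with t hft ht
  exact (abs_log_div_log_sub_le_of_mem_Icc_rpow ht hft).trans_lt hk

/-! ### The almost sure exponent -/

theorem exists_isFineMesh (d : ℕ) {α ρ δ : ℝ} (hα : 0 < α) (hρ : 1 < ρ) (hαρ : 1 < α * ρ)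
    (hδ : 0 < δ) : ∃ (K : ℕ) (η ε : ℝ), IsFineMesh d K α ρ η ε ∧ (α + 2) * η ≤ δ := by
  set κ : ℝ := 1 / (4 * (d + 2) * (1 + α)) with hκ
  have hκ0 : 0 < κ := by positivity
  have hκd : ((d : ℝ) + 2) * κ ≤ 1 / 4 := by
    rw [hκ, mul_one_div, div_le_div_iff₀ (by positivity) (by norm_num)]
    nlinarith [mul_nonneg (Nat.cast_nonneg d : (0 : ℝ) ≤ d) hα.le]
  have hκα : α * κ ≤ 1 / 4 := by
    rw [hκ, mul_one_div, div_le_div_iff₀ (by positivity) (by norm_num)]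
    nlinarith [mul_nonneg (Nat.cast_nonneg d : (0 : ℝ) ≤ d) hα.le]
  have hmesh : Tendsto (fun K : ℕ => ρ / ((K : ℝ) + 1)) atTop (nhds 0) := by
    simpa only [mul_one_div, mul_zero] using
      (tendsto_one_div_add_atTop_nhds_zero_nat (𝕜 := ℝ)).const_mul ρ
  have hsmall (A : ℝ) {b : ℝ} (hb : 0 < b) : ∀ᶠ K : ℕ in atTop, A * (ρ / ((K : ℝ) + 1)) < b :=
    (hmesh.const_mul A).eventually (gt_mem_nhds (by rwa [mul_zero]))
  obtain ⟨K, hρK, hαρK, hκK, hδK⟩ := ((hsmall 4 (sub_pos.mpr hρ)).and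
    ((hsmall (4 + 2 * α) (sub_pos.mpr hαρ)).and
      ((hsmall κ (by norm_num : (0 : ℝ) < 1 / 4)).and (hsmall (α + 2) hδ)))).exists
  have hη : 0 < ρ / ((K : ℝ) + 1) := by positivity
  exact ⟨K, ρ / (K + 1), κ * (ρ / (K + 1)),
    { tail_pos := hα
      mesh_pos := hη
      error_pos := mul_pos hκ0 hη
      error_le := hκK.le
      eq_mul := by field_simp
      one_add_le := by linarith
      one_add_le_mul := by linarith
      mul_error_le := by nlinarith
      tail_mul_error_le := by nlinarith }, hδK.le⟩

theorem exists_height_error (d : ℕ) {α ρ δ : ℝ} (hα : 0 < α) (hρd : α * ρ < d / 2) (hδ : 0 < δ) :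
    ∃ s ε : ℝ, ρ < s ∧ 0 < ε ∧ ε ≤ 1 / 4 ∧ (d + 1) * ε < d / 2 - α * s ∧
      α * s + (2 * d + 5) * ε ≤ α * ρ + δ := by
  set δ' := min δ ((d : ℝ) / 2 - α * ρ)
  have hδ' : 0 < δ' := lt_min hδ (sub_pos.mpr hρd)
  set ε := min (1 / 4) (δ' / (4 * (2 * d + 5)))
  have hε : 0 < ε := by positivity
  have hdε : (2 * d + 5) * ε ≤ δ' / 4 := by
    calc (2 * d + 5) * ε ≤ (2 * d + 5) * (δ' / (4 * (2 * d + 5))) := by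
          gcongr
          exact min_le_right _ _
      _ = δ' / 4 := by field_simp
  have hαs : α * (ρ + δ' / (4 * α)) = α * ρ + δ' / 4 := by field_simp
  have hδ'δ : δ' ≤ δ := min_le_left _ _
  have hδ'd : δ' ≤ d / 2 - α * ρ := min_le_right _ _
  exact ⟨ρ + δ' / (4 * α), ε, lt_add_of_pos_right _ (by positivity), hε, min_le_left _ _,
    by linarith, by linarith⟩

section AlmostSure

variable {d : ℕ} {α ρ δ : ℝ} {Ωz Ωw : Type*} [MeasurableSpace Ωz] [MeasurableSpace Ωw]
  {μ : Measure Ωz} {z : (Fin d → ℤ) → Ωz → ℝ} {P : (Fin d → ℤ) → Measure Ωw}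
  {S : ℝ → Ωw → (Fin d → ℤ)}

theorem IsScenery.ae_eventually_measure_rwrs_le (hz : IsScenery d α μ z) (hS : IsCTSRW d P S)
    (hd : 3 ≤ d) (hα : 0 < α) (hρ : 1 < ρ) (hαρ : 1 < α * ρ) (hδ : 0 < δ) :
    ∀ᵐ ζ ∂μ, ∀ᶠ t : ℝ in atTop,
      (P 0 {ω | t ^ ρ ≤ rwrs d z S t ζ ω}).toReal ≤ t ^ (-(α * ρ) + 1 + δ) := by
  obtain ⟨K, η, ε, hmesh, hηδ⟩ := exists_isFineMesh d hα hρ hαρ hδ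
  have hη := hmesh.mesh_pos
  filter_upwards [ae_all_iff.mpr fun j : ℕ =>
      hz.ae_hasSparseHighSites hα (by positivity : 0 ≤ j * η) hmesh.error_pos,
    hz.ae_hasPolynomialGrowth hα hmesh.error_pos] with ζ hsparse hgrowth
  refine hS.eventually_measure_rwrs_le_rpow (fun y => hz.nonneg y ζ) (by linarith) ?_
  filter_upwards [hS.eventually_measure_le_lintegral_le hd hmesh (fun y => hz.nonneg y ζ)
    (fun j _ => hsparse j) hgrowth (by positivity : (0 : ℝ) < 2 ^ (-ρ)),
    eventually_ge_atTop 1] with n hn hn1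
  refine hn.trans (ENNReal.ofReal_le_ofReal ?_)
  exact Real.rpow_le_rpow_of_exponent_le (by exact_mod_cast hn1) (by linarith)

theorem IsScenery.ae_eventually_le_measure_rwrs (hz : IsScenery d α μ z) (hS : IsCTSRW d P S)
    (hd : 3 ≤ d) (hα : 0 < α) (hρ : 0 ≤ ρ) (hαρ : 1 < α * ρ) (hρd : α * ρ < d / 2) (hδ : 0 < δ) :
    ∀ᵐ ζ ∂μ, ∀ᶠ t : ℝ in atTop,
      t ^ (-(α * ρ) + 1 - δ) ≤ (P 0 {ω | t ^ ρ ≤ rwrs d z S t ζ ω}).toReal := by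
  obtain ⟨s, ε, hρs, hε, hε4, hεs, hsδ⟩ := exists_height_error d hα hρd hδ
  have hs : 0 < s := hρ.trans_lt hρs
  have hαs : 1 ≤ α * s := hαρ.le.trans (by gcongr)
  filter_upwards [hz.ae_hasSparseHighSites hα hs.le hε, hz.ae_hasDenseHighSites hα hs hε hεs,
    hz.ae_hasPolynomialGrowth hα hε] with ζ hsparse hdense hgrowth
  refine hS.eventually_rpow_le_measure_rwrs (fun y => hz.nonneg y ζ)
    (fun n hn => hS.ae_lintegral_ne_top (by lia) hgrowth hn) hρ (by linarith) ?_
  filter_upwards [hS.eventually_le_measure_le_lintegral hd hρs hαs hε hε4 hsparse hdense (2 ^ ρ),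
    eventually_ge_atTop 1] with n hn hn1
  refine le_trans (ENNReal.ofReal_le_ofReal ?_) hn
  exact Real.rpow_le_rpow_of_exponent_le (by exact_mod_cast hn1) (by linarith)

end AlmostSure

/-- Theorem (upper deviation, power-law regime, unpinned):
for `d ≥ 3`, `0 < α < d/2` and `max(1/α,1) < ρ < d/(2α)`, ℙ-a.s.
`P₀(A(t) ≥ t^ρ) = t^{-αρ+1+o(1)}` as `t → ∞`. -/
theorem stmt0 (d : ℕ) (hd : 3 ≤ d) (α ρ : ℝ) (hα : 0 < α) (hαd : α < d / 2)
    (hρ₁ : max (1 / α) 1 < ρ) (hρ₂ : ρ < d / (2 * α))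
    {Ωz Ωw : Type*} [MeasurableSpace Ωz] [MeasurableSpace Ωw]
    (μ : Measure Ωz) (z : (Fin d → ℤ) → Ωz → ℝ) (hz : IsScenery d α μ z)
    (P : (Fin d → ℤ) → Measure Ωw) (S : ℝ → Ωw → (Fin d → ℤ)) (hS : IsCTSRW d P S) :
    ∀ᵐ ζ ∂ μ, Tendsto
      (fun t : ℝ => Real.log ((P 0) {ω | t ^ ρ ≤ rwrs d z S t ζ ω}).toReal / Real.log t)
      atTop (nhds (-(α * ρ) + 1)) := by
  have hρ : 1 < ρ := (le_max_right _ _).trans_lt hρ₁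
  have hαρ : 1 < α * ρ := (div_lt_iff₀' hα).mp ((le_max_left _ _).trans_lt hρ₁)
  have hρd : α * ρ < d / 2 := by
    rw [← lt_div_iff₀' hα, div_div]
    exact hρ₂
  refine ae_tendsto_log_div_log fun δ hδ => ?_
  filter_upwards [hz.ae_eventually_le_measure_rwrs hS hd hα (by linarith) hαρ hρd hδ,
    hz.ae_eventually_measure_rwrs_le hS hd hα hρ hαρ hδ] with ζ hlower hupper
  exact hlower.and hupper
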